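/- arXiv:0910.1575 — 2 statements merged into one kernel-verified Lean document; each statement's English description precedes it below -/
import Mathlib

section
/- Every finite simple graph with exactly 10 vertices and at most 20 edges is 2-apex. -/
/-- `H` is a minor of `G`: there are pairwise disjoint nonempty connected branch sets
in `G`, one for each vertex of `H`, with an edge of `G` between the branch sets of
any two vertices adjacent in `H`. -/
def SimpleGraph.IsMinor {W V : Type*} (H : SimpleGraph W) (G : SimpleGraph V) : Prop :=
  ∃ f : W → Set V,
    (∀ w, (f w).Nonempty) ∧
    (∀ w, (G.induce (f w)).Connected) ∧
    (Pairwise fun w₁ w₂ => Disjoint (f w₁) (f w₂)) ∧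
    ∀ ⦃w₁ w₂⦄, H.Adj w₁ w₂ → ∃ v₁ ∈ f w₁, ∃ v₂ ∈ f w₂, G.Adj v₁ v₂

/-- A graph is planar iff it has no `K₅` minor and no `K₃,₃` minor (Kuratowski–Wagner). -/
def SimpleGraph.IsPlanar {V : Type*} (G : SimpleGraph V) : Prop :=
  ¬ (⊤ : SimpleGraph (Fin 5)).IsMinor G ∧
  ¬ (completeBipartiteGraph (Fin 3) (Fin 3)).IsMinor G

/-- A graph is 2-apex if it becomes planar after deleting at most two vertices. -/
def SimpleGraph.TwoApex {V : Type*} (G : SimpleGraph V) : Prop :=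
  ∃ s : Set V, s.ncard ≤ 2 ∧ (G.induce sᶜ).IsPlanar


/-! ### Minors described by cuts -/

/-- `S` is nonempty and cannot be split into two parts without an edge between them. -/
def ConnOn {V : Type*} (H : SimpleGraph V) (S : Set V) : Prop :=
  S.Nonempty ∧ ∀ A : Set V, (∃ u ∈ S, u ∈ A) → (∃ u ∈ S, u ∉ A) →
    ∃ u ∈ S, u ∈ A ∧ ∃ w ∈ S, w ∉ A ∧ H.Adj u w

/-- Minors, with connectedness described by cuts. -/
def CM {W V : Type*} (K : SimpleGraph W) (H : SimpleGraph V) : Prop :=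
  ∃ f : W → Set V, (∀ w, ConnOn H (f w)) ∧ (∀ w w' x, x ∈ f w → x ∈ f w' → w = w') ∧
    ∀ w w', K.Adj w w' → ∃ v ∈ f w, ∃ x ∈ f w', H.Adj v x

/-- The complete graph on five vertices. -/
abbrev KK5 : SimpleGraph (Fin 5) := ⊤

/-- The complete bipartite graph on three and three vertices. -/
abbrev KK33 : SimpleGraph (Fin 3 ⊕ Fin 3) := completeBipartiteGraph (Fin 3) (Fin 3)

/-- Planarity in terms of `CM`. -/
def Pl {V : Type*} (H : SimpleGraph V) : Prop := ¬ CM KK5 H ∧ ¬ CM KK33 H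

theorem connOn_of_connected {V : Type*} {H : SimpleGraph V} {S : Set V}
    (h : (H.induce S).Connected) : ConnOn H S := by
  obtain ⟨⟨x, hx⟩⟩ := h.nonempty
  refine ⟨⟨x, hx⟩, ?_⟩
  rintro A ⟨u, hu, huA⟩ ⟨w, hw, hwA⟩
  obtain ⟨p⟩ := h.preconnected ⟨u, hu⟩ ⟨w, hw⟩
  obtain ⟨d, -, h1, h2⟩ := p.exists_boundary_dart {x | x.1 ∈ A} huA hwA
  exact ⟨d.fst.1, d.fst.2, h1, d.snd.1, d.snd.2, h2, d.adj⟩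

/-- Every vertex has three neighbours. -/
def Big {W : Type*} (K : SimpleGraph W) : Prop :=
  ∀ w, ∃ a b c, a ≠ b ∧ a ≠ c ∧ b ≠ c ∧ K.Adj w a ∧ K.Adj w b ∧ K.Adj w c

theorem big_KK5 : Big KK5 := by unfold Big KK5; simp only [SimpleGraph.top_adj]; decide

theorem big_KK33 : Big KK33 := by
  intro w
  rcases w with w | w
  · exact ⟨.inr 0, .inr 1, .inr 2, by simp⟩
  · exact ⟨.inl 0, .inl 1, .inl 2, by simp⟩

theorem CM.reduce {W V : Type*} {K : SimpleGraph W} {H H' : SimpleGraph V} (hK : Big K) (v : V)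
    (h1 : ∀ u w, u ≠ v → w ≠ v → H.Adj u w → H'.Adj u w)
    (h2 : ∃ x y, ∀ u, H.Adj v u → u = x ∨ u = y)
    (h3 : ∀ x y, H.Adj v x → H.Adj v y → x ≠ y → H'.Adj x y) (h : CM K H) : CM K H' := by
  obtain ⟨f, hc, hd, ha⟩ := h
  have key : ∀ w, v ∈ f w → ∃ z ∈ f w, z ≠ v ∧ H.Adj v z := by
    intro w hw
    by_cases hz : ∃ z ∈ f w, z ≠ v
    · obtain ⟨z, hz, hzv⟩ := hz
      obtain ⟨u, -, hu, z', hz', hzv', hadj⟩ := (hc w).2 {v} ⟨v, hw, rfl⟩ ⟨z, hz, hzv⟩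
      rw [Set.mem_singleton_iff] at hu
      exact ⟨z', hz', hzv', hu ▸ hadj⟩
    · exfalso
      push Not at hz
      obtain ⟨x, y, hxy⟩ := h2
      have nb : ∀ a, K.Adj w a → ∃ v' ∈ f a, v' = x ∨ v' = y := by
        intro a hwa
        obtain ⟨u, hu, u', hu', hadj⟩ := ha w a hwa
        rw [hz u hu] at hadj
        exact ⟨u', hu', hxy u' hadj⟩
      obtain ⟨a, b, c, hab, hac, hbc, wa, wb, wc⟩ := hK w
      obtain ⟨p, hp, hp'⟩ := nb a wa
      obtain ⟨q, hq, hq'⟩ := nb b wb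
      obtain ⟨r, hr, hr'⟩ := nb c wc
      have e1 : p ≠ q := fun e => hab (hd a b p hp (e ▸ hq))
      have e2 : p ≠ r := fun e => hac (hd a c p hp (e ▸ hr))
      have e3 : q ≠ r := fun e => hbc (hd b c q hq (e ▸ hr))
      rcases hp' with rfl | rfl <;> rcases hq' with rfl | rfl <;> rcases hr' with rfl | rfl <;>
        simp_all
  refine ⟨fun w => f w \ {v}, ?_, ?_, ?_⟩
  · intro w
    refine ⟨?_, ?_⟩
    · by_cases hw : v ∈ f w
      · obtain ⟨z, hz, hzv, -⟩ := key w hw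
        exact ⟨z, hz, hzv⟩
      · obtain ⟨z, hz⟩ := (hc w).1
        exact ⟨z, hz, fun e => hw (e ▸ hz)⟩
    · rintro A ⟨s, ⟨hs, hsv⟩, hsA⟩ ⟨t, ⟨ht, htv⟩, htA⟩
      obtain ⟨u, hu, ⟨huA, huv⟩, u', hu', huA', hadj⟩ :=
        (hc w).2 (A \ {v}) ⟨s, hs, hsA, hsv⟩ ⟨t, ht, fun h => htA h.1⟩
      by_cases huv' : u' = v
      · subst huv'
        obtain ⟨y, hy, hyA, y', hy', hyA', hadj2⟩ :=
          (hc w).2 (A ∪ {u'}) ⟨s, hs, Or.inl hsA⟩ ⟨t, ht, fun h => h.elim htA htv⟩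
        have hy1 : y' ∉ A := fun h => hyA' (Or.inl h)
        have hy2 : y' ≠ u' := fun h => hyA' (Or.inr h)
        by_cases hyv : y = u'
        · subst hyv
          exact ⟨u, ⟨hu, huv⟩, huA, y', ⟨hy', hy2⟩, hy1,
            h3 _ _ hadj.symm hadj2 (fun e => hy1 (e ▸ huA))⟩
        · exact ⟨y, ⟨hy, hyv⟩, hyA.elim id (fun h => absurd h hyv), y', ⟨hy', hy2⟩, hy1,
            h1 _ _ hyv hy2 hadj2⟩
      · exact ⟨u, ⟨hu, huv⟩, huA, u', ⟨hu', huv'⟩, fun h => huA' ⟨h, huv'⟩,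
          h1 _ _ huv huv' hadj⟩
  · intro w w' x hx hx'
    exact hd w w' x hx.1 hx'.1
  · intro w w' hww
    obtain ⟨u, hu, u', hu', hadj⟩ := ha w w' hww
    by_cases e : u = v
    · subst e
      obtain ⟨z, hz, hzv, hz'⟩ := key w hu
      exact ⟨z, ⟨hz, hzv⟩, u', ⟨hu', hadj.ne'⟩,
        h3 _ _ hz' hadj (fun e => hww.ne (hd w w' z hz (e ▸ hu')))⟩
    · by_cases e' : u' = v
      · subst e'
        obtain ⟨z, hz, hzv, hz'⟩ := key w' hu'
        exact ⟨u, ⟨hu, e⟩, z, ⟨hz, hzv⟩,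
          h3 _ _ hadj.symm hz' (fun e => hww.ne (hd w w' z (e ▸ hu) hz))⟩
      · exact ⟨u, ⟨hu, e⟩, u', ⟨hu', e'⟩, h1 _ _ e e' hadj⟩

theorem Pl.reduce {V : Type*} {H H' : SimpleGraph V} (v : V)
    (h1 : ∀ u w, u ≠ v → w ≠ v → H.Adj u w → H'.Adj u w)
    (h2 : ∃ x y, ∀ u, H.Adj v u → u = x ∨ u = y)
    (h3 : ∀ x y, H.Adj v x → H.Adj v y → x ≠ y → H'.Adj x y) (h : Pl H') : Pl H :=
  ⟨fun c => h.1 (c.reduce big_KK5 v h1 h2 h3), fun c => h.2 (c.reduce big_KK33 v h1 h2 h3)⟩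

theorem ConnOn.mono {V : Type*} {H H' : SimpleGraph V} {S : Set V}
    (h : ∀ u ∈ S, ∀ w ∈ S, H.Adj u w → H'.Adj u w) (c : ConnOn H S) : ConnOn H' S := by
  refine ⟨c.1, fun A hA hA' => ?_⟩
  obtain ⟨u, hu, huA, w, hw, hwA, hadj⟩ := c.2 A hA hA'
  exact ⟨u, hu, huA, w, hw, hwA, h u hu w hw hadj⟩

theorem CM.closed {W V : Type*} [Fintype W] {K : SimpleGraph W} {H H' : SimpleGraph V}
    (hK : ∀ P : W → Prop, (∀ a b, K.Adj a b → P a → P b) → (∃ a, P a) → ∀ a, P a)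
    (T : Finset V) (hT : T.card < Fintype.card W)
    (hcl : ∀ u ∈ T, ∀ w, H.Adj u w → w ∈ T)
    (h1 : ∀ u w, u ∉ T → w ∉ T → H.Adj u w → H'.Adj u w) (h : CM K H) : CM K H' := by
  classical
  obtain ⟨f, hc, hd, ha⟩ := h
  have sub : ∀ w, (∃ x ∈ f w, x ∈ T) → ∀ x ∈ f w, x ∈ T := by
    rintro w hx y hy
    by_contra hyT
    obtain ⟨u, hu, huA, z, hz, hzA, hadj⟩ := (hc w).2 (T : Set V) hx ⟨y, hy, hyT⟩
    exact hzA (hcl u huA z hadj)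
  by_cases hex : ∃ w, ∃ x ∈ f w, x ∈ T
  · exfalso
    have all := hK (fun w => ∃ x ∈ f w, x ∈ T) (by
      rintro a b hab hx
      obtain ⟨u, hu, u', hu', hadj⟩ := ha a b hab
      exact ⟨u', hu', hcl u (sub a hx u hu) u' hadj⟩) hex
    choose g hg hgT using all
    have : Fintype.card W ≤ T.card := by
      rw [← Finset.card_univ]
      exact Finset.card_le_card_of_injOn g (fun w _ => hgT w)
        (fun a _ b _ e => hd a b (g a) (hg a) (e ▸ hg b))
    omega
  · push Not at hex
    refine ⟨f, fun w => (hc w).mono fun u hu z hz => h1 u z (hex w u hu) (hex w z hz), hd, ?_⟩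
    intro w w' hww
    obtain ⟨u, hu, u', hu', hadj⟩ := ha w w' hww
    exact ⟨u, hu, u', hu', h1 _ _ (hex w u hu) (hex w' u' hu') hadj⟩

theorem Pl.closed {V : Type*} {H H' : SimpleGraph V} (T : Finset V) (hT : T.card ≤ 4)
    (hcl : ∀ u ∈ T, ∀ w, H.Adj u w → w ∈ T)
    (h1 : ∀ u w, u ∉ T → w ∉ T → H.Adj u w → H'.Adj u w) (h : Pl H') : Pl H := by
  refine ⟨fun c => h.1 (c.closed ?_ T ?_ hcl h1), fun c => h.2 (c.closed ?_ T ?_ hcl h1)⟩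
  · rintro P hP ⟨a, ha⟩ b
    by_cases e : a = b
    · exact e ▸ ha
    · exact hP a b (by simpa using e) ha
  · simp; omega
  · rintro P hP ⟨a, ha⟩
    have step1 : ∀ a b, P (.inl a) → P (.inr b) := fun a b => hP _ _ (by simp)
    have step2 : ∀ a b, P (.inr a) → P (.inl b) := fun a b => hP _ _ (by simp)
    rcases a with a | a <;> rintro (b | b)
    · exact step2 0 b (step1 a 0 ha)
    · exact step1 a b ha
    · exact step2 a b ha
    · exact step1 0 b (step2 a 0 ha)
  · simp; omega

theorem Pl.mono {V : Type*} {H H' : SimpleGraph V} (h1 : ∀ u w, H.Adj u w → H'.Adj u w)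
    (h : Pl H') : Pl H :=
  h.closed ∅ (by simp) (by simp) (fun u w _ _ => h1 u w)

open Classical in
/-- The number of ordered pairs of adjacent vertices. -/
noncomputable def dn {V : Type*} [Fintype V] (H : SimpleGraph V) : ℕ :=
  (Finset.univ.filter fun p : V × V => H.Adj p.1 p.2).card

theorem CM.dn_le {W V : Type*} [Fintype W] [Fintype V] {K : SimpleGraph W} {H : SimpleGraph V}
    (h : CM K H) : dn K ≤ dn H := by
  classical
  obtain ⟨f, hc, hd, ha⟩ := h
  have ha' : ∀ q : W × W, ∃ p : V × V, K.Adj q.1 q.2 → p.1 ∈ f q.1 ∧ p.2 ∈ f q.2 ∧ H.Adj p.1 p.2 := by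
    intro q
    by_cases hq : K.Adj q.1 q.2
    · obtain ⟨u, hu, u', hu', hadj⟩ := ha _ _ hq
      exact ⟨(u, u'), fun _ => ⟨hu, hu', hadj⟩⟩
    · obtain ⟨x, hx⟩ := (hc q.1).1
      exact ⟨(x, x), fun h => absurd h hq⟩
  choose g hg using ha'
  unfold dn
  refine Finset.card_le_card_of_injOn g ?_ ?_
  · intro q hq
    simp only [Finset.coe_filter, Finset.mem_univ, true_and, Set.mem_ofPred_eq] at hq ⊢
    exact (hg q hq).2.2
  · intro q hq q' hq' e
    simp only [Finset.coe_filter, Finset.mem_univ, true_and, Set.mem_ofPred_eq] at hq hq'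
    obtain ⟨a1, a2, -⟩ := hg q hq
    obtain ⟨b1, b2, -⟩ := hg q' hq'
    rw [← e] at b1 b2
    exact Prod.ext (hd _ _ _ a1 b1) (hd _ _ _ a2 b2)

theorem dn_KK5 : dn KK5 = 20 := by
  unfold dn
  rw [show (20 : ℕ) = (Finset.univ.filter fun p : Fin 5 × Fin 5 => p.1 ≠ p.2).card by decide]
  congr 1
  ext p
  simp [SimpleGraph.top_adj]

theorem dn_KK33 : dn KK33 = 18 := by
  unfold dn
  rw [show (18 : ℕ) = (Finset.univ.filter fun p : (Fin 3 ⊕ Fin 3) × (Fin 3 ⊕ Fin 3) =>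
    p.1.isLeft && p.2.isRight || p.1.isRight && p.2.isLeft).card by decide]
  congr 1
  ext p
  simp

theorem Pl.of_dn {V : Type*} [Fintype V] {H : SimpleGraph V} (h : dn H ≤ 17) : Pl H := by
  refine ⟨fun c => ?_, fun c => ?_⟩
  · have := c.dn_le; rw [dn_KK5] at this; omega
  · have := c.dn_le; rw [dn_KK33] at this; omega

/-- Delete the vertices in `P` (but keep them as isolated vertices). -/
def del {V : Type*} (G : SimpleGraph V) (P : Set V) : SimpleGraph V where
  Adj u w := G.Adj u w ∧ u ∉ P ∧ w ∉ P
  symm := ⟨fun _ _ h => ⟨h.1.symm, h.2.2, h.2.1⟩⟩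
  loopless := ⟨fun _ h => h.1.ne rfl⟩

theorem CM.of_minor {W V V' : Type*} {K : SimpleGraph W} {G : SimpleGraph V} {G' : SimpleGraph V'}
    (g : V → V') (hg : Function.Injective g) (ha : ∀ u w, G.Adj u w → G'.Adj (g u) (g w))
    (h : K.IsMinor G) : CM K G' := by
  obtain ⟨f, -, hc, hd, hadj⟩ := h
  refine ⟨fun w => g '' f w, fun w => ?_, ?_, ?_⟩
  · have := connOn_of_connected (hc w)
    refine ⟨this.1.image g, ?_⟩
    rintro A ⟨_, ⟨u, hu, rfl⟩, huA⟩ ⟨_, ⟨w, hw, rfl⟩, hwA⟩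
    obtain ⟨x, hx, hxA, y, hy, hyA, hxy⟩ := this.2 (g ⁻¹' A) ⟨u, hu, huA⟩ ⟨w, hw, hwA⟩
    exact ⟨g x, ⟨x, hx, rfl⟩, hxA, g y, ⟨y, hy, rfl⟩, hyA, ha x y hxy⟩
  · rintro w w' _ ⟨x, hx, rfl⟩ ⟨y, hy, e⟩
    by_contra hne
    rw [hg e] at hy
    exact Set.disjoint_left.1 (hd hne) hx hy
  · intro w w' hww
    obtain ⟨u, hu, u', hu', h'⟩ := hadj hww
    exact ⟨g u, ⟨u, hu, rfl⟩, g u', ⟨u', hu', rfl⟩, ha _ _ h'⟩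

theorem isPlanar_of_pl {V V' : Type*} {G : SimpleGraph V} {G' : SimpleGraph V'}
    (g : V → V') (hg : Function.Injective g) (ha : ∀ u w, G.Adj u w → G'.Adj (g u) (g w))
    (h : Pl G') : G.IsPlanar :=
  ⟨fun c => h.1 (CM.of_minor g hg ha c), fun c => h.2 (CM.of_minor g hg ha c)⟩

theorem twoApex_of {V V' : Type*} {G : SimpleGraph V} {G' : SimpleGraph V'} (e : V ≃ V')
    (ha : ∀ u w, G.Adj u w → G'.Adj (e u) (e w)) (a b : V') (h : Pl (del G' {a, b})) :
    G.TwoApex := by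
  refine ⟨{e.symm a, e.symm b}, (Set.ncard_insert_le _ _).trans (by simp), isPlanar_of_pl (fun x => e x.1) ?_ ?_ h⟩
  · intro x y hxy
    exact Subtype.ext (e.injective hxy)
  · rintro ⟨u, hu⟩ ⟨w, hw⟩ huw
    have : ∀ u, u ∈ ({e.symm a, e.symm b} : Set V)ᶜ → e u ∉ ({a, b} : Set V') := by
      intro u hu hu'
      apply hu
      rcases hu' with h | h
      · exact Or.inl (by rw [← h]; simp)
      · exact Or.inr (by rw [Set.mem_singleton_iff] at h; rw [← h]; simp)
    exact ⟨ha _ _ huw, this u hu, this w hw⟩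

/-- Pull `Pl` back along an injective map. -/
theorem CM.map {W V V' : Type*} {K : SimpleGraph W} {G : SimpleGraph V} {G' : SimpleGraph V'}
    (g : V → V') (hg : Function.Injective g) (ha : ∀ u w, G.Adj u w → G'.Adj (g u) (g w))
    (h : CM K G) : CM K G' := by
  obtain ⟨f, hc, hd, hadj⟩ := h
  refine ⟨fun w => g '' f w, fun w => ?_, ?_, ?_⟩
  · have := hc w
    refine ⟨this.1.image g, ?_⟩
    rintro A ⟨_, ⟨u, hu, rfl⟩, huA⟩ ⟨_, ⟨w, hw, rfl⟩, hwA⟩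
    obtain ⟨x, hx, hxA, y, hy, hyA, hxy⟩ := this.2 (g ⁻¹' A) ⟨u, hu, huA⟩ ⟨w, hw, hwA⟩
    exact ⟨g x, ⟨x, hx, rfl⟩, hxA, g y, ⟨y, hy, rfl⟩, hyA, ha x y hxy⟩
  · rintro w w' _ ⟨x, hx, rfl⟩ ⟨y, hy, e⟩
    rw [hg e] at hy
    exact hd _ _ _ hx hy
  · intro w w' hww
    obtain ⟨u, hu, u', hu', h'⟩ := hadj _ _ hww
    exact ⟨g u, ⟨u, hu, rfl⟩, g u', ⟨u', hu', rfl⟩, ha _ _ h'⟩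

theorem Pl.comap {V V' : Type*} {G : SimpleGraph V} {G' : SimpleGraph V'}
    (g : V → V') (hg : Function.Injective g) (ha : ∀ u w, G.Adj u w → G'.Adj (g u) (g w))
    (h : Pl G') : Pl G :=
  ⟨fun c => h.1 (c.map g hg ha), fun c => h.2 (c.map g hg ha)⟩

/-! ### The computation -/

/-- Table of the numbers of binary digits `1` of the numbers below `1024`, four bits for each. -/
noncomputable def popTab : Nat := 6918916311981443928565592902681834130793586977065688554571260455495671510881316912566261590568443176183179236068933516438544684036190431668140765764142684063263509230420170633010760292129818138208869190232018345978129010773914241965539774137174548957030758665345505174381056141660578066659981211165312951096892038752265503856712928643390738489326272949211114144587505749843569472557119603572199556719037304224074174401768641615550588105125472600014978452762626179567331137092452993552997529761671914247949093840337010451064101827775418427464880034631722387793621207978243163139955664585956956632317168116297016619783326705843377855224961924465176237080426488286582469349409233591847736136983466914506026774677442746006810345132331528444164352116601543099360630135258791584359148709837245552145552730574345921655553638152175221680320159535991435773272543519580920454574349466657638354914781723219153350787205817118804411207680201054601128677638272211077388798802747332122365870007903780392481843319158944212258017594361056321575079930684867630070179932452073930488555649329760627820417972264573868801354548528091960065245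11772020756940829358804825465443494801516909017007020981467251299052172145039322024649071247711858340863347335440

/-- The number of binary digits `1` of a number below `1024`. -/
noncomputable def pop (x : Nat) : Nat := Nat.land (Nat.shiftRight popTab (Nat.mul 4 x)) 15

/-- The `v`-th row of a `10 × 10` bit matrix. -/
noncomputable def rowN (m v : Nat) : Nat := Nat.land (Nat.shiftRight m (Nat.mul 10 v)) 1023

/-- The bit matrix in which exactly the `v`-th row and the `v`-th column vanish. -/
noncomputable def maskN (v : Nat) : Nat :=
  Nat.xor 1267650600228229401496703205375 (Nat.lor (Nat.shiftLeft 1023 (Nat.mul 10 v))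
    (Nat.shiftLeft 1239150146850664126585242625 v))

/-- The bit matrix with the two entries `(x, y)` and `(y, x)`. -/
noncomputable def edgeN (x y : Nat) : Nat :=
  Nat.lor (Nat.shiftLeft 1 (Nat.add (Nat.mul 10 x) y)) (Nat.shiftLeft 1 (Nat.add (Nat.mul 10 y) x))

/-- Table of the numbers below `1024` with one or two binary digits `1`. -/
noncomputable def lowTab : Nat := 1552518092300708935148979488462502555261448457734318806357940540033281935524335649182018618950623637642199512707422579065968646301223560013000877231561341331403000844777342592437640360321043915460181718055229363900059073407465494398

/-- Apply a function to a number; the kernel evaluates the number first. -/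
noncomputable def force {α : Type} (n : Nat) (k : Nat → α) : α :=
  Nat.casesOn n (k 0) (fun j => k (Nat.succ j))

/-- Suppress the vertex `v` if its degree is one or two. -/
noncomputable def stepN (m v : Nat) : Nat :=
  force (rowN m v) fun r =>
  bif Nat.beq (Nat.land (Nat.shiftRight lowTab r) 1) 0 then m else
  force (Nat.log2 r) fun x =>
  force (Nat.xor r (Nat.shiftLeft 1 x)) fun r' =>
  bif Nat.beq r' 0 then Nat.land m (maskN v) else
  force (Nat.log2 r') fun y =>
  bif Nat.beq r' (Nat.shiftLeft 1 y) then Nat.lor (Nat.land m (maskN v)) (edgeN x y) else m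

/-- Try to suppress each of the vertices `v < k`. -/
noncomputable def passN (k : Nat) : Nat → Nat :=
  Nat.rec (fun m => m) (fun k ih m => force (stepN m k) ih) k

/-- Repeat `passN`. -/
noncomputable def redN (k : Nat) : Nat → Nat :=
  Nat.rec (fun m => m)
    (fun _ ih m => force (passN 10 m) fun mm => bif Nat.beq mm m then m else ih mm) k

/-- Twice the number of edges. -/
noncomputable def totN (m k : Nat) : Nat :=
  Nat.rec 0 (fun k ih => Nat.add (pop (rowN m k)) ih) k

/-- The number of vertices that are not isolated. -/
noncomputable def supN (m k : Nat) : Nat :=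
  Nat.rec 0 (fun k ih => bif Nat.beq (rowN m k) 0 then ih else Nat.succ ih) k

/-- Check a property for all numbers below `k`. -/
noncomputable def allN (f : Nat → Bool) (k : Nat) : Bool :=
  Nat.rec true (fun k ih => bif f k then ih else false) k

/-- There are no four pairwise adjacent vertices. -/
noncomputable def noK4 (m : Nat) : Bool :=
  allN (fun a => allN (fun b => !(Nat.testBit (rowN m a) b) ||
    allN (fun c => !(Nat.testBit (Nat.land (rowN m a) (rowN m b)) c) ||
      Nat.beq (Nat.land (Nat.land (rowN m a) (rowN m b)) (rowN m c)) 0) b) a) 10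

/-- The vertex `a` has no three common neighbours with two other vertices. -/
noncomputable def noK33 (m a : Nat) : Bool :=
  allN (fun p => Nat.beq p a || Nat.ble (pop (Nat.land (rowN m a) (rowN m p))) 2 ||
    allN (fun q => Nat.beq q a || 
      Nat.ble (pop (Nat.land (Nat.land (rowN m a) (rowN m p)) (rowN m q))) 2) p) 10

/-- Sufficient condition for planarity of a reduced graph. -/
noncomputable def termN (m : Nat) : Bool :=
  Nat.ble (supN m 10) 6 &&
    (force (totN m 10) fun t =>
     (Nat.ble t 17 || (force (Nat.div (Nat.log2 m) 10) fun a => Nat.ble a 9 && noK33 m a)) && (Nat.ble t 19 || noK4 m))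

/-- Clear the vertices of `s` below `k`. -/
noncomputable def clearN (s : Nat) : Nat → Nat → Nat
  | 0, m => m
  | k + 1, m => clearN s k (bif Nat.testBit s k then Nat.land m (maskN k) else m)

/-- Sufficient condition for planarity, allowing to discard a component with four vertices. -/
noncomputable def planN (m : Nat) : Bool :=
  force (redN 4 m) fun mm =>
  termN mm || (Nat.beq (supN mm 10) 8 &&
    (let a := Nat.div (Nat.log2 mm) 10
     let s := Nat.lor (rowN mm a) (Nat.shiftLeft 1 a)
     Nat.ble a 9 && Nat.ble (pop s) 4 && allN (fun v => !(Nat.testBit s v) || Nat.beq (Nat.lor (rowN mm v) s) s) 10 &&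
      termN (clearN s 10 mm)))

/-- One vertex can be deleted. -/
noncomputable def leaf1 (m : Nat) : Bool :=
  !(allN (fun a => Nat.beq (rowN m (Nat.sub 9 a)) 0 || !(force (Nat.land m (maskN (Nat.sub 9 a))) planN)) 10)

/-- Two vertices can be deleted. -/
noncomputable def leaf2 (m : Nat) : Bool :=
  !(allN (fun a => Nat.beq (rowN m (Nat.sub 9 a)) 0 || allN (fun b => !(force (Nat.land (Nat.land m (maskN (Nat.sub 9 a)))
    (maskN (Nat.sub 9 b))) planN)) a) 10)

/-- A class of `n` vertices not yet labelled, with `r` neighbours among those vertices, of degree `d`,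
with the labelled neighbours given by `s` (and, spread out, by `t`). -/
structure Cls where
  n : Nat
  r : Nat
  d : Nat
  s : Nat
  t : Nat

/-- Select a class, preferably a small one. -/
noncomputable def pick (cs : List Cls) : Option (Cls × List Cls) :=
  List.rec none (fun c cs ih => Option.rec (some (c, []))
    (fun q => Prod.rec (fun c' cs' => bif Nat.ble (Nat.add (Nat.mul 2 c.n) c'.r) (Nat.add (Nat.mul 2 c'.n) c.r) then some (c, cs)
      else some (c', c :: cs')) q) ih) cs

/-- Check a property for all numbers up to `k`. -/
noncomputable def upTo (f : Nat → Bool) (k : Nat) : Bool :=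
  Nat.rec (f 0) (fun k ih => bif f (Nat.succ k) then ih else false) k

/-- Add a class unless it is empty. -/
noncomputable def push (n r d s t : Nat) (acc : List Cls) : List Cls :=
  bif Nat.beq n 0 then acc else ⟨n, r, d, s, t⟩ :: acc

/-- Vertices of degree `3` and of degree `dm` may not be adjacent. -/
noncomputable def forb (dm d dd : Nat) : Bool :=
  (Nat.beq d 3 && Nat.beq dd dm) || (Nat.beq d dm && Nat.beq dd 3)

/-- The number of vertices in the given classes that may be adjacent to a vertex of degree `d`. -/
noncomputable def capN (dm d : Nat) (cs : List Cls) : Nat :=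
  List.rec 0 (fun c _ ih => bif Nat.beq c.r 0 || forb dm d c.d then ih else Nat.add c.n ih) cs

/-- Go through all distributions of `r` neighbours of the vertex labelled `i` (of degree `d`) among
the classes. -/
noncomputable def branch (dm d i : Nat) (go : List Cls → Bool) (cs : List Cls) : Nat → List Cls → Bool :=
  List.rec (fun r acc => bif Nat.beq r 0 then go acc else true)
    (fun c cs ih r acc =>
      force (Nat.sub r (capN dm d cs)) fun lo =>
      upTo (fun k => bif Nat.ble lo k then
          ih (Nat.sub r k)
            (push k (Nat.pred c.r) c.d (Nat.lor c.s (Nat.shiftLeft 1 i))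
                (Nat.lor c.t (Nat.shiftLeft 1 (Nat.mul 10 i)))
              (push (Nat.sub c.n k) c.r c.d c.s c.t acc))
          else true)
        (bif Nat.beq c.r 0 || forb dm d c.d then 0 else bif Nat.ble c.n r then c.n else r)) cs

/-- Exhaustive search. -/
noncomputable def search (leaf : Nat → Bool) (dm f : Nat) : Nat → Nat → List Cls → Bool :=
  Nat.rec (fun _ m cs => cs.isEmpty && leaf m)
    (fun _ ih i m cs => Option.rec (force m leaf) (fun q => Prod.rec (fun c cs' =>
      branch dm c.d i (ih (Nat.succ i) (Nat.lor m (Nat.lor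
          (Nat.shiftLeft c.s (Nat.mul 10 i)) (Nat.shiftLeft c.t i))))
        (push (Nat.pred c.n) c.r c.d c.s c.t cs') c.r []) q) (pick cs)) f

/-- The search for given numbers of vertices of degrees `0`, `3`, `4`, `5`. -/
noncomputable def run (leaf : Nat → Bool) (dm n0 n3 n4 n5 : Nat) : Bool :=
  search leaf dm 10 0 0 (push n0 0 0 0 0 (push n3 3 3 0 0 (push n4 4 4 0 0 (push n5 5 5 0 0 []))))

/-! ### Soundness of the planarity test -/

theorem force_eq {α : Type} (n : Nat) (k : Nat → α) : force n k = k n := by cases n <;> rfl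

theorem allN_iff (f : Nat → Bool) (k : Nat) : allN f k = true ↔ ∀ i < k, f i = true := by
  induction k with
  | zero => simp [allN]
  | succ k ih =>
    have : allN f (k + 1) = bif f k then allN f k else false := rfl
    rw [this]
    cases h : f k
    · simp only [cond_false, Bool.false_eq_true, false_iff]
      intro h'
      simp [h' k (by omega)] at h
    · simp only [cond_true, ih]
      refine ⟨fun h' i hi => ?_, fun h' i hi => h' i (by omega)⟩
      rcases Nat.lt_succ_iff_lt_or_eq.1 hi with h1 | rfl
      · exact h' i h1
      · exact h

theorem row_test (m v w : Nat) (hw : w < 10) : (rowN m v).testBit w = m.testBit (10 * v + w) := by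
  have : rowN m v = (m >>> (10 * v)) &&& (2 ^ 10 - 1) := rfl
  rw [this, Nat.testBit_and, Nat.testBit_shiftRight, Nat.testBit_two_pow_sub_one]
  simp [hw]

theorem row_lt (m v : Nat) : rowN m v < 1024 := by
  have : rowN m v = (m >>> (10 * v)) &&& (2 ^ 10 - 1) := rfl
  rw [this, Nat.and_two_pow_sub_one_eq_mod]
  exact Nat.mod_lt _ (by norm_num)

theorem mask_test : ∀ v < 10, ∀ u < 10, ∀ w < 10, u ≠ v → w ≠ v →
    (maskN v).testBit (10 * u + w) = true := by
  decide +kernel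

theorem edge_test : ∀ x < 10, ∀ y < 10, (edgeN x y).testBit (10 * x + y) = true ∧
    (edgeN x y).testBit (10 * y + x) = true := by
  decide +kernel

theorem pop_eq_aux : ∀ r < 1024, pop r = (r.testBit 0).toNat + ((r.testBit 1).toNat +
    ((r.testBit 2).toNat + ((r.testBit 3).toNat + ((r.testBit 4).toNat + ((r.testBit 5).toNat +
    ((r.testBit 6).toNat + ((r.testBit 7).toNat + ((r.testBit 8).toNat +
      (r.testBit 9).toNat)))))))) := by
  decide +kernel

theorem pop_eq (r : Nat) (h : r < 1024) :
    pop r = (Finset.univ.filter fun w : Fin 10 => r.testBit w = true).card := by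
  rw [pop_eq_aux r h, Finset.card_filter, Fin.sum_univ_def]
  simp only [List.finRange_succ, List.finRange_zero, List.map_cons, List.map_nil, List.sum_cons,
    List.sum_nil]
  simp only [Bool.toNat, Bool.cond_eq_ite]
  rfl

theorem pop3 (r : Nat) (h : r < 1024) (x y z : Fin 10) (hxy : x ≠ y) (hxz : x ≠ z) (hyz : y ≠ z)
    (hx : r.testBit x = true) (hy : r.testBit y = true) (hz : r.testBit z = true) : 3 ≤ pop r := by
  rw [pop_eq r h]
  have : ({x, y, z} : Finset (Fin 10)).card = 3 := by
    rw [Finset.card_eq_three]; exact ⟨x, y, z, hxy, hxz, hyz, rfl⟩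
  rw [← this]
  apply Finset.card_le_card
  intro t ht
  simp only [Finset.mem_insert, Finset.mem_singleton] at ht
  rcases ht with rfl | rfl | rfl <;> simp [*]

/-- The bit matrix `m` contains all edges of `H`. -/
def Over (m : Nat) (H : SimpleGraph (Fin 10)) : Prop :=
  ∀ u w : Fin 10, H.Adj u w → m.testBit (10 * u.1 + w.1) = true

/-- All graphs with edges in `m` are planar. -/
def Good (m : Nat) : Prop := ∀ H : SimpleGraph (Fin 10), Over m H → Pl H

theorem over_del {m : Nat} {H : SimpleGraph (Fin 10)} (h : Over m H) (v : Fin 10) :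
    Over (Nat.land m (maskN v)) (del H {v}) := by
  rintro u w ⟨h1, h2, h3⟩
  have : Nat.land m (maskN v) = m &&& maskN v := rfl
  rw [this, Nat.testBit_and, h u w h1,
    mask_test v v.2 u u.2 w w.2 (fun e => h2 (Fin.ext e)) (fun e => h3 (Fin.ext e))]
  rfl

theorem lor_test (a b i : Nat) : (Nat.lor a b).testBit i = (a.testBit i || b.testBit i) :=
  Nat.testBit_or a b i

theorem land_test (a b i : Nat) : (Nat.land a b).testBit i = (a.testBit i && b.testBit i) :=
  Nat.testBit_and a b i

theorem one_shift_test (x i : Nat) : (Nat.shiftLeft 1 x).testBit i = decide (x = i) := by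
  have : Nat.shiftLeft 1 x = 2 ^ x := Nat.one_shiftLeft x
  rw [this, Nat.testBit_two_pow]

theorem log2_lt (r : Nat) (h : r < 1024) : Nat.log2 r < 10 := by
  by_cases h0 : r = 0
  · subst h0; decide
  · exact (Nat.log2_lt h0).2 h

theorem step_good (m v : Nat) (hv : v < 10) (h : Good (stepN m v)) : Good m := by
  unfold stepN at h
  simp only [force_eq] at h
  revert h
  generalize hr : rowN m v = r
  generalize hx : Nat.log2 r = x
  generalize hr' : Nat.xor r (Nat.shiftLeft 1 x) = r'
  generalize hy : Nat.log2 r' = y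
  intro h
  have hrlt : r < 1024 := hr ▸ row_lt m v
  have hxlt : x < 10 := hx ▸ log2_lt r hrlt
  have hrt : ∀ i, r.testBit i = Bool.xor (r'.testBit i) (decide (x = i)) := by
    intro i
    have e : r' = r ^^^ Nat.shiftLeft 1 x := hr'.symm
    rw [e, Nat.testBit_xor, one_shift_test]
    simp
  have hrow : ∀ H : SimpleGraph (Fin 10), Over m H → ∀ u, H.Adj ⟨v, hv⟩ u → r.testBit u.1 = true := by
    intro H hH u hu
    rw [← hr, row_test m v u u.2]
    exact hH _ _ hu
  cases h1 : Nat.beq (Nat.land (Nat.shiftRight lowTab r) 1) 0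
  · rw [h1, cond_false] at h
    cases h2 : Nat.beq r' 0
    · rw [h2, cond_false] at h
      cases h3 : Nat.beq r' (Nat.shiftLeft 1 y)
      · rw [h3, cond_false] at h
        exact h
      · rw [h3, cond_true] at h
        have h3' := Nat.eq_of_beq_eq_true h3
        have hylt : y < 10 := by
          have e : r' = r ^^^ Nat.shiftLeft 1 x := hr'.symm
          have : r' < 2 ^ 10 := by
            rw [e]
            apply Nat.xor_lt_two_pow hrlt
            have : Nat.shiftLeft 1 x = 2 ^ x := Nat.one_shiftLeft x
            rw [this]
            exact Nat.pow_lt_pow_right (by norm_num) hxlt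
          exact hy ▸ log2_lt r' this
        intro H hH
        have nb : ∀ u, H.Adj ⟨v, hv⟩ u → u = ⟨x, hxlt⟩ ∨ u = ⟨y, hylt⟩ := by
          intro u hu
          have := hrow H hH u hu
          rw [hrt, h3', one_shift_test] at this
          by_cases e : x = u.1
          · left; exact Fin.ext e.symm
          · right
            simp [e] at this
            exact Fin.ext this.symm
        refine Pl.reduce (H' := del H {⟨v, hv⟩} ⊔ SimpleGraph.edge ⟨x, hxlt⟩ ⟨y, hylt⟩) ⟨v, hv⟩
          ?_ ⟨_, _, nb⟩ ?_ (h _ ?_)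
        · intro u w hu hw huw
          exact Or.inl ⟨huw, hu, hw⟩
        · intro p q hp hq hpq
          right
          rw [SimpleGraph.edge_adj]
          refine ⟨?_, hpq⟩
          rcases nb p hp with rfl | rfl <;> rcases nb q hq with rfl | rfl <;> simp_all
        · intro u w huw
          rw [lor_test]
          rcases huw with huw | huw
          · rw [over_del hH ⟨v, hv⟩ u w huw]; rfl
          · rw [SimpleGraph.edge_adj] at huw
            have := edge_test x hxlt y hylt
            rcases huw.1 with ⟨rfl, rfl⟩ | ⟨rfl, rfl⟩ <;> simp [this]
    · rw [h2, cond_true] at h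
      have h2' := Nat.eq_of_beq_eq_true h2
      intro H hH
      have nb : ∀ u, H.Adj ⟨v, hv⟩ u → u = ⟨x, hxlt⟩ := by
        intro u hu
        have := hrow H hH u hu
        rw [hrt, h2'] at this
        simp at this
        exact Fin.ext this.symm
      refine Pl.reduce (H' := del H {⟨v, hv⟩}) ⟨v, hv⟩ ?_ ⟨_, ⟨x, hxlt⟩, fun u hu => Or.inl (nb u hu)⟩ ?_
        (h _ (over_del hH _))
      · intro u w hu hw huw
        exact ⟨huw, hu, hw⟩
      · intro p q hp hq hpq
        exact absurd ((nb p hp).trans (nb q hq).symm) hpq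
  · rw [h1, cond_true] at h
    exact h

theorem pass_good (k : Nat) (hk : k ≤ 10) : ∀ m, Good (passN k m) → Good m := by
  induction k with
  | zero => exact fun m h => h
  | succ k ih =>
    intro m h
    have e : passN (k + 1) m = force (stepN m k) (passN k) := rfl
    rw [e, force_eq] at h
    exact step_good m k (by omega) (ih (by omega) _ h)

theorem red_good (k : Nat) : ∀ m, Good (redN k m) → Good m := by
  induction k with
  | zero => exact fun m h => h
  | succ k ih =>
    intro m h
    have e : redN (k + 1) m = force (passN 10 m) fun m' => bif Nat.beq m' m then m else redN k m' :=
      rfl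
    rw [e, force_eq] at h
    cases hb : Nat.beq (passN 10 m) m
    · rw [hb, cond_false] at h
      exact pass_good 10 le_rfl m (ih _ h)
    · rw [hb, cond_true] at h
      exact h

theorem tot_eq (m k : Nat) : totN m k = ∑ i ∈ Finset.range k, pop (rowN m i) := by
  induction k with
  | zero => rfl
  | succ k ih =>
    have e : totN m (k + 1) = pop (rowN m k) + totN m k := rfl
    rw [e, Finset.sum_range_succ, ih, add_comm]

theorem dn_eq {V : Type*} [Fintype V] (H : SimpleGraph V) [DecidableRel H.Adj] :
    dn H = ∑ u, (Finset.univ.filter fun w => H.Adj u w).card := by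
  classical
  unfold dn
  rw [Finset.card_filter, Fintype.sum_prod_type]
  refine Finset.sum_congr rfl fun u _ => ?_
  rw [Finset.card_filter]
  refine Finset.sum_congr rfl fun w _ => ?_
  congr

theorem dn_le_tot {m : Nat} {H : SimpleGraph (Fin 10)} (h : Over m H) : dn H ≤ totN m 10 := by
  classical
  rw [dn_eq, tot_eq, ← Fin.sum_univ_eq_sum_range]
  refine Finset.sum_le_sum fun u _ => ?_
  rw [pop_eq _ (row_lt _ _)]
  apply Finset.card_le_card
  intro w hw
  simp only [Finset.mem_filter, Finset.mem_univ, true_and] at hw ⊢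
  rw [row_test _ _ _ w.2]
  exact h u w hw

theorem sup_eq (m k : Nat) : supN m k = ((Finset.range k).filter fun i => rowN m i ≠ 0).card := by
  induction k with
  | zero => rfl
  | succ k ih =>
    have e : supN m (k + 1) = bif Nat.beq (rowN m k) 0 then supN m k else supN m k + 1 := rfl
    rw [e, Finset.range_add_one, Finset.filter_insert, ih]
    cases hb : Nat.beq (rowN m k) 0
    · have := Nat.ne_of_beq_eq_false hb
      rw [if_pos this, Finset.card_insert_of_notMem (by simp)]
      rfl
    · have := Nat.eq_of_beq_eq_true hb
      rw [if_neg (by simpa using this)]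
      rfl

/-- The vertices that are not isolated. -/
noncomputable def suppF (m : Nat) : Finset (Fin 10) := Finset.univ.filter fun u => rowN m u ≠ 0

theorem suppF_card (m : Nat) : (suppF m).card = supN m 10 := by
  rw [sup_eq]
  refine Finset.card_bij (fun a _ => a.1) ?_ ?_ ?_
  · intro a ha
    simpa [suppF] using ha
  · intro a _ b _ e
    exact Fin.ext e
  · intro b hb
    simp only [Finset.mem_filter, Finset.mem_range] at hb
    exact ⟨⟨b, hb.1⟩, by simpa [suppF] using hb.2, rfl⟩

theorem mem_suppF {m : Nat} {u w : Nat} (hu : u < 10) (hw : w < 10)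
    (h : m.testBit (10 * u + w) = true) : ⟨u, hu⟩ ∈ suppF m := by
  simp only [suppF, Finset.mem_filter, Finset.mem_univ, true_and]
  intro e
  rw [← row_test m u w hw, e] at h
  simp at h

theorem noK4_spec {m : Nat} (h : noK4 m = true) {H : SimpleGraph (Fin 10)} (hH : Over m H)
    (a b c d : Fin 10) (h1 : H.Adj a b) (h2 : H.Adj a c) (h3 : H.Adj a d) (h4 : H.Adj b c)
    (h5 : H.Adj b d) (h6 : H.Adj c d) : False := by
  have key : ∀ a b c : Fin 10, c < b → b < a → H.Adj a b → H.Adj a c → H.Adj a d → H.Adj b c →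
      H.Adj b d → H.Adj c d → False := by
    intro a b c hcb hba h1 h2 h3 h4 h5 h6
    unfold noK4 at h
    have ha := (allN_iff _ _).1 ((allN_iff _ _).1 h a a.2) b hba
    rw [row_test _ _ _ b.2, hH _ _ h1, Bool.not_true, Bool.false_or] at ha
    have hc := (allN_iff _ _).1 ha c hcb
    rw [land_test, row_test _ _ _ c.2, row_test _ _ _ c.2, hH _ _ h2, hH _ _ h4, Bool.and_true,
      Bool.not_true, Bool.false_or] at hc
    have hz := Nat.eq_of_beq_eq_true hc
    have := congrArg (fun x => Nat.testBit x d) hz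
    simp only [land_test] at this
    rw [row_test _ _ _ d.2, row_test _ _ _ d.2, row_test _ _ _ d.2, hH _ _ h3, hH _ _ h5,
      hH _ _ h6] at this
    simp at this
  have n1 := h1.ne
  have n2 := h2.ne
  have n4 := h4.ne
  rcases lt_or_gt_of_ne n1 with l1 | l1 <;> rcases lt_or_gt_of_ne n2 with l2 | l2 <;>
    rcases lt_or_gt_of_ne n4 with l4 | l4
  · exact key c b a l1 l4 h4.symm h2.symm h6 h1.symm h5 h3
  · exact key b c a l2 l4 h4 h1.symm h5 h2.symm h6 h3
  · omega
  · exact key b a c l2 l1 h1.symm h4 h5 h2 h3 h6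
  · exact key c a b l1 l2 h2.symm h4.symm h6 h1 h3 h5
  · omega
  · exact key a c b l4 l2 h2 h1 h3 h4.symm h6 h5
  · exact key a b c l4 l1 h1 h2 h3 h4 h5 h6

theorem noK33_spec {m a : Nat} (h : noK33 m a = true) {H : SimpleGraph (Fin 10)} (hH : Over m H)
    (a' p q x y z : Fin 10) (ha : a'.1 = a) (hp : p ≠ a') (hq : q ≠ a') (hpq : p ≠ q)
    (hxy : x ≠ y) (hxz : x ≠ z) (hyz : y ≠ z)
    (hadj : ∀ u, u = a' ∨ u = p ∨ u = q → ∀ v, v = x ∨ v = y ∨ v = z → H.Adj u v) : False := by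
  have key : ∀ p q : Fin 10, q < p → p ≠ a' → q ≠ a' →
      (∀ u, u = a' ∨ u = p ∨ u = q → ∀ v, v = x ∨ v = y ∨ v = z → H.Adj u v) → False := by
    intro p q hqp hp hq hadj
    have hb : ∀ u : Fin 10, u = a' ∨ u = p ∨ u = q → ∀ v : Fin 10, v = x ∨ v = y ∨ v = z →
        (rowN m u).testBit v = true := by
      intro u hu v hv
      rw [row_test _ _ _ v.2]
      exact hH _ _ (hadj u hu v hv)
    have lt1 : Nat.land (rowN m a') (rowN m p) < 1024 :=
      Nat.and_lt_two_pow (n := 10) _ (row_lt m p)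
    have lt2 : Nat.land (Nat.land (rowN m a') (rowN m p)) (rowN m q) < 1024 :=
      Nat.and_lt_two_pow (n := 10) _ (row_lt m q)
    have c1 : 3 ≤ pop (Nat.land (rowN m a') (rowN m p)) := by
      apply pop3 _ lt1 x y z hxy hxz hyz <;> rw [land_test, hb a' (by simp) _ (by simp),
        hb p (by simp) _ (by simp)] <;> rfl
    have c2 : 3 ≤ pop (Nat.land (Nat.land (rowN m a') (rowN m p)) (rowN m q)) := by
      apply pop3 _ lt2 x y z hxy hxz hyz <;> rw [land_test, land_test, hb a' (by simp) _ (by simp),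
        hb p (by simp) _ (by simp), hb q (by simp) _ (by simp)] <;> rfl
    unfold noK33 at h
    have h1 := (allN_iff _ _).1 h p p.2
    rw [Bool.or_eq_true, Bool.or_eq_true] at h1
    rcases h1 with (h1 | h1) | h1
    · exact hp (Fin.ext (ha ▸ Nat.eq_of_beq_eq_true h1))
    · rw [← ha] at h1
      have := Nat.le_of_ble_eq_true h1
      omega
    · have h2 := (allN_iff _ _).1 h1 q hqp
      rw [Bool.or_eq_true] at h2
      rcases h2 with h2 | h2
      · exact hq (Fin.ext (ha ▸ Nat.eq_of_beq_eq_true h2))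
      · rw [← ha] at h2
        have := Nat.le_of_ble_eq_true h2
        omega
  rcases lt_or_gt_of_ne hpq with l | l
  · exact key q p l hq hp (fun u hu => hadj u (by tauto))
  · exact key p q l hp hq hadj

theorem four_of_five : ∀ w0 : Fin 5, ∃ a b c d : Fin 5, a ≠ w0 ∧ b ≠ w0 ∧ c ≠ w0 ∧ d ≠ w0 ∧ a ≠ b ∧
    a ≠ c ∧ a ≠ d ∧ b ≠ c ∧ b ≠ d ∧ c ≠ d := by
  decide

theorem term_good {m : Nat} (h : termN m = true) : Good m := by
  classical
  intro H hH
  unfold termN at h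
  simp only [force_eq, Bool.and_eq_true, Bool.or_eq_true] at h
  obtain ⟨hs, h33, h4⟩ := h
  have hs := Nat.le_of_ble_eq_true hs
  rw [← suppF_card] at hs
  have hdn := dn_le_tot hH
  have mem : ∀ u w, H.Adj u w → u ∈ suppF m := fun u w huw => mem_suppF u.2 w.2 (hH u w huw)
  refine ⟨?_, ?_⟩
  · intro c
    have hc := c.dn_le
    rw [dn_KK5] at hc
    have h4 : noK4 m = true := by
      rcases h4 with h4 | h4
      · have := Nat.le_of_ble_eq_true h4
        omega
      · exact h4
    obtain ⟨f, -, hd, ha⟩ := c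
    have hg : ∀ w, ∃ x ∈ f w, x ∈ suppF m := by
      intro w
      obtain ⟨a, -, -, -, -, -, hw, -⟩ := big_KK5 w
      obtain ⟨u, hu, u', hu', hadj⟩ := ha _ _ hw
      exact ⟨u, hu, mem _ _ hadj⟩
    choose g hg hgS using hg
    have ginj : Function.Injective g := fun a b e => hd a b (g a) (hg a) (e ▸ hg b)
    have hcard : (suppF m \ Finset.univ.image g).card ≤ 1 := by
      rw [Finset.card_sdiff_of_subset (by
        intro x hx
        obtain ⟨w, -, rfl⟩ := Finset.mem_image.1 hx
        exact hgS w), Finset.card_image_of_injective _ ginj]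
      simp
      omega
    have extra : ∀ w z, z ∈ f w → z ∈ suppF m → z ≠ g w → z ∈ suppF m \ Finset.univ.image g := by
      intro w z hz hzS hzw
      refine Finset.mem_sdiff.2 ⟨hzS, fun hz' => ?_⟩
      obtain ⟨w', -, rfl⟩ := Finset.mem_image.1 hz'
      exact hzw (congrArg g (hd _ _ _ (hg w') hz))
    obtain ⟨w0, hw0⟩ : ∃ w0, ∀ w, w ≠ w0 → ∀ z ∈ f w, z ∈ suppF m → z = g w := by
      by_cases hex : ∃ w0 z, z ∈ f w0 ∧ z ∈ suppF m ∧ z ≠ g w0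
      · obtain ⟨w0, z0, hz0, hzS0, hzg0⟩ := hex
        refine ⟨w0, fun w hw z hz hzS => ?_⟩
        by_contra hne
        have := Finset.card_le_one.1 hcard _ (extra w z hz hzS hne) _ (extra w0 z0 hz0 hzS0 hzg0)
        exact hw (hd _ _ _ hz (this ▸ hz0))
      · push Not at hex
        exact ⟨0, fun w _ z hz hzS => hex w z hz hzS⟩
    have adj : ∀ w w', w ≠ w0 → w' ≠ w0 → w ≠ w' → H.Adj (g w) (g w') := by
      intro w w' h1 h2 h3
      obtain ⟨u, hu, u', hu', hadj⟩ := ha w w' (by simpa using h3)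
      rw [← hw0 w h1 u hu (mem _ _ hadj), ← hw0 w' h2 u' hu' (mem _ _ hadj.symm)]
      exact hadj
    obtain ⟨a, b, c, d, ha0, hb0, hc0, hd0, ab, ac, ad, bc, bd, cd⟩ := four_of_five w0
    exact noK4_spec h4 hH (g a) (g b) (g c) (g d) (adj _ _ ha0 hb0 ab) (adj _ _ ha0 hc0 ac)
      (adj _ _ ha0 hd0 ad) (adj _ _ hb0 hc0 bc) (adj _ _ hb0 hd0 bd) (adj _ _ hc0 hd0 cd)
  · intro c
    have hc := c.dn_le
    rw [dn_KK33] at hc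
    have h33 : Nat.log2 m / 10 ≤ 9 ∧ noK33 m (Nat.log2 m / 10) = true := by
      rcases h33 with h33 | h33
      · have := Nat.le_of_ble_eq_true h33
        omega
      · exact ⟨Nat.le_of_ble_eq_true h33.1, h33.2⟩
    obtain ⟨ha9, h33⟩ := h33
    obtain ⟨f, -, hd, ha⟩ := c
    have hg : ∀ w, ∃ x ∈ f w, x ∈ suppF m := by
      intro w
      obtain ⟨a, -, -, -, -, -, hw, -⟩ := big_KK33 w
      obtain ⟨u, hu, u', hu', hadj⟩ := ha _ _ hw
      exact ⟨u, hu, mem _ _ hadj⟩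
    choose g hg hgS using hg
    have ginj : Function.Injective g := fun a b e => hd a b (g a) (hg a) (e ▸ hg b)
    have himg : Finset.univ.image g = suppF m := by
      apply Finset.eq_of_subset_of_card_le
      · intro x hx
        obtain ⟨w, -, rfl⟩ := Finset.mem_image.1 hx
        exact hgS w
      · rw [Finset.card_image_of_injective _ ginj]
        simp
        omega
    have uniq : ∀ w, ∀ z ∈ f w, z ∈ suppF m → z = g w := by
      intro w z hz hzS
      rw [← himg] at hzS
      obtain ⟨w', -, rfl⟩ := Finset.mem_image.1 hzS
      exact congrArg g (hd _ _ _ (hg w') hz)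
    have adj : ∀ w w', KK33.Adj w w' → H.Adj (g w) (g w') := by
      intro w w' h3
      obtain ⟨u, hu, u', hu', hadj⟩ := ha w w' h3
      rw [← uniq w u hu (mem _ _ hadj), ← uniq w' u' hu' (mem _ _ hadj.symm)]
      exact hadj
    have hm0 : m ≠ 0 := by
      rintro rfl
      have := hH _ _ (adj (.inl 0) (.inr 0) (by simp))
      simp at this
    have haS : (⟨Nat.log2 m / 10, by omega⟩ : Fin 10) ∈ suppF m := by
      refine mem_suppF (w := Nat.log2 m % 10) _ (Nat.mod_lt _ (by norm_num)) ?_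
      rw [Nat.div_add_mod]
      exact Nat.testBit_log2 hm0
    rw [← himg] at haS
    obtain ⟨w, -, hw⟩ := Finset.mem_image.1 haS
    have hw' := congrArg Fin.val hw
    have three : ∀ i : Fin 3, ∃ j k : Fin 3, j ≠ i ∧ k ≠ i ∧ j ≠ k := by decide
    rcases w with i | i <;> obtain ⟨j, k, hj, hk, hjk⟩ := three i
    · refine noK33_spec h33 hH (g (.inl i)) (g (.inl j)) (g (.inl k)) (g (.inr 0)) (g (.inr 1))
        (g (.inr 2)) hw' (ginj.ne (by simpa using hj)) (ginj.ne (by simpa using hk))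
        (ginj.ne (by simpa using hjk)) (ginj.ne (by simp)) (ginj.ne (by simp)) (ginj.ne (by simp)) ?_
      rintro u (rfl | rfl | rfl) v (rfl | rfl | rfl) <;> exact adj _ _ (by simp)
    · refine noK33_spec h33 hH (g (.inr i)) (g (.inr j)) (g (.inr k)) (g (.inl 0)) (g (.inl 1))
        (g (.inl 2)) hw' (ginj.ne (by simpa using hj)) (ginj.ne (by simpa using hk))
        (ginj.ne (by simpa using hjk)) (ginj.ne (by simp)) (ginj.ne (by simp)) (ginj.ne (by simp)) ?_
      rintro u (rfl | rfl | rfl) v (rfl | rfl | rfl) <;> exact adj _ _ (by simp)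

theorem clear_test (s u w : Nat) (hu : u < 10) (hw : w < 10) (hus : s.testBit u = false)
    (hws : s.testBit w = false) (k : Nat) (hk : k ≤ 10) :
    ∀ m, m.testBit (10 * u + w) = true → (clearN s k m).testBit (10 * u + w) = true := by
  induction k with
  | zero => exact fun m h => h
  | succ k ih =>
    intro m h
    have e : clearN s (k + 1) m =
      clearN s k (bif Nat.testBit s k then Nat.land m (maskN k) else m) := rfl
    rw [e]
    apply ih (by omega)
    cases hk' : s.testBit k
    · exact h
    · rw [cond_true, land_test, h, mask_test k (by omega) u hu w hw]
      · rfl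
      · rintro rfl; simp [hk'] at hus
      · rintro rfl; simp [hk'] at hws

theorem plan_good {m : Nat} (h : planN m = true) : Good m := by
  classical
  unfold planN at h
  rw [force_eq] at h
  revert h
  generalize hm' : redN 4 m = m'
  intro h
  apply red_good 4 m
  rw [hm']
  rw [Bool.or_eq_true] at h
  rcases h with h | h
  · exact term_good h
  · revert h
    generalize ha : Nat.div (Nat.log2 m') 10 = a
    simp only [Bool.and_eq_true]
    generalize hs : Nat.lor (rowN m' a) (Nat.shiftLeft 1 a) = s
    rintro ⟨-, ⟨⟨ha9, hpop⟩, hall⟩, hterm⟩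
    have ha9 := Nat.le_of_ble_eq_true ha9
    have hpop := Nat.le_of_ble_eq_true hpop
    have hslt : s < 1024 := by
      rw [← hs]
      apply Nat.or_lt_two_pow (n := 10) (row_lt m' a)
      have : Nat.shiftLeft 1 a = 2 ^ a := Nat.one_shiftLeft a
      rw [this]
      exact Nat.pow_lt_pow_right (by norm_num) (by omega)
    rw [pop_eq s hslt] at hpop
    intro H hH
    refine Pl.closed (H' := del H {v | s.testBit v.1 = true}) _ hpop ?_ ?_ (term_good hterm _ ?_)
    · intro u hu w huw
      simp only [Finset.mem_filter, Finset.mem_univ, true_and] at hu ⊢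
      have := (allN_iff _ _).1 hall u u.2
      rw [hu, Bool.not_true, Bool.false_or] at this
      rw [← Nat.eq_of_beq_eq_true this, lor_test, row_test _ _ _ w.2, hH u w huw]
      rfl
    · intro u w hu hw huw
      simp only [Finset.mem_filter, Finset.mem_univ, true_and] at hu hw
      exact ⟨huw, hu, hw⟩
    · rintro u w ⟨h1, h2, h3⟩
      exact clear_test s u w u.2 w.2 (by simpa using h2) (by simpa using h3) 10 le_rfl m'
        (hH u w h1)

theorem leaf1_sound {m : Nat} (h : leaf1 m = true) {H : SimpleGraph (Fin 10)} (hH : Over m H) :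
    ∃ a, Pl (del H {a}) := by
  unfold leaf1 at h
  rw [Bool.not_eq_true', ← Bool.not_eq_true, allN_iff] at h
  push Not at h
  obtain ⟨i, hi, h⟩ := h
  rw [force_eq, ne_eq, Bool.or_eq_true, not_or] at h
  have h2 : planN (Nat.land m (maskN (9 - i))) = true := by simpa using h.2
  exact ⟨⟨9 - i, by omega⟩, plan_good h2 _ (over_del hH ⟨9 - i, by omega⟩)⟩

theorem leaf2_sound {m : Nat} (h : leaf2 m = true) {H : SimpleGraph (Fin 10)} (hH : Over m H) :
    ∃ a b, Pl (del H {a, b}) := by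
  unfold leaf2 at h
  rw [Bool.not_eq_true', ← Bool.not_eq_true, allN_iff] at h
  push Not at h
  obtain ⟨i, hi, h⟩ := h
  rw [ne_eq, Bool.or_eq_true, not_or, allN_iff] at h
  obtain ⟨-, h⟩ := h
  push Not at h
  obtain ⟨j, hj, h⟩ := h
  rw [force_eq] at h
  have h2 : planN (Nat.land (Nat.land m (maskN (9 - i))) (maskN (9 - j))) = true := by simpa using h
  refine ⟨⟨9 - i, by omega⟩, ⟨9 - j, by omega⟩, Pl.mono ?_ (plan_good h2 _
    (over_del (over_del hH ⟨9 - i, by omega⟩) ⟨9 - j, by omega⟩))⟩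
  rintro u w ⟨h1, h2, h3⟩
  simp only [Set.mem_insert_iff, Set.mem_singleton_iff, not_or] at h2 h3
  exact ⟨⟨h1, h2.1, h3.1⟩, h2.2, h3.2⟩

/-! ### Soundness of the search -/

theorem upTo_spec {f : Nat → Bool} {K : Nat} (h : upTo f K = true) : ∀ k ≤ K, f k = true := by
  induction K with
  | zero =>
    intro k hk
    obtain rfl : k = 0 := by omega
    exact h
  | succ K ih =>
    have e : upTo f (K + 1) = bif f (K + 1) then upTo f K else false := rfl
    rw [e] at h
    cases hf : f (K + 1)
    · rw [hf] at h
      exact absurd h (by simp)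
    · rw [hf, cond_true] at h
      intro k hk
      rcases Nat.lt_or_eq_of_le hk with h1 | rfl
      · exact ih h k (by omega)
      · exact hf

section Search

variable (G : SimpleGraph (Fin 10)) [DecidableRel G.Adj]

/-- The list `S` of vertices fits to the class `c`. -/
def Rel0 (U : List (Fin 10)) (i : Nat) (p : Nat → Fin 10) (c : Cls) (S : List (Fin 10)) : Prop :=
  S.length = c.n ∧ ∀ x ∈ S, U.countP (fun y => decide (G.Adj x y)) = c.r ∧ G.degree x = c.d ∧
    ∀ j < i, G.Adj x (p j) → c.s.testBit j = true ∧ c.t.testBit (10 * j) = true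

/-- The nonempty list `S` of vertices fits to the class `c`. -/
def Rel1 (U : List (Fin 10)) (i : Nat) (p : Nat → Fin 10) (c : Cls) (S : List (Fin 10)) : Prop :=
  S ≠ [] ∧ Rel0 G U i p c S

variable {G}

theorem push_spec {U : List (Fin 10)} {i : Nat} {p : Nat → Fin 10} {n r d s t : Nat}
    {S : List (Fin 10)} (hS : Rel0 G U i p ⟨n, r, d, s, t⟩ S) {acc : List Cls}
    {Ts : List (List (Fin 10))} (h : List.Forall₂ (Rel1 G U i p) acc Ts) :
    ∃ Ts', List.Forall₂ (Rel1 G U i p) (push n r d s t acc) Ts' ∧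
      Ts'.flatten.Perm (S ++ Ts.flatten) := by
  unfold push
  have hn : S.length = n := hS.1
  cases hb : Nat.beq n 0
  · have hne := Nat.ne_of_beq_eq_false hb
    refine ⟨S :: Ts, List.Forall₂.cons ⟨?_, hS⟩ h, List.Perm.refl _⟩
    rintro rfl
    exact hne hn.symm
  · have he := Nat.eq_of_beq_eq_true hb
    rw [he, List.length_eq_zero_iff] at hn
    subst hn
    exact ⟨Ts, h, List.Perm.refl _⟩

theorem pick_spec (cs : List Cls) : (pick cs = none → cs = []) ∧
    ∀ c cs', pick cs = some (c, cs') → cs.Perm (c :: cs') := by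
  induction cs with
  | nil => exact ⟨fun _ => rfl, fun c cs' h => by cases h⟩
  | cons c cs ih =>
    have e : pick (c :: cs) = Option.rec (some (c, []))
      (fun q => Prod.rec (fun c' cs' => bif Nat.ble (Nat.add (Nat.mul 2 c.n) c'.r)
        (Nat.add (Nat.mul 2 c'.n) c.r) then some (c, cs) else some (c', c :: cs')) q) (pick cs) := rfl
    rw [e]
    rcases hp : pick cs with _ | ⟨c', cs'⟩
    · have := ih.1 hp
      subst this
      refine ⟨fun h => (by simp at h), fun d ds h => ?_⟩
      simp only [Option.some.injEq, Prod.mk.injEq] at h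
      obtain ⟨rfl, rfl⟩ := h
      exact List.Perm.refl _
    · have hperm := ih.2 c' cs' hp
      dsimp only
      cases Nat.ble (Nat.add (Nat.mul 2 c.n) c'.r) (Nat.add (Nat.mul 2 c'.n) c.r)
      · refine ⟨fun h => (by simp at h), fun d ds h => ?_⟩
        simp only [cond_false, Option.some.injEq, Prod.mk.injEq] at h
        obtain ⟨rfl, rfl⟩ := h
        exact (hperm.cons c).trans (List.Perm.swap _ _ _)
      · refine ⟨fun h => (by simp at h), fun d ds h => ?_⟩
        simp only [cond_true, Option.some.injEq, Prod.mk.injEq] at h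
        obtain ⟨rfl, rfl⟩ := h
        exact List.Perm.refl _

/-- A vertex in a class that cannot be adjacent to `v`. -/
theorem no_nbr {U U' : List (Fin 10)} {i : Nat} {p : Nat → Fin 10} {v : Fin 10} {dm : Nat}
    (hU : U.Perm (v :: U')) (hf : ∀ x, forb dm (G.degree v) (G.degree x) = true → ¬ G.Adj v x)
    {c : Cls} {S : List (Fin 10)} (h : Rel1 G U i p c S)
    (hc : (Nat.beq c.r 0 || forb dm (G.degree v) c.d) = true) :
    S.countP (fun y => decide (G.Adj v y)) = 0 := by
  rw [List.countP_eq_zero]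
  intro x hx hadj
  have hadj : G.Adj v x := by simpa using hadj
  obtain ⟨h1, h2, -⟩ := h.2.2 x hx
  rw [Bool.or_eq_true] at hc
  rcases hc with hc | hc
  · have := Nat.eq_of_beq_eq_true hc
    rw [this, hU.countP_eq, List.countP_cons_of_pos (by simpa using hadj.symm)] at h1
    omega
  · rw [← h2] at hc
    exact hf x hc hadj

theorem cap_spec {U U' : List (Fin 10)} {i : Nat} {p : Nat → Fin 10} {v : Fin 10} {dm : Nat}
    (hU : U.Perm (v :: U')) (hf : ∀ x, forb dm (G.degree v) (G.degree x) = true → ¬ G.Adj v x)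
    {cs : List Cls} {Ss : List (List (Fin 10))} (h : List.Forall₂ (Rel1 G U i p) cs Ss) :
    Ss.flatten.countP (fun y => decide (G.Adj v y)) ≤ capN dm (G.degree v) cs := by
  induction h with
  | nil => simp
  | @cons c S cs Ss hc hcs ih =>
    have e : capN dm (G.degree v) (c :: cs) = bif Nat.beq c.r 0 || forb dm (G.degree v) c.d then
      capN dm (G.degree v) cs else c.n + capN dm (G.degree v) cs := rfl
    rw [e, List.flatten_cons, List.countP_append]
    cases hb : Nat.beq c.r 0 || forb dm (G.degree v) c.d
    · rw [cond_false, ← hc.2.1]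
      exact Nat.add_le_add List.countP_le_length ih
    · rw [cond_true, no_nbr hU hf hc hb]
      simpa using ih

theorem branch_spec {U U' : List (Fin 10)} {i : Nat} {p p' : Nat → Fin 10} {v : Fin 10} {dm : Nat}
    (hU : U.Perm (v :: U')) (hf : ∀ x, forb dm (G.degree v) (G.degree x) = true → ¬ G.Adj v x)
    (hp : ∀ j < i, p' j = p j) (hpi : p' i = v) {go : List Cls → Bool}
    {cs : List Cls} {Ss : List (List (Fin 10))} (h : List.Forall₂ (Rel1 G U i p) cs Ss) :
    ∀ (r : Nat) (acc : List Cls) (Ts : List (List (Fin 10))),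
      List.Forall₂ (Rel1 G U' (i + 1) p') acc Ts →
      Ss.flatten.countP (fun y => decide (G.Adj v y)) = r →
      branch dm (G.degree v) i go cs r acc = true →
      ∃ acc' Ts', go acc' = true ∧ List.Forall₂ (Rel1 G U' (i + 1) p') acc' Ts' ∧
        Ts'.flatten.Perm (Ss.flatten ++ Ts.flatten) := by
  induction h with
  | nil =>
    intro r acc Ts hacc hr hb
    have hr : r = 0 := by simpa using hr.symm
    subst hr
    exact ⟨acc, Ts, hb, hacc, List.Perm.refl _⟩
  | @cons c S cs Ss hc hcs ih =>
    intro r acc Ts hacc hr hb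
    have e : branch dm (G.degree v) i go (c :: cs) r acc =
      force (Nat.sub r (capN dm (G.degree v) cs)) fun lo =>
      upTo (fun k => bif Nat.ble lo k then
          branch dm (G.degree v) i go cs (Nat.sub r k)
            (push k (Nat.pred c.r) c.d (Nat.lor c.s (Nat.shiftLeft 1 i))
                (Nat.lor c.t (Nat.shiftLeft 1 (Nat.mul 10 i)))
              (push (Nat.sub c.n k) c.r c.d c.s c.t acc))
          else true)
        (bif Nat.beq c.r 0 || forb dm (G.degree v) c.d then 0 else
          bif Nat.ble c.n r then c.n else r) := rfl
    rw [e, force_eq] at hb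
    rw [List.flatten_cons, List.countP_append] at hr
    have hcap := cap_spec hU hf hcs
    set k := S.countP (fun y => decide (G.Adj v y)) with hk
    have hkn : k ≤ c.n := by rw [← hc.2.1]; exact List.countP_le_length
    have hkK : k ≤ (bif Nat.beq c.r 0 || forb dm (G.degree v) c.d then 0 else
          bif Nat.ble c.n r then c.n else r) := by
      cases hb : Nat.beq c.r 0 || forb dm (G.degree v) c.d
      · rw [cond_false]
        cases Nat.ble c.n r
        · rw [cond_false]; omega
        · rw [cond_true]; exact hkn
      · rw [cond_true, hk, no_nbr hU hf hc hb]
    have hb := upTo_spec hb k hkK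
    have hlo : Nat.ble (Nat.sub r (capN dm (G.degree v) cs)) k = true := by
      apply Nat.ble_eq_true_of_le
      have : Nat.sub r (capN dm (G.degree v) cs) = r - capN dm (G.degree v) cs := rfl
      omega
    rw [hlo, cond_true] at hb
    have cnt : ∀ x, U.countP (fun y => decide (G.Adj x y)) =
        U'.countP (fun y => decide (G.Adj x y)) + if G.Adj x v then 1 else 0 := by
      intro x
      rw [hU.countP_eq, List.countP_cons]
      simp
    obtain ⟨T2, hT2, hT2p⟩ := push_spec (G := G) (U := U') (i := i + 1) (p := p')
      (n := Nat.sub c.n k) (r := c.r) (d := c.d) (s := c.s) (t := c.t)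
      (S := S.filter fun y => !decide (G.Adj v y)) (by
        refine ⟨?_, ?_⟩
        · have h1 := (List.filter_append_perm (fun y => decide (G.Adj v y)) S).length_eq
          rw [List.length_append, ← List.countP_eq_length_filter, ← hk, hc.2.1] at h1
          have : Nat.sub c.n k = c.n - k := rfl
          dsimp only
          omega
        · intro x hx
          rw [List.mem_filter] at hx
          obtain ⟨hx, hadj⟩ := hx
          have hadj : ¬ G.Adj v x := by simpa using hadj
          have hadj' : ¬ G.Adj x v := fun h => hadj h.symm
          obtain ⟨h1, h2, h3⟩ := hc.2.2 x hx
          rw [cnt x, if_neg hadj', Nat.add_zero] at h1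
          refine ⟨h1, h2, fun j hj hjx => ?_⟩
          by_cases hji : j = i
          · subst hji
            rw [hpi] at hjx
            exact absurd hjx hadj'
          · have hj' : j < i := by omega
            rw [hp j hj'] at hjx
            exact h3 j hj' hjx) hacc
    obtain ⟨T1, hT1, hT1p⟩ := push_spec (G := G) (U := U') (i := i + 1) (p := p')
      (n := k) (r := Nat.pred c.r) (d := c.d) (s := Nat.lor c.s (Nat.shiftLeft 1 i))
      (t := Nat.lor c.t (Nat.shiftLeft 1 (Nat.mul 10 i)))
      (S := S.filter fun y => decide (G.Adj v y)) (by
        refine ⟨?_, ?_⟩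
        · rw [← List.countP_eq_length_filter]
        · intro x hx
          rw [List.mem_filter] at hx
          obtain ⟨hx, hadj⟩ := hx
          have hadj : G.Adj v x := by simpa using hadj
          have hadj' : G.Adj x v := hadj.symm
          obtain ⟨h1, h2, h3⟩ := hc.2.2 x hx
          rw [cnt x, if_pos hadj'] at h1
          refine ⟨?_, h2, fun j hj hjx => ?_⟩
          · dsimp only
            rw [Nat.pred_eq_sub_one]
            omega
          · dsimp only
            rw [lor_test, lor_test, one_shift_test, one_shift_test]
            by_cases hji : j = i
            · subst hji
              refine ⟨by simp, ?_⟩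
              rw [Bool.or_eq_true]
              right
              exact decide_eq_true rfl
            · have hj' : j < i := by omega
              rw [hp j hj'] at hjx
              obtain ⟨h4, h5⟩ := h3 j hj' hjx
              rw [h4, h5]
              exact ⟨rfl, rfl⟩) hT2
    obtain ⟨acc', Ts', h1, h2, h3⟩ := ih (Nat.sub r k) _ T1 hT1 (by
      have : Nat.sub r k = r - k := rfl
      omega) hb
    refine ⟨acc', Ts', h1, h2, h3.trans ?_⟩
    have hS := List.filter_append_perm (fun y => decide (G.Adj v y)) S
    rw [List.flatten_cons]
    have a1 : T1.flatten.Perm (S ++ Ts.flatten) := by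
      refine hT1p.trans (((hT2p.append_left _)).trans ?_)
      rw [← List.append_assoc]
      exact hS.append_right _
    refine (a1.append_left _).trans ?_
    rw [← List.append_assoc]
    exact List.perm_append_comm.append_right _

/-- The conclusion of the search. -/
def Found (G : SimpleGraph (Fin 10)) (leaf : Nat → Bool) : Prop :=
  ∃ (m : Nat) (p : Nat → Fin 10), leaf m = true ∧ (∀ x, ∃ j < 10, p j = x) ∧
    ∀ j < 10, ∀ l < 10, G.Adj (p j) (p l) → m.testBit (10 * j + l) = true

theorem found_of_cover {leaf : Nat → Bool} {m i : Nat} {p : Nat → Fin 10} (hi : i ≤ 10)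
    (hl : leaf m = true) (hc : ∀ x, ∃ j < i, p j = x)
    (hm : ∀ j < i, ∀ l < i, G.Adj (p j) (p l) → m.testBit (10 * j + l) = true) : Found G leaf := by
  have : 10 ≤ i := by
    have h1 : (Finset.univ : Finset (Fin 10)) ⊆ (Finset.range i).image p := by
      intro x _
      obtain ⟨j, hj, hx⟩ := hc x
      exact Finset.mem_image.2 ⟨j, Finset.mem_range.2 hj, hx⟩
    have h2 := Finset.card_le_card h1
    have h3 := Finset.card_image_le (s := Finset.range i) (f := p)
    simp at h2 h3
    omega
  obtain rfl : i = 10 := by omega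
  exact ⟨m, p, hl, hc, hm⟩

theorem search_spec {leaf : Nat → Bool} {dm : Nat}
    (hforb : ∀ v x, forb dm (G.degree v) (G.degree x) = true → ¬ G.Adj v x) (f : Nat) :
    ∀ (i m : Nat) (cs : List Cls) (Ss : List (List (Fin 10))) (U : List (Fin 10)) (p : Nat → Fin 10),
      f + i = 10 → List.Forall₂ (Rel1 G U i p) cs Ss → U.Perm Ss.flatten →
      (∀ x, x ∈ U ∨ ∃ j < i, p j = x) →
      (∀ j < i, ∀ l < i, G.Adj (p j) (p l) → m.testBit (10 * j + l) = true) →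
      search leaf dm f i m cs = true → Found G leaf := by
  induction f with
  | zero =>
    intro i m cs Ss U p hi hcs hU hcov hm hs
    have e : search leaf dm 0 i m cs = (cs.isEmpty && leaf m) := rfl
    rw [e, Bool.and_eq_true, List.isEmpty_iff] at hs
    obtain ⟨rfl, hl⟩ := hs
    cases hcs
    have hU : U = [] := by simpa using hU
    subst hU
    exact found_of_cover (by omega) hl (fun x => (hcov x).resolve_left (by simp)) hm
  | succ f ih =>
    intro i m cs Ss U p hi hcs hU hcov hm hs
    have e : search leaf dm (f + 1) i m cs = Option.rec (force m leaf)
      (fun q => Prod.rec (fun c cs' => branch dm c.d i (search leaf dm f (Nat.succ i)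
        (Nat.lor m (Nat.lor (Nat.shiftLeft c.s (Nat.mul 10 i)) (Nat.shiftLeft c.t i))))
        (push (Nat.pred c.n) c.r c.d c.s c.t cs') c.r []) q) (pick cs) := rfl
    rw [e] at hs
    have hpick := pick_spec cs
    rcases hp : pick cs with _ | ⟨c, cs'⟩
    · have := hpick.1 hp
      subst this
      rw [hp] at hs
      dsimp only at hs
      rw [force_eq] at hs
      cases hcs
      have hU : U = [] := by simpa using hU
      subst hU
      exact found_of_cover (by omega) hs (fun x => (hcov x).resolve_left (by simp)) hm
    · rw [hp] at hs
      dsimp only at hs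
      have hperm := hpick.2 c cs' hp
      obtain ⟨Ss', hSs', hSp⟩ := List.perm_comp_forall₂ hperm.symm hcs
      cases hSs' with
      | @cons _ S _ Ss'' hc hcs' =>
      obtain ⟨hSne, hlen, hS⟩ := hc
      cases S with
      | nil => exact absurd rfl hSne
      | cons v S' =>
      have hU1 : U.Perm (v :: (S' ++ Ss''.flatten)) := hU.trans hSp.flatten.symm
      obtain ⟨hv1, hv2, hv3⟩ := hS v (by simp)
      obtain ⟨T1, hT1, hT1p⟩ := push_spec (G := G) (U := U) (i := i) (p := p)
        (n := Nat.pred c.n) (r := c.r) (d := c.d) (s := c.s) (t := c.t) (S := S')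
        ⟨by simp only [List.length_cons] at hlen; rw [← hlen]; rfl,
          fun x hx => hS x (by simp [hx])⟩ hcs'
      have hcnt : T1.flatten.countP (fun y => decide (G.Adj v y)) = c.r := by
        rw [hT1p.countP_eq, ← hv1, hU1.countP_eq, List.countP_cons_of_neg (by simp)]
      rw [← hv2] at hs hT1
      obtain ⟨acc', Ts', h1, h2, h3⟩ := branch_spec (G := G) (p' := Function.update p i v) (Ts := []) hU1
        (hforb v) (fun j hj => Function.update_of_ne (by omega) _ _) (Function.update_self _ _ _)
        hT1 c.r [] List.Forall₂.nil hcnt hs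
      have hold : ∀ j < i, Function.update p i v j = p j :=
        fun j hj => Function.update_of_ne (by omega) _ _
      have hnew : Function.update p i v i = v := Function.update_self _ _ _
      refine ih (i + 1) _ acc' Ts' (S' ++ Ss''.flatten) (Function.update p i v) (by omega) h2 ?_ ?_ ?_ h1
      · refine (h3.trans ?_).symm
        simpa using hT1p
      · intro x
        rcases hcov x with hx | ⟨j, hj, hx⟩
        · rcases List.mem_cons.1 (hU1.mem_iff.1 hx) with rfl | hx
          · exact Or.inr ⟨i, by omega, hnew⟩
          · exact Or.inl hx
        · exact Or.inr ⟨j, by omega, by rw [hold j hj]; exact hx⟩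
      · intro j hj l hl hadj
        rw [lor_test, lor_test]
        have sh : ∀ a b k, (Nat.shiftLeft a b).testBit (b + k) = a.testBit k := by
          intro a b k
          have : Nat.shiftLeft a b = a <<< b := rfl
          rw [this, Nat.testBit_shiftLeft]
          simp
        by_cases hji : j = i
        · subst hji
          rw [hnew] at hadj
          by_cases hli : l = j
          · subst hli
            rw [hnew] at hadj
            exact absurd rfl hadj.ne
          · have hl' : l < j := by omega
            rw [hold l hl'] at hadj
            have := sh c.s (Nat.mul 10 j) l
            rw [(hv3 l hl' hadj).1] at this
            rw [show (Nat.shiftLeft c.s (Nat.mul 10 j)).testBit (10 * j + l) = true from this]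
            simp
        · have hj' : j < i := by omega
          rw [hold j hj'] at hadj
          by_cases hli : l = i
          · subst hli
            rw [hnew] at hadj
            have := sh c.t l (10 * j)
            rw [(hv3 j hj' hadj.symm).2, Nat.add_comm] at this
            rw [this]
            simp
          · have hl' : l < i := by omega
            rw [hold l hl'] at hadj
            rw [hm j hj' l hl' hadj]
            rfl

theorem run_spec {leaf : Nat → Bool} {dm n0 n3 n4 n5 : Nat}
    (hforb : ∀ v x, forb dm (G.degree v) (G.degree x) = true → ¬ G.Adj v x)
    (hd : ∀ x, G.degree x = 0 ∨ G.degree x = 3 ∨ G.degree x = 4 ∨ G.degree x = 5)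
    (h0 : (Finset.univ.filter fun x => G.degree x = 0).card = n0)
    (h3 : (Finset.univ.filter fun x => G.degree x = 3).card = n3)
    (h4 : (Finset.univ.filter fun x => G.degree x = 4).card = n4)
    (h5 : (Finset.univ.filter fun x => G.degree x = 5).card = n5)
    (h : run leaf dm n0 n3 n4 n5 = true) : Found G leaf := by
  have hcount : ∀ x, (Finset.univ : Finset (Fin 10)).toList.countP (fun y => decide (G.Adj x y)) =
      G.degree x := by
    intro x
    rw [List.countP_eq_length_filter, ← SimpleGraph.card_neighborFinset_eq_degree,
      SimpleGraph.neighborFinset_eq_filter, ← Finset.length_toList]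
    apply List.Perm.length_eq
    rw [List.perm_ext_iff_of_nodup ((Finset.nodup_toList _).filter _) (Finset.nodup_toList _)]
    intro y
    simp
  have cls : ∀ d n, (Finset.univ.filter fun x => G.degree x = d).card = n →
      Rel0 G (Finset.univ : Finset (Fin 10)).toList 0 (fun _ => 0) ⟨n, d, d, 0, 0⟩
        (Finset.univ.filter fun x => G.degree x = d).toList := by
    intro d n hn
    refine ⟨by rw [Finset.length_toList]; exact hn, ?_⟩
    intro x hx
    have hx : G.degree x = d := by simpa using hx
    exact ⟨by rw [hcount]; exact hx, hx, fun j hj => absurd hj (by omega)⟩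
  obtain ⟨T5, hT5, p5⟩ := push_spec (cls 5 n5 h5) List.Forall₂.nil
  obtain ⟨T4, hT4, p4⟩ := push_spec (cls 4 n4 h4) hT5
  obtain ⟨T3, hT3, p3⟩ := push_spec (cls 3 n3 h3) hT4
  obtain ⟨T0, hT0, p0⟩ := push_spec (cls 0 n0 h0) hT3
  refine search_spec hforb 10 0 0 _ T0 _ _ rfl hT0 ?_ (fun x => Or.inl (by simp))
    (fun j hj => absurd hj (by omega)) h
  refine List.Perm.symm (p0.trans ?_)
  refine ((p3.trans ((p4.trans (p5.append_left _)).append_left _)).append_left _).trans ?_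
  rw [List.perm_ext_iff_of_nodup ?_ (Finset.nodup_toList _)]
  · intro x
    simp only [List.flatten_nil, List.append_nil, List.mem_append, Finset.mem_toList,
      Finset.mem_filter, Finset.mem_univ, true_and, iff_true]
    exact hd x
  · simp only [List.flatten_nil, List.append_nil, List.nodup_append, Finset.nodup_toList, true_and,
      Finset.mem_toList, Finset.mem_filter, Finset.mem_univ, List.mem_append]
    refine ⟨⟨?_, ?_⟩, ?_⟩
    · rintro a ha b hb rfl; omega
    · rintro a ha b hb rfl; omega
    · rintro a ha b hb rfl; omega

theorem found_comap {leaf : Nat → Bool} (h : Found G leaf) :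
    ∃ (e : Fin 10 ≃ Fin 10) (m : Nat), leaf m = true ∧ Over m (G.comap e) := by
  obtain ⟨m, p, hl, hs, hm⟩ := h
  have hsur : Function.Surjective (fun j : Fin 10 => p j.1) := by
    intro x
    obtain ⟨j, hj, hx⟩ := hs x
    exact ⟨⟨j, hj⟩, hx⟩
  refine ⟨Equiv.ofBijective _ (Finite.surjective_iff_bijective.1 hsur), m, hl, ?_⟩
  intro u w huw
  exact hm u u.2 w w.2 huw

theorem found1 (h : Found G leaf1) : ∃ a, Pl (del G {a}) := by
  obtain ⟨e, m, hl, ho⟩ := found_comap h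
  obtain ⟨a, ha⟩ := leaf1_sound hl ho
  refine ⟨e a, ha.comap e.symm e.symm.injective ?_⟩
  rintro u w ⟨h1, h2, h3⟩
  refine ⟨by simpa using h1, ?_, ?_⟩
  · intro h; apply h2; rw [Set.mem_singleton_iff] at h ⊢; rw [← h]; simp
  · intro h; apply h3; rw [Set.mem_singleton_iff] at h ⊢; rw [← h]; simp

theorem found2 (h : Found G leaf2) : ∃ a b, Pl (del G {a, b}) := by
  obtain ⟨e, m, hl, ho⟩ := found_comap h
  obtain ⟨a, b, ha⟩ := leaf2_sound hl ho
  refine ⟨e a, e b, ha.comap e.symm e.symm.injective ?_⟩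
  have key : ∀ u, u ∉ ({e a, e b} : Set (Fin 10)) → e.symm u ∉ ({a, b} : Set (Fin 10)) := by
    intro u hu hu'
    apply hu
    rw [Set.mem_insert_iff, Set.mem_singleton_iff] at hu' ⊢
    rcases hu' with h | h
    · left; rw [← h]; simp
    · right; rw [← h]; simp
  rintro u w ⟨h1, h2, h3⟩
  exact ⟨by simpa using h1, key u h2, key w h3⟩

end Search

/-! ### The cases of the search -/

/-- All cases with degree sum `D` in which the number of vertices of degree five is between `lo` and
`hi`. -/
noncomputable def solve (leaf : Nat → Bool) (dm D lo hi : Nat) : Bool :=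
  allN (fun n3 => allN (fun n4 => allN (fun n5 =>
    bif Nat.beq (Nat.add (Nat.mul 3 n3) (Nat.add (Nat.mul 4 n4) (Nat.mul 5 n5))) D then
      bif Nat.ble (Nat.add n3 (Nat.add n4 n5)) 10 then
        bif Nat.ble lo n5 then bif Nat.ble n5 hi then
          force (Nat.sub 10 (Nat.add n3 (Nat.add n4 n5))) fun n0 => run leaf dm n0 n3 n4 n5
          else true else true else true else true) 11) 11) 11

theorem solve24 : solve leaf1 100 24 0 10 = true := by decide +kernel

theorem solve26 : solve leaf1 100 26 0 10 = true := by decide +kernel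

theorem solve28 : solve leaf1 100 28 0 10 = true := by decide +kernel

theorem solve38 : solve leaf2 4 38 0 0 = true := by decide +kernel

theorem solve40 : solve leaf2 4 40 0 0 = true := by decide +kernel

theorem solve40_five : solve leaf2 5 40 1 10 = true := by decide +kernel

theorem solve_spec {leaf : Nat → Bool} {dm D lo hi : Nat} (h : solve leaf dm D lo hi = true)
    {n0 n3 n4 n5 : Nat} (hn : n0 + n3 + n4 + n5 = 10) (hD : 3 * n3 + 4 * n4 + 5 * n5 = D)
    (hlo : lo ≤ n5) (hhi : n5 ≤ hi) : run leaf dm n0 n3 n4 n5 = true := by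
  unfold solve at h
  have h1 := (allN_iff _ _).1 ((allN_iff _ _).1 ((allN_iff _ _).1 h n3 (by omega)) n4 (by omega))
    n5 (by omega)
  have e1 : Nat.beq (Nat.add (Nat.mul 3 n3) (Nat.add (Nat.mul 4 n4) (Nat.mul 5 n5))) D = true := by
    have : Nat.add (Nat.mul 3 n3) (Nat.add (Nat.mul 4 n4) (Nat.mul 5 n5)) = D := by
      show 3 * n3 + (4 * n4 + 5 * n5) = D
      omega
    rw [this]
    exact Nat.beq_refl D
  have e2 : Nat.ble (Nat.add n3 (Nat.add n4 n5)) 10 = true := by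
    apply Nat.ble_eq_true_of_le
    show n3 + (n4 + n5) ≤ 10
    omega
  have e3 : Nat.sub 10 (Nat.add n3 (Nat.add n4 n5)) = n0 := by
    show 10 - (n3 + (n4 + n5)) = n0
    omega
  rw [e1, e2, Nat.ble_eq_true_of_le hlo, Nat.ble_eq_true_of_le hhi, force_eq, e3] at h1
  exact h1

/-! ### Degrees and the numbers of edges -/

open Classical in
/-- The degree of a vertex. -/
noncomputable def dg (G : SimpleGraph (Fin 10)) (v : Fin 10) : ℕ :=
  (Finset.univ.filter fun w => G.Adj v w).card

theorem dg_eq (G : SimpleGraph (Fin 10)) [DecidableRel G.Adj] (v : Fin 10) : G.degree v = dg G v := by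
  unfold dg
  rw [← SimpleGraph.card_neighborFinset_eq_degree, SimpleGraph.neighborFinset_eq_filter]
  congr

theorem dn_eq_sum (G : SimpleGraph (Fin 10)) : dn G = ∑ v, dg G v := by
  classical
  rw [dn_eq]
  refine Finset.sum_congr rfl fun u _ => ?_
  unfold dg
  congr

theorem dn_even (G : SimpleGraph (Fin 10)) : ∃ k, dn G = 2 * k := by
  classical
  have := G.sum_degrees_eq_twice_card_edges
  simp only [dg_eq] at this
  exact ⟨_, (dn_eq_sum G).trans this⟩

theorem dn_del (G : SimpleGraph (Fin 10)) (a : Fin 10) : dn G = dn (del G {a}) + 2 * dg G a := by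
  classical
  have key : ∀ u, dg G u = dg (del G {a}) u + (if G.Adj u a then 1 else 0) +
      (if u = a then dg G a else 0) := by
    intro u
    by_cases hu : u = a
    · subst hu
      have : dg (del G {u}) u = 0 := by
        unfold dg
        rw [Finset.card_eq_zero, Finset.filter_eq_empty_iff]
        rintro w - ⟨-, h, -⟩
        exact h rfl
      simp [this]
    · rw [if_neg hu, Nat.add_zero]
      unfold dg
      by_cases hua : G.Adj u a
      · rw [if_pos hua, ← Finset.card_insert_of_notMem (a := a)
          (s := Finset.univ.filter fun w => (del G {a}).Adj u w)]
        · congr 1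
          ext w
          simp only [Finset.mem_filter, Finset.mem_univ, true_and, Finset.mem_insert]
          constructor
          · intro h
            by_cases hw : w = a
            · exact Or.inl hw
            · exact Or.inr ⟨h, hu, hw⟩
          · rintro (rfl | h)
            · exact hua
            · exact h.1
        · simp [del]
      · rw [if_neg hua, Nat.add_zero]
        congr 1
        ext w
        simp only [Finset.mem_filter, Finset.mem_univ, true_and]
        constructor
        · intro h
          refine ⟨h, hu, ?_⟩
          rintro rfl
          exact hua h
        · exact fun h => h.1
  rw [dn_eq_sum G, Finset.sum_congr rfl fun u _ => key u, Finset.sum_add_distrib,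
    Finset.sum_add_distrib, ← dn_eq_sum, Finset.sum_ite_eq' Finset.univ a, if_pos (Finset.mem_univ a)]
  have : (∑ u, if G.Adj u a then 1 else 0) = dg G a := by
    rw [← Finset.card_filter]
    unfold dg
    congr 1
    ext w
    simp [G.adj_comm]
  rw [this]
  omega

/-- Delete the vertex `v` and join its neighbours. -/
def red (G : SimpleGraph (Fin 10)) (v : Fin 10) : SimpleGraph (Fin 10) where
  Adj u w := (del G {v}).Adj u w ∨ (u ≠ w ∧ G.Adj v u ∧ G.Adj v w)
  symm := ⟨fun _ _ h => h.imp (fun h => h.symm) (fun h => ⟨h.1.symm, h.2.2, h.2.1⟩)⟩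
  loopless := ⟨fun _ h => h.elim (fun h => h.ne rfl) (fun h => h.1 rfl)⟩

theorem dn_red (G : SimpleGraph (Fin 10)) (v : Fin 10) (hv : dg G v = 1 ∨ dg G v = 2) :
    dn (red G v) + 2 ≤ dn G := by
  classical
  have h1 : dn (red G v) ≤ dn (del G {v}) + (dg G v * dg G v - dg G v) := by
    unfold dn dg
    rw [← Finset.offDiag_card]
    refine le_trans (Finset.card_le_card ?_) (Finset.card_union_le _ _)
    intro q hq
    rw [Finset.mem_filter] at hq
    rcases hq.2 with h | h
    · exact Finset.mem_union_left _ (by simpa using h)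
    · exact Finset.mem_union_right _ (by simpa [Finset.mem_offDiag] using ⟨h.2.1, h.2.2, h.1⟩)
  have h2 := dn_del G v
  rcases hv with hv | hv <;> rw [hv] at h1 h2 <;> omega

theorem red_pl (G : SimpleGraph (Fin 10)) (v : Fin 10) (hv : dg G v = 1 ∨ dg G v = 2)
    (P : Set (Fin 10)) (h : Pl (del (red G v) P)) : Pl (del G P) := by
  classical
  refine h.reduce v ?_ ?_ ?_
  · rintro u w hu hw ⟨h1, h2, h3⟩
    exact ⟨Or.inl ⟨h1, hu, hw⟩, h2, h3⟩
  · have : ∃ x y, ∀ u, G.Adj v u → u = x ∨ u = y := by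
      unfold dg at hv
      rcases hv with hv | hv
      · obtain ⟨x, hx⟩ := Finset.card_eq_one.1 hv
        refine ⟨x, x, fun u hu => Or.inl ?_⟩
        have : u ∈ Finset.univ.filter fun w => G.Adj v w := by simpa using hu
        rw [hx] at this
        simpa using this
      · obtain ⟨x, y, -, hx⟩ := Finset.card_eq_two.1 hv
        refine ⟨x, y, fun u hu => ?_⟩
        have : u ∈ Finset.univ.filter fun w => G.Adj v w := by simpa using hu
        rw [hx] at this
        simpa using this
    obtain ⟨x, y, hxy⟩ := this
    exact ⟨x, y, fun u hu => hxy u hu.1⟩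
  · rintro x y ⟨hx, -, hxP⟩ ⟨hy, -, hyP⟩ hxy
    exact ⟨Or.inr ⟨hxy, hx, hy⟩, hxP, hyP⟩

/-! ### The cases settled by the search -/

theorem found_of_solve {G : SimpleGraph (Fin 10)} {leaf : Nat → Bool} {dm D lo hi : Nat}
    (hforb : ∀ v x, dg G v = 3 → dg G x = dm → ¬ G.Adj v x)
    (hd : ∀ x, dg G x = 0 ∨ dg G x = 3 ∨ dg G x = 4 ∨ dg G x = 5) (hD : dn G = D)
    (hlo : lo = 0 ∨ lo = 1 ∧ ∃ x, dg G x = 5) (hhi : hi = 10 ∨ ∀ x, dg G x ≠ 5)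
    (h : solve leaf dm D lo hi = true) : Found G leaf := by
  classical
  have hfib : ∀ g : ℕ → ℕ, ∑ v, g (dg G v) =
      g 0 * (Finset.univ.filter fun x => dg G x = 0).card +
      g 3 * (Finset.univ.filter fun x => dg G x = 3).card +
      g 4 * (Finset.univ.filter fun x => dg G x = 4).card +
      g 5 * (Finset.univ.filter fun x => dg G x = 5).card := by
    intro g
    have : ∀ v, g (dg G v) = g 0 * (if dg G v = 0 then 1 else 0) +
        g 3 * (if dg G v = 3 then 1 else 0) + g 4 * (if dg G v = 4 then 1 else 0) +
        g 5 * (if dg G v = 5 then 1 else 0) := by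
      intro v
      rcases hd v with e | e | e | e <;> rw [e] <;> simp
    rw [Finset.sum_congr rfl fun v _ => this v]
    simp only [Finset.sum_add_distrib, ← Finset.mul_sum, Finset.card_filter]
  have hn := hfib fun _ => 1
  have hs := hfib fun n => n
  rw [← dn_eq_sum, hD] at hs
  simp only [Finset.sum_const, Finset.card_univ, Fintype.card_fin, smul_eq_mul, one_mul] at hn
  have hrun := solve_spec h (n0 := (Finset.univ.filter fun x => dg G x = 0).card)
    (n3 := (Finset.univ.filter fun x => dg G x = 3).card)
    (n4 := (Finset.univ.filter fun x => dg G x = 4).card)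
    (n5 := (Finset.univ.filter fun x => dg G x = 5).card) (by omega) (by omega) (by
      rcases hlo with rfl | ⟨rfl, x, hx⟩
      · omega
      · exact Finset.card_pos.2 ⟨x, by simpa using hx⟩) (by
      rcases hhi with rfl | hx
      · omega
      · rw [Finset.card_eq_zero.2]
        · omega
        · rw [Finset.filter_eq_empty_iff]
          exact fun x _ => hx x)
  refine run_spec ?_ ?_ ?_ ?_ ?_ ?_ hrun
  · intro v x hf
    simp only [dg_eq] at hf
    unfold forb at hf
    rw [Bool.or_eq_true, Bool.and_eq_true, Bool.and_eq_true] at hf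
    rcases hf with ⟨h1, h2⟩ | ⟨h1, h2⟩
    · exact hforb v x (Nat.eq_of_beq_eq_true h1) (Nat.eq_of_beq_eq_true h2)
    · exact fun hadj => hforb x v (Nat.eq_of_beq_eq_true h2) (Nat.eq_of_beq_eq_true h1) hadj.symm
  · intro x
    rw [dg_eq]
    exact hd x
  all_goals simp only [dg_eq]

theorem dg_le_of_dn {G : SimpleGraph (Fin 10)} {d : ℕ} (h : ∀ v, dg G v ≤ d) : dn G ≤ 10 * d := by
  rw [dn_eq_sum]
  refine (Finset.sum_le_sum fun v _ => h v).trans ?_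
  simp

theorem apex1 (n : ℕ) : ∀ G : SimpleGraph (Fin 10), dn G = n → n ≤ 28 → ∃ a, Pl (del G {a}) := by
  induction n using Nat.strong_induction_on with
  | _ n ih =>
  classical
  intro G hn hle
  by_cases hv : ∃ v, dg G v = 1 ∨ dg G v = 2
  · obtain ⟨v, hv⟩ := hv
    have := dn_red G v hv
    obtain ⟨a, ha⟩ := ih (dn (red G v)) (by omega) (red G v) rfl (by omega)
    exact ⟨a, red_pl G v hv _ ha⟩
  · push Not at hv
    obtain ⟨a, ha⟩ := Finite.exists_max (dg G)
    have hdel := dn_del G a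
    by_cases h17 : dn (del G {a}) ≤ 17
    · exact ⟨a, Pl.of_dn h17⟩
    · have h10 := dg_le_of_dn ha
      have hva := hv a
      obtain ⟨k, hk⟩ := dn_even G
      obtain ⟨k', hk'⟩ := dn_even (del G {a})
      have hd : ∀ x, dg G x = 0 ∨ dg G x = 3 ∨ dg G x = 4 ∨ dg G x = 5 := by
        intro x
        have h1 := ha x
        have h2 := hv x
        omega
      have hforb : ∀ v x, dg G v = 3 → dg G x = 100 → ¬ G.Adj v x := by
        intro v x _ hx
        have := ha x
        omega
      have hcases : dn G = 24 ∨ dn G = 26 ∨ dn G = 28 := by omega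
      apply found1 (G := G)
      rcases hcases with h | h | h
      · exact found_of_solve hforb hd h (Or.inl rfl) (Or.inl rfl) solve24
      · exact found_of_solve hforb hd h (Or.inl rfl) (Or.inl rfl) solve26
      · exact found_of_solve hforb hd h (Or.inl rfl) (Or.inl rfl) solve28

theorem apex1_low (G : SimpleGraph (Fin 10)) (h : dn G ≤ 30) (v : Fin 10)
    (hv : dg G v = 1 ∨ dg G v = 2) : ∃ a, Pl (del G {a}) := by
  have := dn_red G v hv
  obtain ⟨a, ha⟩ := apex1 _ (red G v) rfl (by omega)
  exact ⟨a, red_pl G v hv _ ha⟩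

theorem apex2_of_apex1 {G : SimpleGraph (Fin 10)} {a : Fin 10}
    (h : ∃ b, Pl (del (del G {a}) {b})) : ∃ a b, Pl (del G {a, b}) := by
  obtain ⟨b, hb⟩ := h
  refine ⟨a, b, hb.mono ?_⟩
  rintro u w ⟨h1, h2, h3⟩
  simp only [Set.mem_insert_iff, Set.mem_singleton_iff, not_or] at h2 h3
  exact ⟨⟨h1, h2.1, h3.1⟩, h2.2, h3.2⟩

theorem dg_del {G : SimpleGraph (Fin 10)} {v a : Fin 10} (h : G.Adj v a) :
    dg (del G {a}) v + 1 = dg G v := by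
  classical
  unfold dg
  rw [← Finset.card_insert_of_notMem (a := a) (s := Finset.univ.filter fun w => (del G {a}).Adj v w)]
  · congr 1
    ext w
    simp only [Finset.mem_filter, Finset.mem_univ, true_and, Finset.mem_insert]
    constructor
    · rintro (rfl | h')
      · exact h
      · exact h'.1
    · intro h'
      by_cases hw : w = a
      · exact Or.inl hw
      · exact Or.inr ⟨h', h.ne, hw⟩
  · simp [del]

theorem apex2 (n : ℕ) : ∀ G : SimpleGraph (Fin 10), dn G = n → n ≤ 40 →
    ∃ a b, Pl (del G {a, b}) := by
  induction n using Nat.strong_induction_on with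
  | _ n ih =>
  classical
  intro G hn hle
  by_cases hv : ∃ v, dg G v = 1 ∨ dg G v = 2
  · obtain ⟨v, hv⟩ := hv
    have := dn_red G v hv
    obtain ⟨a, b, ha⟩ := ih (dn (red G v)) (by omega) (red G v) rfl (by omega)
    exact ⟨a, b, red_pl G v hv _ ha⟩
  · push Not at hv
    obtain ⟨a, ha⟩ := Finite.exists_max (dg G)
    have hdel := dn_del G a
    by_cases h28 : dn (del G {a}) ≤ 28
    · exact apex2_of_apex1 (apex1 _ _ rfl h28)
    · have h10 := dg_le_of_dn ha
      have hva := hv a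
      obtain ⟨k, hk⟩ := dn_even G
      obtain ⟨k', hk'⟩ := dn_even (del G {a})
      by_cases hforb : ∀ v x, dg G v = 3 → dg G x = dg G a → ¬ G.Adj v x
      · have hd : ∀ x, dg G x = 0 ∨ dg G x = 3 ∨ dg G x = 4 ∨ dg G x = 5 := by
          intro x
          have h1 := ha x
          have h2 := hv x
          omega
        apply found2 (G := G)
        have hcases : (dg G a = 5 ∧ dn G = 40) ∨ (dg G a = 4 ∧ dn G = 40) ∨
          (dg G a = 4 ∧ dn G = 38) := by omega
        rcases hcases with ⟨h, h'⟩ | ⟨h, h'⟩ | ⟨h, h'⟩ <;> rw [h] at hforb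
        · exact found_of_solve hforb hd h' (Or.inr ⟨rfl, a, h⟩) (Or.inl rfl) solve40_five
        · exact found_of_solve hforb hd h' (Or.inl rfl)
            (Or.inr fun x hx => by have := ha x; omega) solve40
        · exact found_of_solve hforb hd h' (Or.inl rfl)
            (Or.inr fun x hx => by have := ha x; omega) solve38
      · push Not at hforb
        obtain ⟨v, x, hv3, hx, hadj⟩ := hforb
        have h1 := dg_del hadj
        have h2 := dn_del G x
        have h3 : dg G v < dg G a → dn G < 10 * dg G a := by
          intro hlt
          rw [dn_eq_sum]
          refine (Finset.sum_lt_sum (fun u _ => ha u) ⟨v, Finset.mem_univ v, hlt⟩).trans_le ?_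
          simp
        exact apex2_of_apex1 (apex1_low (del G {x}) (by omega) v (by omega))

/-- Every finite simple graph with exactly 10 vertices and at most 20 edges is 2-apex. -/
theorem stmt3 {V : Type*} [Fintype V] (G : SimpleGraph V)
    (hV : Fintype.card V = 10) (hE : G.edgeSet.ncard ≤ 20) : G.TwoApex := by
  classical
  have e : V ≃ Fin 10 := Fintype.equivFinOfCardEq hV
  have hdn : dn (G.comap e.symm) ≤ 40 := by
    have h1 := (G.comap e.symm).sum_degrees_eq_twice_card_edges
    simp only [dg_eq] at h1
    rw [← dn_eq_sum] at h1
    have h2 : (G.comap e.symm).edgeFinset.card = G.edgeFinset.card :=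
      (SimpleGraph.Iso.comap e.symm G).card_edgeFinset_eq
    have h3 : G.edgeSet.ncard = G.edgeFinset.card := by
      rw [← SimpleGraph.coe_edgeFinset, Set.ncard_coe_finset]
    omega
  obtain ⟨a, b, h⟩ := apex2 _ (G.comap e.symm) rfl hdn
  exact twoApex_of e (fun u w huw => by simpa using huw) a b h
end

section
/- Every finite simple graph with exactly 12 vertices and at most 20 edges is 2-apex. -/
namespace TA

section Minors

variable {V V' W : Type*}

def del (G : SimpleGraph V) (S : Set V) : SimpleGraph V where
  Adj x y := G.Adj x y ∧ x ∉ S ∧ y ∉ S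
  symm := ⟨fun _ _ h => ⟨h.1.symm, h.2.2, h.2.1⟩⟩
  loopless := ⟨fun x h => G.loopless.irrefl x h.1⟩

def red (G : SimpleGraph V) (v : V) : SimpleGraph V where
  Adj x y := x ≠ v ∧ y ≠ v ∧ x ≠ y ∧ (G.Adj x y ∨ (G.Adj v x ∧ G.Adj v y))
  symm := ⟨fun _ _ h => ⟨h.2.1, h.1, h.2.2.1.symm, h.2.2.2.imp (fun h => h.symm) (fun h => h.symm)⟩⟩
  loopless := ⟨fun _ h => h.2.2.1 rfl⟩

theorem conn_push {G : SimpleGraph V} {G' : SimpleGraph V'} {s : Set V} (ψ : V → V')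
    (h : ∀ u ∈ s, ∀ u' ∈ s, G.Adj u u' → ψ u = ψ u' ∨ G'.Adj (ψ u) (ψ u'))
    (hc : (G.induce s).Connected) : (G'.induce (Set.image ψ s)).Connected := by
  have key : ∀ (x y : s), (G.induce s).Reachable x y →
      (G'.induce (Set.image ψ s)).Reachable ⟨ψ x, Set.mem_image_of_mem ψ x.2⟩
        ⟨ψ y, Set.mem_image_of_mem ψ y.2⟩ := by
    intro x y hxy
    rw [SimpleGraph.reachable_iff_reflTransGen] at hxy
    induction hxy with
    | refl => exact SimpleGraph.Reachable.refl _
    | @tail b c _ hbc ih =>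
      refine ih.trans ?_
      rcases h b b.2 c c.2 hbc with h1 | h1
      · have : (⟨ψ b, Set.mem_image_of_mem ψ b.2⟩ : Set.image ψ s) = ⟨ψ c, Set.mem_image_of_mem ψ c.2⟩ :=
          Subtype.ext h1
        rw [this]
      · exact SimpleGraph.Adj.reachable h1
  obtain ⟨x⟩ := hc.nonempty
  have : Nonempty (Set.image ψ s) := ⟨⟨ψ x, Set.mem_image_of_mem ψ x.2⟩⟩
  refine SimpleGraph.Connected.mk ?_
  rintro ⟨_, a, ha, rfl⟩ ⟨_, b, hb, rfl⟩
  exact key ⟨a, ha⟩ ⟨b, hb⟩ (hc.preconnected _ _)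

theorem minor_push {F : SimpleGraph W} {G : SimpleGraph V} {G' : SimpleGraph V'} (f : W → Set V)
    (h1 : ∀ w, (f w).Nonempty) (h2 : ∀ w, (G.induce (f w)).Connected)
    (h4 : ∀ ⦃w₁ w₂⦄, F.Adj w₁ w₂ → ∃ v₁ ∈ f w₁, ∃ v₂ ∈ f w₂, G.Adj v₁ v₂)
    (ψ : V → V')
    (h : ∀ w w', ∀ u ∈ f w, ∀ u' ∈ f w', G.Adj u u' → ψ u = ψ u' ∨ G'.Adj (ψ u) (ψ u'))
    (h3 : Pairwise fun w₁ w₂ => Disjoint (Set.image ψ (f w₁)) (Set.image ψ (f w₂))) : F.IsMinor G' := by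
  refine ⟨fun w => Set.image ψ (f w), fun w => (h1 w).image _, fun w => conn_push ψ (h w w) (h2 w), h3, ?_⟩
  intro w₁ w₂ hw
  obtain ⟨a, ha, b, hb, hab⟩ := h4 hw
  refine ⟨ψ a, Set.mem_image_of_mem _ ha, ψ b, Set.mem_image_of_mem _ hb, ?_⟩
  rcases h _ _ a ha b hb hab with h5 | h5
  · exact absurd (Set.mem_image_of_mem ψ hb)
      (h5 ▸ Set.disjoint_left.1 (h3 hw.ne) (Set.mem_image_of_mem ψ ha))
  · exact h5

theorem minor_map {F : SimpleGraph W} {G : SimpleGraph V} {G' : SimpleGraph V'} (ψ : V → V')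
    (hi : Function.Injective ψ) (h : ∀ u u', G.Adj u u' → G'.Adj (ψ u) (ψ u'))
    (hm : F.IsMinor G) : F.IsMinor G' := by
  obtain ⟨f, h1, h2, h3, h4⟩ := hm
  exact minor_push f h1 h2 h4 ψ (fun _ _ u _ u' _ e => Or.inr (h u u' e))
    (fun a b hab => (Set.disjoint_image_iff hi).2 (h3 hab))

theorem planar_map {G : SimpleGraph V} {G' : SimpleGraph V'} (ψ : V → V')
    (hi : Function.Injective ψ) (h : ∀ u u', G.Adj u u' → G'.Adj (ψ u) (ψ u'))
    (hm : G'.IsPlanar) : G.IsPlanar :=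
  ⟨fun h5 => hm.1 (minor_map ψ hi h h5), fun h5 => hm.2 (minor_map ψ hi h h5)⟩

theorem planar_mono {G G' : SimpleGraph V} (h : ∀ u u', G.Adj u u' → G'.Adj u u')
    (hm : G'.IsPlanar) : G.IsPlanar :=
  planar_map id Function.injective_id h hm

/-- In a connected set with more than one element every vertex has a neighbour. -/
theorem exists_nbr {G : SimpleGraph V} {s : Set V} (hc : (G.induce s).Connected) {v : V}
    (hv : v ∈ s) (hs : s ≠ {v}) : ∃ u ∈ s, G.Adj v u := by
  obtain ⟨y, hy, hyv⟩ : ∃ y ∈ s, y ≠ v := by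
    by_contra! hcon
    exact hs (Set.eq_singleton_iff_unique_mem.2 ⟨hv, hcon⟩)
  have hr := hc.preconnected ⟨v, hv⟩ ⟨y, hy⟩
  rw [SimpleGraph.reachable_iff_reflTransGen] at hr
  rcases hr.cases_head with h | ⟨c, h, _⟩
  · exact absurd (congrArg Subtype.val h).symm hyv
  · exact ⟨c, c.2, h⟩

/-- Every vertex has at least three neighbours. -/
def Deg3 (F : SimpleGraph W) : Prop := ∀ w a b, ∃ w', F.Adj w w' ∧ w' ≠ a ∧ w' ≠ b

theorem red_minor {F : SimpleGraph W} (hF : Deg3 F) {G : SimpleGraph V} {v x y : V}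
    (hv : ∀ z, G.Adj v z → z = x ∨ z = y) (hm : F.IsMinor G) : F.IsMinor (red G v) := by
  classical
  obtain ⟨f, h1, h2, h3, h4⟩ := hm
  by_cases hin : ∃ w, v ∈ f w
  · obtain ⟨w0, hw0⟩ := hin
    have hne : f w0 ≠ {v} := by
      intro he
      have hx : ∀ z, ∃ a, ∀ w', z ∈ f w' → w' = a := by
        intro z
        by_cases hz : ∃ a, z ∈ f a
        · obtain ⟨a, ha⟩ := hz
          refine ⟨a, fun w' hw' => ?_⟩
          by_contra hcon
          exact Set.disjoint_left.1 (h3 hcon) hw' ha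
        · exact ⟨w0, fun w' hw' => absurd ⟨w', hw'⟩ hz⟩
      obtain ⟨a, ha⟩ := hx x
      obtain ⟨b, hb⟩ := hx y
      obtain ⟨w', hw', hwa, hwb⟩ := hF w0 a b
      obtain ⟨p, hp, q, hq, hpq⟩ := h4 hw'
      rw [he] at hp
      obtain rfl : p = v := hp
      rcases hv q hpq with rfl | rfl
      · exact hwa (ha _ hq)
      · exact hwb (hb _ hq)
    obtain ⟨u, hu, hvu⟩ := exists_nbr (h2 w0) hw0 hne
    have huv : u ≠ v := hvu.ne'
    refine minor_push f h1 h2 h4 (Function.update id v u) ?_ ?_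
    · intro w w' a ha b hb hab
      by_cases hav : a = v
      · subst hav
        by_cases hbu : b = u
        · left; subst hbu; simp [Function.update, hab.ne']
        · right
          have hba : b ≠ a := hab.ne'
          simp only [Function.update_self, Function.update_of_ne hba, id]
          exact ⟨huv, hba, fun h => hbu h.symm, Or.inr ⟨hvu, hab⟩⟩
      · by_cases hbv : b = v
        · subst hbv
          by_cases hau : a = u
          · left; subst hau; simp [Function.update]
          · right
            simp only [Function.update_self, Function.update_of_ne hav, id]
            exact ⟨hav, huv, hau, Or.inr ⟨hab.symm, hvu⟩⟩
        · right
          simp only [Function.update_of_ne hav, Function.update_of_ne hbv, id]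
          exact ⟨hav, hbv, hab.ne, Or.inl hab⟩
    · have himg : ∀ w z, z ∈ Set.image (Function.update id v u) (f w) → z ∈ f w := by
        rintro w _ ⟨a, ha, rfl⟩
        by_cases hav : a = v
        · subst hav
          have : w = w0 := by
            by_contra hcon
            exact Set.disjoint_left.1 (h3 hcon) ha hw0
          subst this
          simpa using hu
        · simpa [Function.update_of_ne hav] using ha
      intro a b hab
      exact Set.disjoint_left.2 fun z hz hz' =>
        Set.disjoint_left.1 (h3 hab) (himg _ _ hz) (himg _ _ hz')
  · push Not at hin
    refine minor_push f h1 h2 h4 id ?_ ?_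
    · intro w w' a ha b hb hab
      right
      exact ⟨fun h => hin w (h ▸ ha), fun h => hin w' (h ▸ hb), hab.ne, Or.inl hab⟩
    · simpa using h3

theorem deg3_K5 : Deg3 (⊤ : SimpleGraph (Fin 5)) := by
  unfold Deg3; simp only [SimpleGraph.top_adj]; decide

theorem deg3_K33 : Deg3 (completeBipartiteGraph (Fin 3) (Fin 3)) := by
  unfold Deg3; simp only [completeBipartiteGraph_adj]; decide

theorem red_planar {G : SimpleGraph V} {v x y : V}
    (hv : ∀ z, G.Adj v z → z = x ∨ z = y) (hm : (red G v).IsPlanar) : G.IsPlanar :=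
  ⟨fun h => hm.1 (red_minor deg3_K5 hv h), fun h => hm.2 (red_minor deg3_K33 hv h)⟩

/-- `G` becomes planar after deletion of at most `k` vertices. -/
def Apex (k : ℕ) (G : SimpleGraph V) : Prop :=
  ∃ S : Finset V, S.card ≤ k ∧ (del G S).IsPlanar

theorem apex_map {k : ℕ} {G : SimpleGraph V} {G' : SimpleGraph V'} (ψ : V → V')
    (hi : Function.Injective ψ) (h : ∀ u u', G.Adj u u' → G'.Adj (ψ u) (ψ u'))
    (hm : Apex k G') : Apex k G := by
  classical
  obtain ⟨S, hS, hp⟩ := hm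
  refine ⟨S.preimage ψ hi.injOn, ?_, ?_⟩
  · refine le_trans ?_ hS
    rw [← Finset.card_image_of_injective _ hi]
    exact Finset.card_le_card (by intro a; simp; rintro x hx rfl; exact hx)
  · refine planar_map ψ hi ?_ hp
    intro u u' hu
    exact ⟨h _ _ hu.1, by simpa using hu.2.1, by simpa using hu.2.2⟩

theorem apex_red {k : ℕ} {G : SimpleGraph V} {v x y : V}
    (hv : ∀ z, G.Adj v z → z = x ∨ z = y) (hm : Apex k (red G v)) : Apex k G := by
  classical
  obtain ⟨S, hS, hp⟩ := hm
  refine ⟨S.erase v, (Finset.card_erase_le).trans hS, ?_⟩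
  refine red_planar (v := v) (x := x) (y := y) (fun z hz => hv z hz.1) (planar_mono ?_ hp)
  rintro a b ⟨ha, hb, hab, h⟩
  have mem : ∀ c, c ≠ v → c ∉ ((S.erase v : Finset V) : Set V) → c ∉ (S : Set V) := by
    intro c hc h1 h2
    exact h1 (by simpa [hc] using h2)
  rcases h with h | ⟨h, h'⟩
  · exact ⟨⟨ha, hb, hab, Or.inl h.1⟩, mem _ ha h.2.1, mem _ hb h.2.2⟩
  · exact ⟨⟨ha, hb, hab, Or.inr ⟨h.1, h'.1⟩⟩, mem _ ha h.2.2, mem _ hb h'.2.2⟩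

theorem apex_del {k : ℕ} {G : SimpleGraph V} {a : V} (hm : Apex k (del G {a})) :
    Apex (k + 1) G := by
  classical
  obtain ⟨S, hS, hp⟩ := hm
  refine ⟨insert a S, (Finset.card_insert_le _ _).trans (by omega), planar_mono ?_ hp⟩
  intro u u' hu
  obtain ⟨h1, h2, h3⟩ := hu
  simp only [Finset.coe_insert, Set.mem_insert_iff, not_or] at h2 h3
  exact ⟨⟨h1, h2.1, h3.1⟩, h2.2, h3.2⟩

theorem apex_zero {G : SimpleGraph V} (h : G.IsPlanar) : Apex 0 G :=
  ⟨∅, by simp, planar_mono (fun _ _ h => h.1) h⟩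

theorem apex_zero' {G : SimpleGraph V} (h : Apex 0 G) : G.IsPlanar := by
  obtain ⟨S, hS, hp⟩ := h
  have : S = ∅ := by simpa using hS
  subst this
  refine planar_mono (G' := del G ((∅ : Finset V) : Set V)) ?_ hp
  intro u u' h
  exact ⟨h, by simp, by simp⟩

theorem apex_two {V : Type*} {G : SimpleGraph V} (h : Apex 2 G) : G.TwoApex := by
  obtain ⟨S, hS, hp⟩ := h
  refine ⟨S, by rwa [Set.ncard_coe_finset], planar_map Subtype.val Subtype.val_injective ?_ hp⟩
  intro u u' hu
  exact ⟨hu, u.2, u'.2⟩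

end Minors
end TA
namespace TA

/-- A class of vertices: degree, number of unprocessed neighbours, adjacency mask towards
processed vertices, size, index (for processed vertices). -/
structure Cell where
  d : ℕ
  r : ℕ
  m : ℕ
  s : ℕ
  id : ℕ

/-- `force x f = f x`, but evaluates `x` first. -/
noncomputable def force {α : Type} (x : ℕ) (f : ℕ → α) : α :=
  @Nat.rec (fun _ => α) (f 0) (fun k _ => f (Nat.succ k)) x

noncomputable def forceC {α : Type} (l : List Cell) : (List Cell → α) → α :=
  @List.rec Cell (fun _ => (List Cell → α) → α) (fun f => f []) (fun c _ ih f => 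
    force c.d fun d => force c.r fun r => force c.m fun m => force c.s fun s => force c.id fun i =>
      ih fun l => f (⟨d, r, m, s, i⟩ :: l)) l

noncomputable def forceE {α : Type} (l : List (ℕ × ℕ)) : (List (ℕ × ℕ) → α) → α :=
  @List.rec (ℕ × ℕ) (fun _ => (List (ℕ × ℕ) → α) → α) (fun f => f []) (fun c _ ih f => 
    force c.1 fun d => force c.2 fun r => ih fun l => f ((d,r) :: l)) l

noncomputable def bt (m i : ℕ) : ℕ := Nat.land (Nat.shiftRight m i) 1

noncomputable def val (c x : ℕ) : ℕ :=
  bif Nat.ble 3 x then Nat.add x c else 0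

/-- Contribution of a class after deletion of the processed vertex `i`. -/
noncomputable def contrib1 (c i : ℕ) (a : Cell) : ℕ :=
  bif Nat.beq a.id i then 0 else Nat.mul a.s (val c (Nat.sub a.d (bt a.m i)))

/-- Contribution of a class after deletion of the processed vertices `i` and `k`. -/
noncomputable def contrib2 (c i k : ℕ) (a : Cell) : ℕ :=
  bif Nat.beq a.id i then 0 else bif Nat.beq a.id k then 0 else
    Nat.mul a.s (val c (Nat.sub a.d (Nat.add (bt a.m i) (bt a.m k))))

noncomputable def tot (h : Cell → ℕ) (l : List Cell) : ℕ :=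
  @List.rec Cell (fun _ => ℕ) 0 (fun a _ ih => Nat.add (h a) ih) l

noncomputable def consNE (c : Cell) (l : List Cell) : List Cell := bif Nat.beq c.s 0 then l else c :: l

noncomputable def Cell.adj (p k : ℕ) (c : Cell) : Cell := ⟨c.d, Nat.sub c.r 1, Nat.lor c.m (Nat.pow 2 p), k, c.id⟩

noncomputable def Cell.size (k : ℕ) (c : Cell) : Cell := ⟨c.d, c.r, c.m, k, c.id⟩

noncomputable def splits (p : ℕ) : List Cell → ℕ → List (List Cell)
  | [], r => bif Nat.beq r 0 then [[]] else []
  | c :: cs, r =>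
    (List.range (min c.s r + 1)).flatMap fun k =>
      bif Nat.beq c.r 0 && Nat.ble 1 k then [] else
        (splits p cs (Nat.sub r k)).map fun l => consNE (c.size (Nat.sub c.s k)) (consNE (c.adj p k) l)

noncomputable def upd (p m : ℕ) (c : Cell) : Cell := bif Nat.beq (bt m c.id) 1 then c.adj p c.s else c

noncomputable def edges (P : List Cell) : List (ℕ × ℕ) :=
  P.flatMap fun c => ((List.range c.id).filter fun i => Nat.beq (bt c.m i) 1).map fun i => (i, c.id)

noncomputable def search (c1 t1 c2 t2 : ℕ) (leaf : List (ℕ × ℕ) → Bool) :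
    ℕ → ℕ → List Cell → List Cell → Bool
  | 0, _, _, _ => false
  | _ + 1, _, P, [] => forceE (edges P) leaf
  | f + 1, p, P, c :: cs =>
    bif Nat.beq c.s 0 then search c1 t1 c2 t2 leaf f p P cs else
    forceC (P.map (upd p c.m) ++ [⟨c.d, c.r, c.m, 1, p⟩]) fun P2 =>
    (splits p (consNE (c.size (Nat.sub c.s 1)) cs) c.r).all fun l => forceC l fun l =>
      !(Nat.ble t1 (Nat.add (tot (contrib1 c1 p) P2) (tot (contrib1 c1 p) l)) &&
        (List.range p).all fun u => Nat.ble t2 (Nat.add (tot (contrib2 c2 u p) P2) (tot (contrib2 c2 u p) l))) ||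
      search c1 t1 c2 t2 leaf f (Nat.succ p) P2 l

noncomputable def inc (v : ℕ) (e : ℕ × ℕ) : Bool := bif Nat.beq e.1 v then true else Nat.beq e.2 v

noncomputable def nbrs (E : List (ℕ × ℕ)) (v : ℕ) : List ℕ :=
  (E.filter (inc v)).map fun e => bif Nat.beq e.1 v then e.2 else e.1

noncomputable def degE (E : List (ℕ × ℕ)) (v : ℕ) : ℕ :=
  @List.rec (ℕ × ℕ) (fun _ => ℕ) 0 (fun e _ ih => bif inc v e then Nat.succ ih else ih) E

noncomputable def delE (E : List (ℕ × ℕ)) (v : ℕ) : List (ℕ × ℕ) := E.filter fun e => !inc v e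

noncomputable def hasE (E : List (ℕ × ℕ)) (x y : ℕ) : Bool :=
  E.any fun e => (Nat.beq e.1 x && Nat.beq e.2 y) || (Nat.beq e.1 y && Nat.beq e.2 x)

noncomputable def addE (E : List (ℕ × ℕ)) : List ℕ → List (ℕ × ℕ)
  | [x, y] => bif hasE E x y then E else (x, y) :: E
  | _ => E

noncomputable def redE (E : List (ℕ × ℕ)) (v : ℕ) : List (ℕ × ℕ) := addE (delE E v) (nbrs E v)

noncomputable def remE (E : List (ℕ × ℕ)) (x y : ℕ) : List (ℕ × ℕ) :=
  E.filter fun e => !((Nat.beq e.1 x && Nat.beq e.2 y) || (Nat.beq e.1 y && Nat.beq e.2 x))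

/-- Look for a triangle. -/
noncomputable def tri (E : List (ℕ × ℕ)) : Option ((ℕ × ℕ) × ℕ) :=
  E.findSome? fun e => ((nbrs E e.1).find? fun c => hasE E e.2 c).map fun c => (e, c)

/-- No nine edges of `E` form a triangle-free graph. -/
noncomputable def noK33 : ℕ → List (ℕ × ℕ) → Bool
  | 0, E => Nat.ble E.length 8
  | f + 1, E => Nat.ble E.length 8 ||
    match tri E with
    | none => false
    | some t =>
      forceE (remE E t.1.1 t.1.2) (noK33 f) && forceE (remE E t.1.1 t.2) (noK33 f) &&
        forceE (remE E t.1.2 t.2) (noK33 f)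

noncomputable def phi (d : ℕ) : ℕ := (bif Nat.ble 1 d then 1 else 0) + (bif Nat.ble 4 d then 1 else 0)

noncomputable def noK5 (E : List (ℕ × ℕ)) : Bool :=
  Nat.ble E.length 9 || Nat.ble (((List.range 12).map fun v => phi (degE E v)).sum) 9

noncomputable def planE : ℕ → List (ℕ × ℕ) → Bool
  | 0, _ => false
  | f + 1, E =>
    match (List.range 12).find? fun v =>
      Nat.beq (Nat.div (Nat.succ (degE E v)) 2) 1 with
    | some v => forceE (redE E v) fun E => planE f E
    | none => noK5 E && noK33 4 E

noncomputable def leaf1 (E : List (ℕ × ℕ)) : Bool := (List.range 12).any fun a => forceE (delE E a) (planE 13)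

noncomputable def leaf2 (E : List (ℕ × ℕ)) : Bool := (List.range 12).any fun a => forceE (delE E a) leaf1

noncomputable def root (x5 x4 x3 : ℕ) : List Cell :=
  [⟨5, 5, 0, x5, 99⟩, ⟨4, 4, 0, x4, 99⟩, ⟨3, 3, 0, x3, 99⟩, ⟨0, 0, 0, 12 - x3 - x4 - x5, 99⟩]

noncomputable def forSeq (W : ℕ) (b : ℕ → ℕ → ℕ → Bool) : Bool :=
  (List.range 13).all fun x5 => (List.range 13).all fun x4 => (List.range 13).all fun x3 =>
    let w := 5 * x5 + 4 * x4 + 3 * x3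
    !(Nat.ble (x5 + x4 + x3) 12 && Nat.ble w W && Nat.beq (w % 2) 0) || b x5 x4 x3

noncomputable def run1 (x5 x4 x3 : ℕ) : Bool := search 6 50 0 0 leaf1 20 0 [] (root x5 x4 x3)
noncomputable def run2 (x5 x4 x3 : ℕ) : Bool := search 0 29 6 50 leaf2 20 0 [] (root x5 x4 x3)

end TA

namespace TA

section Degrees

open Finset

variable {V W : Type*} [Fintype V]

open Classical in
/-- Degree. -/
noncomputable def dg (G : SimpleGraph V) (x : V) : ℕ := (univ.filter (G.Adj x)).card

theorem val_eq (c x : ℕ) : val c x = if 3 ≤ x then x + c else 0 := by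
  unfold val
  by_cases h : 3 ≤ x
  · rw [Nat.ble_eq_true_of_le h]; simp [h]
  · have : Nat.ble 3 x = false := by
      rw [Bool.eq_false_iff]; intro h'; exact h (Nat.le_of_ble_eq_true h')
    rw [this]; simp [h]

theorem val_mono (c : ℕ) {x y : ℕ} (h : x ≤ y) : val c x ≤ val c y := by
  rw [val_eq, val_eq]; split_ifs <;> omega

theorem dg_zero {G : SimpleGraph V} {x : V} (h : ∀ y, ¬ G.Adj x y) : dg G x = 0 := by
  classical
  unfold dg
  rw [card_eq_zero, filter_eq_empty_iff]
  intro y _; exact h y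

theorem dg_pos {G : SimpleGraph V} {x y : V} (h : G.Adj x y) : dg G x ≠ 0 := by
  classical
  unfold dg
  rw [Ne, card_eq_zero, filter_eq_empty_iff]
  intro h'; exact h' (mem_univ y) h

theorem dg_red_self (G : SimpleGraph V) (v : V) : dg (red G v) v = 0 :=
  dg_zero fun _ h => h.1 rfl

theorem dg_red {G : SimpleGraph V} {v x y : V} (hv : ∀ z, G.Adj v z → z = x ∨ z = y) (u : V) :
    dg (red G v) u ≤ dg G u := by
  classical
  by_cases huv : G.Adj v u
  · obtain ⟨w, hw⟩ : ∃ w, ∀ z, G.Adj v z → z = u ∨ z = w := by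
      rcases hv u huv with rfl | rfl
      · exact ⟨y, hv⟩
      · exact ⟨x, fun z hz => (hv z hz).symm⟩
    have hsub : univ.filter ((red G v).Adj u) ⊆ insert w ((univ.filter (G.Adj u)).erase v) := by
      intro z hz
      obtain ⟨_, h1, h2, h3⟩ := (mem_filter.1 hz).2
      rcases h3 with h3 | h3
      · exact mem_insert_of_mem (mem_erase.2 ⟨h1, by simpa using h3⟩)
      · rcases hw z h3.2 with h4 | h4
        · exact absurd h4.symm h2
        · simp [h4]
    have hm : v ∈ univ.filter (G.Adj u) := by simpa using huv.symm
    unfold dg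
    calc _ ≤ _ := card_le_card hsub
      _ ≤ _ := card_insert_le _ _
      _ = _ := card_erase_add_one hm
  · unfold dg
    apply card_le_card
    intro z hz
    obtain ⟨_, h1, h2, h3⟩ := (mem_filter.1 hz).2
    rcases h3 with h3 | h3
    · simpa using h3
    · exact absurd h3.1 huv

theorem dg_small {G : SimpleGraph V} {v : V} (h : dg G v ≤ 2) :
    ∃ x y, ∀ z, G.Adj v z → z = x ∨ z = y := by
  classical
  unfold dg at h
  generalize hs : univ.filter (G.Adj v) = s at h
  have hmem : ∀ z, G.Adj v z → z ∈ s := fun z hz => by rw [← hs]; simpa using hz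
  have h3 : s.card = 0 ∨ s.card = 1 ∨ s.card = 2 := by omega
  rcases h3 with h3 | h3 | h3
  · rw [card_eq_zero] at h3
    subst h3
    exact ⟨v, v, fun z hz => absurd (hmem z hz) (notMem_empty _)⟩
  · obtain ⟨a, rfl⟩ := card_eq_one.1 h3
    exact ⟨a, a, fun z hz => Or.inl (by simpa using hmem z hz)⟩
  · obtain ⟨a, b, _, rfl⟩ := card_eq_two.1 h3
    exact ⟨a, b, fun z hz => by simpa using hmem z hz⟩

theorem full_red (G : SimpleGraph V) : ∃ G' : SimpleGraph V, (∀ x, dg G' x ≤ dg G x) ∧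
    (∀ x, dg G' x = 0 ∨ 3 ≤ dg G' x) ∧ ∀ k, Apex k G' → Apex k G := by
  generalize hn : ∑ x, dg G x = n
  induction n using Nat.strong_induction_on generalizing G with
  | _ n ih =>
    by_cases h : ∃ v, dg G v ≠ 0 ∧ dg G v ≤ 2
    · obtain ⟨v, h0, h2⟩ := h
      obtain ⟨x, y, hxy⟩ := dg_small h2
      have hlt : ∑ u, dg (red G v) u < n := by
        rw [← hn]
        refine sum_lt_sum (fun i _ => dg_red hxy i) ⟨v, mem_univ _, ?_⟩
        rw [dg_red_self]; omega
      obtain ⟨G', h3, h4, h5⟩ := ih _ hlt (red G v) rfl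
      exact ⟨G', fun u => (h3 u).trans (dg_red hxy u), h4, fun k hk => apex_red hxy (h5 k hk)⟩
    · push Not at h
      refine ⟨G, fun _ => le_rfl, fun x => ?_, fun _ => id⟩
      by_cases h0 : dg G x = 0
      · exact Or.inl h0
      · exact Or.inr (h x h0)

theorem minor_verts [Fintype W] {F : SimpleGraph W} {G : SimpleGraph V} (hm : F.IsMinor G)
    (hF : ∀ w, ∃ w', F.Adj w w') : Fintype.card W ≤ (univ.filter fun x => dg G x ≠ 0).card := by
  classical
  obtain ⟨f, h1, h2, h3, h4⟩ := hm
  have : ∀ w, ∃ x ∈ f w, dg G x ≠ 0 := by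
    intro w
    obtain ⟨w', hw⟩ := hF w
    obtain ⟨a, ha, b, hb, hab⟩ := h4 hw
    exact ⟨a, ha, dg_pos hab⟩
  choose g hg hg' using this
  rw [← Finset.card_univ]
  refine card_le_card_of_injOn g (fun w _ => by simpa using hg' w) ?_
  intro a _ b _ hab
  by_contra hne
  exact Set.disjoint_left.1 (h3 hne) (hg a) (hab ▸ hg b)

theorem sum_dg (G : SimpleGraph V) [DecidableRel G.Adj] :
    ∑ x, dg G x = (univ.filter fun p : V × V => G.Adj p.1 p.2).card := by
  classical
  unfold dg
  simp only [card_filter]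
  rw [Fintype.sum_prod_type]
  exact sum_congr rfl fun x _ => sum_congr rfl fun y _ => by congr

open Classical in
theorem minor_edges [Fintype W] {F : SimpleGraph W} {G : SimpleGraph V} (hm : F.IsMinor G) :
    (univ.filter fun p : W × W => F.Adj p.1 p.2).card ≤ ∑ x, dg G x := by
  rw [sum_dg]
  obtain ⟨f, h1, h2, h3, h4⟩ := hm
  have : ∀ p : W × W, ∃ q : V × V, F.Adj p.1 p.2 → q.1 ∈ f p.1 ∧ q.2 ∈ f p.2 ∧ G.Adj q.1 q.2 := by
    intro p
    by_cases hp : F.Adj p.1 p.2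
    · obtain ⟨a, ha, b, hb, hab⟩ := h4 hp
      exact ⟨(a, b), fun _ => ⟨ha, hb, hab⟩⟩
    · obtain ⟨a, _⟩ := h1 p.1
      exact ⟨(a, a), fun h => absurd h hp⟩
  choose g hg using this
  refine card_le_card_of_injOn g (fun p hp => ?_) ?_
  · have := hg p (by simpa using hp)
    simpa using this.2.2
  · intro p hp q hq hpq
    have h5 := hg p (by simpa using hp)
    have h6 := hg q (by simpa using hq)
    rw [← hpq] at h6
    apply Prod.ext
    · by_contra hne
      exact Set.disjoint_left.1 (h3 hne) h5.1 h6.1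
    · by_contra hne
      exact Set.disjoint_left.1 (h3 hne) h5.2.1 h6.2.1

theorem K5_edges {G : SimpleGraph V} (hm : (⊤ : SimpleGraph (Fin 5)).IsMinor G) :
    20 ≤ ∑ x, dg G x := by
  refine le_trans (le_of_eq ?_) (minor_edges hm)
  have : (univ.filter fun p : Fin 5 × Fin 5 => p.1 ≠ p.2).card = 20 := by decide
  rw [← this]
  congr

theorem sum_val {G : SimpleGraph V} (h : ∀ x, dg G x = 0 ∨ 3 ≤ dg G x) (c : ℕ) :
    ∑ x, val c (dg G x) = ∑ x, dg G x + c * (univ.filter fun x => dg G x ≠ 0).card := by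
  rw [card_filter, mul_sum, ← sum_add_distrib]
  refine sum_congr rfl fun x _ => ?_
  rw [val_eq]
  rcases h x with h | h
  · simp [h]
  · rw [if_pos h, if_pos (by omega)]; simp

theorem T0 {G : SimpleGraph V} (hG : ¬ G.IsPlanar) : 50 ≤ ∑ x, val 6 (dg G x) := by
  obtain ⟨G', h1, h2, h3⟩ := full_red G
  have hG' : ¬ G'.IsPlanar := fun h => hG (apex_zero' (h3 0 (apex_zero h)))
  refine le_trans ?_ (sum_le_sum fun x _ => val_mono 6 (h1 x))
  have h9 : 9 * (univ.filter fun x => dg G' x ≠ 0).card ≤ ∑ x, val 6 (dg G' x) := by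
    rw [card_filter, mul_sum]
    refine sum_le_sum fun x _ => ?_
    rw [val_eq]
    rcases h2 x with h | h
    · simp [h]
    · rw [if_pos h, if_pos (by omega)]; omega
  by_cases h5 : (⊤ : SimpleGraph (Fin 5)).IsMinor G'
  · have e := K5_edges h5
    have n := minor_verts h5 (by simp only [SimpleGraph.top_adj]; decide)
    rw [sum_val h2]
    simp only [Fintype.card_fin] at n
    omega
  · have h33 : (completeBipartiteGraph (Fin 3) (Fin 3)).IsMinor G' := by
      by_contra h; exact hG' ⟨h5, h⟩
    have n := minor_verts h33 (by simp only [completeBipartiteGraph_adj]; decide)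
    simp only [Fintype.card_sum, Fintype.card_fin] at n
    omega

end Degrees

end TA

namespace TA

section Leaves

theorem force_eq {α : Type} (x : ℕ) (f : ℕ → α) : force x f = f x := by
  cases x <;> rfl

theorem forceE_eq {α : Type} (l : List (ℕ × ℕ)) (f : List (ℕ × ℕ) → α) : forceE l f = f l := by
  induction l generalizing f with
  | nil => rfl
  | cons c l ih =>
    have : forceE (c :: l) f =
      force c.1 fun d => force c.2 fun r => forceE l fun l => f ((d, r) :: l) := rfl
    rw [this, force_eq, force_eq, ih]

theorem forceC_eq {α : Type} (l : List Cell) (f : List Cell → α) : forceC l f = f l := by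
  induction l generalizing f with
  | nil => rfl
  | cons c l ih =>
    have : forceC (c :: l) f = force c.d fun d => force c.r fun r => force c.m fun m =>
      force c.s fun s => force c.id fun i => forceC l fun l => f (⟨d, r, m, s, i⟩ :: l) := rfl
    rw [this, force_eq, force_eq, force_eq, force_eq, force_eq, ih]

theorem beq_iff (a b : ℕ) : Nat.beq a b = true ↔ a = b := by
  constructor
  · exact Nat.eq_of_beq_eq_true
  · rintro rfl; exact Nat.beq_refl a

theorem ble_iff (a b : ℕ) : Nat.ble a b = true ↔ a ≤ b :=
  ⟨Nat.le_of_ble_eq_true, Nat.ble_eq_true_of_le⟩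

theorem beq_dec (a b : ℕ) : Nat.beq a b = decide (a = b) := by
  rw [Bool.eq_iff_iff, beq_iff]; simp

theorem ble_dec (a b : ℕ) : Nat.ble a b = decide (a ≤ b) := by
  rw [Bool.eq_iff_iff, ble_iff]; simp

theorem inc_iff (v : ℕ) (e : ℕ × ℕ) : inc v e = true ↔ e.1 = v ∨ e.2 = v := by
  unfold inc; rw [beq_dec, beq_dec]
  by_cases h : e.1 = v <;> simp [h]

/-- Graph with a given list of edges. -/
def toG (E : List (ℕ × ℕ)) : SimpleGraph (Fin 12) where
  Adj i j := i ≠ j ∧ ((i.val, j.val) ∈ E ∨ (j.val, i.val) ∈ E)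
  symm := ⟨fun _ _ h => ⟨h.1.symm, h.2.symm⟩⟩
  loopless := ⟨fun _ h => h.1 rfl⟩

theorem degE_eq (E : List (ℕ × ℕ)) (v : ℕ) : degE E v = (nbrs E v).length := by
  unfold nbrs
  rw [List.length_map]
  induction E with
  | nil => rfl
  | cons e E ih =>
    have : degE (e :: E) v = bif inc v e then Nat.succ (degE E v) else degE E v := rfl
    rw [this, ih]
    cases h : inc v e <;> simp [h]

theorem mem_nbrs {E : List (ℕ × ℕ)} {v z : ℕ} (h : (v, z) ∈ E ∨ (z, v) ∈ E) (hne : v ≠ z) :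
    z ∈ nbrs E v := by
  unfold nbrs
  rw [List.mem_map]
  rcases h with h | h
  · exact ⟨(v, z), List.mem_filter.2 ⟨h, (inc_iff _ _).2 (Or.inl rfl)⟩, by simp⟩
  · refine ⟨(z, v), List.mem_filter.2 ⟨h, (inc_iff _ _).2 (Or.inr rfl)⟩, ?_⟩
    simp [beq_dec, hne.symm]

theorem toG_nbrs {E : List (ℕ × ℕ)} {v z : Fin 12} (h : (toG E).Adj v z) :
    z.val ∈ nbrs E v.val :=
  mem_nbrs h.2 fun h' => h.1 (Fin.ext h')

theorem dg_toG (E : List (ℕ × ℕ)) (v : Fin 12) : dg (toG E) v ≤ degE E v.val := by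
  classical
  rw [degE_eq]
  refine le_trans ?_ (List.toFinset_card_le _)
  unfold dg
  refine Finset.card_le_card_of_injOn Fin.val (fun z hz => ?_) (Fin.val_injective.injOn)
  have := toG_nbrs (by simpa using hz)
  simpa using this

theorem mem_delE {E : List (ℕ × ℕ)} {v : ℕ} {e : ℕ × ℕ} (h : e ∈ E) (h1 : e.1 ≠ v) (h2 : e.2 ≠ v) :
    e ∈ delE E v := by
  unfold delE
  rw [List.mem_filter]
  refine ⟨h, ?_⟩
  rw [Bool.not_eq_true', Bool.eq_false_iff, Ne, inc_iff]
  tauto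

theorem hasE_iff (E : List (ℕ × ℕ)) (x y : ℕ) :
    hasE E x y = true ↔ (x, y) ∈ E ∨ (y, x) ∈ E := by
  unfold hasE
  simp only [List.any_eq_true, Bool.or_eq_true, Bool.and_eq_true, beq_iff]
  constructor
  · rintro ⟨⟨a, b⟩, h, ⟨rfl, rfl⟩ | ⟨rfl, rfl⟩⟩
    · exact Or.inl h
    · exact Or.inr h
  · rintro (h | h)
    · exact ⟨_, h, Or.inl ⟨rfl, rfl⟩⟩
    · exact ⟨_, h, Or.inr ⟨rfl, rfl⟩⟩

theorem addE_sub (E : List (ℕ × ℕ)) (l : List ℕ) : ∀ e ∈ E, e ∈ addE E l := by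
  intro e he
  unfold addE
  split
  · cases hasE E _ _
    · exact List.mem_cons_of_mem _ he
    · exact he
  · exact he

theorem addE_two (E : List (ℕ × ℕ)) (x y : ℕ) :
    (x, y) ∈ addE E [x, y] ∨ (y, x) ∈ addE E [x, y] := by
  unfold addE
  cases h : hasE E x y
  · left; simp [h]
  · simpa [h] using (hasE_iff _ _ _).1 h

theorem two_mem {l : List ℕ} (hl : l.length ≤ 2) {a b : ℕ} (ha : a ∈ l) (hb : b ∈ l) (hab : a ≠ b) :
    l = [a, b] ∨ l = [b, a] := by
  match l, hl with
  | [], _ => simp at ha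
  | [x], _ => simp at ha hb; omega
  | [x, y], _ =>
    simp at ha hb
    rcases ha with rfl | rfl <;> rcases hb with rfl | rfl <;> simp_all

theorem redE_planar {E : List (ℕ × ℕ)} {v : ℕ} (hv : v < 12) (hd : degE E v ≤ 2)
    (h : (toG (redE E v)).IsPlanar) : (toG E).IsPlanar := by
  rw [degE_eq] at hd
  obtain ⟨x, y, hxy⟩ : ∃ x y : Fin 12, ∀ z, (toG E).Adj ⟨v, hv⟩ z → z = x ∨ z = y := by
    obtain ⟨x, y, hxy⟩ : ∃ x y : ℕ, ∀ z ∈ nbrs E v, z = x ∨ z = y := by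
      match h3 : nbrs E v, hd with
      | [], _ => exact ⟨0, 0, by simp⟩
      | [x], _ => exact ⟨x, x, by simp⟩
      | [x, y], _ => exact ⟨x, y, by simp⟩
    refine ⟨Fin.ofNat 12 x, Fin.ofNat 12 y, fun z hz => ?_⟩
    have h1 := hxy _ (toG_nbrs hz)
    have hz12 := z.isLt
    refine h1.imp (fun h => ?_) (fun h => ?_)
    · subst h; simp
    · subst h; simp
  refine red_planar hxy (planar_mono ?_ h)
  rintro a b ⟨ha, hb, hab, h1⟩
  have ha' : a.val ≠ v := fun h => ha (Fin.ext h)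
  have hb' : b.val ≠ v := fun h => hb (Fin.ext h)
  refine ⟨hab, ?_⟩
  rcases h1 with h1 | ⟨h1, h2⟩
  · exact h1.2.imp (fun h => addE_sub _ _ _ (mem_delE h ha' hb'))
      (fun h => addE_sub _ _ _ (mem_delE h hb' ha'))
  · unfold redE
    rcases two_mem hd (toG_nbrs h1) (toG_nbrs h2) (fun h => hab (Fin.ext h)) with h3 | h3
    · rw [h3]; exact addE_two _ _ _
    · rw [h3]; exact (addE_two _ _ _).symm

theorem phi_mono {a b : ℕ} (h : a ≤ b) : phi a ≤ phi b := by
  unfold phi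
  simp only [ble_dec, Bool.cond_decide]
  split_ifs <;> omega

theorem phi_K5 {V : Type*} [Fintype V] {G : SimpleGraph V}
    (hm : (⊤ : SimpleGraph (Fin 5)).IsMinor G) : 10 ≤ ∑ x, phi (dg G x) := by
  classical
  obtain ⟨f, h1, h2, h3, h4⟩ := hm
  have key : ∀ w, 2 ≤ ∑ x ∈ (f w).toFinset, phi (dg G x) := by
    intro w
    obtain ⟨v, hv⟩ := h1 w
    by_cases hs : f w = {v}
    · have h5 : ∀ w', ∃ y, w ≠ w' → y ∈ f w' ∧ G.Adj v y := by
        intro w'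
        by_cases hw : w = w'
        · exact ⟨v, fun h => absurd hw h⟩
        · obtain ⟨a, ha, b, hb, hab⟩ := h4 (show (⊤ : SimpleGraph (Fin 5)).Adj w w' from hw)
          rw [hs] at ha
          obtain rfl : a = v := ha
          exact ⟨b, fun _ => ⟨hb, hab⟩⟩
      choose g hg using h5
      have h6 : 4 ≤ dg G v := by
        have : (Finset.univ.erase w).card = 4 := by simp
        rw [← this]
        unfold dg
        refine Finset.card_le_card_of_injOn g (fun a ha => ?_) ?_
        · have := hg a (by simpa [eq_comm] using ha)
          simpa using this.2
        · intro a ha b hb hab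
          by_contra hne
          exact Set.disjoint_left.1 (h3 hne) (hg a (by simpa [eq_comm] using ha)).1
            (hab ▸ (hg b (by simpa [eq_comm] using hb)).1)
      have h7 : (f w).toFinset = {v} := by simp [hs]
      rw [h7, Finset.sum_singleton]
      exact (phi_mono h6)
    · have h5 : ∀ x ∈ (f w).toFinset, 1 ≤ phi (dg G x) := by
        intro x hx
        have hx' : x ∈ f w := by simpa using hx
        obtain ⟨u, hu, hxu⟩ : ∃ u ∈ f w, G.Adj x u := by
          by_cases hsx : f w = {x}
          · rw [hsx] at hv
            obtain rfl : v = x := hv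
            exact absurd hsx hs
          · exact exists_nbr (h2 w) hx' hsx
        have := dg_pos hxu
        exact phi_mono (show 1 ≤ dg G x by omega)
      have h6 : 2 ≤ (f w).toFinset.card := by
        by_contra hlt
        have hv' : v ∈ (f w).toFinset := by simpa using hv
        have : (f w).toFinset.card = 1 := by
          have := Finset.card_pos.2 ⟨v, hv'⟩
          omega
        obtain ⟨a, ha⟩ := Finset.card_eq_one.1 this
        have hva : v = a := by rw [ha] at hv'; simpa using hv'
        apply hs
        have := congrArg (fun s : Finset V => (s : Set V)) ha
        simpa [hva] using this
      calc 2 ≤ (f w).toFinset.card := h6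
        _ = ∑ x ∈ (f w).toFinset, 1 := by simp
        _ ≤ _ := Finset.sum_le_sum h5
  calc 10 = ∑ w : Fin 5, 2 := by simp
    _ ≤ ∑ w : Fin 5, ∑ x ∈ (f w).toFinset, phi (dg G x) := Finset.sum_le_sum fun w _ => key w
    _ = ∑ x ∈ Finset.univ.biUnion fun w => (f w).toFinset, phi (dg G x) := by
      rw [Finset.sum_biUnion]
      intro a _ b _ hab
      simpa [Function.onFun, Set.disjoint_toFinset] using h3 hab
    _ ≤ _ := Finset.sum_le_sum_of_subset (Finset.subset_univ _)

theorem sum_dg_toG (E : List (ℕ × ℕ)) : ∑ x, dg (toG E) x ≤ 2 * E.length := by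
  classical
  rw [sum_dg]
  have h : (E ++ E.map Prod.swap).toFinset.card ≤ 2 * E.length := by
    refine (List.toFinset_card_le _).trans ?_
    simp; omega
  refine le_trans ?_ h
  refine Finset.card_le_card_of_injOn (fun p => (p.1.val, p.2.val)) (fun p hp => ?_) ?_
  · have hp' : (toG E).Adj p.1 p.2 := by simpa using hp
    have := hp'.2
    simpa using this
  · rintro ⟨a, b⟩ _ ⟨c, d⟩ _ h
    simp only [Prod.mk.injEq] at h
    exact Prod.ext (Fin.ext h.1) (Fin.ext h.2)

theorem noK5_sound {E : List (ℕ × ℕ)} (h : noK5 E = true) :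
    ¬ (⊤ : SimpleGraph (Fin 5)).IsMinor (toG E) := by
  intro hm
  unfold noK5 at h
  rw [Bool.or_eq_true, ble_iff, ble_iff] at h
  rcases h with h | h
  · have := K5_edges hm
    have := sum_dg_toG E
    omega
  · have h1 := phi_K5 hm
    have h2 : ∑ x, phi (dg (toG E) x) ≤ ∑ x : Fin 12, phi (degE E x.val) :=
      Finset.sum_le_sum fun x _ => phi_mono (dg_toG E x)
    rw [Fin.sum_univ_eq_sum_range (fun v => phi (degE E v)) 12] at h2
    have h3 : ((List.range 12).map fun v => phi (degE E v)).sum =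
        ∑ v ∈ Finset.range 12, phi (degE E v) := rfl
    omega

/-- Colours joined in K33. -/
def cross (a b : Option (Fin 3 ⊕ Fin 3)) (i j : Fin 3) : Prop :=
  (a = some (Sum.inl i) ∧ b = some (Sum.inr j)) ∨ (b = some (Sum.inl i) ∧ a = some (Sum.inr j))

/-- Weak form of containing a K33 minor. -/
def Q33 (c : ℕ → Option (Fin 3 ⊕ Fin 3)) (E : List (ℕ × ℕ)) : Prop :=
  ∀ i j : Fin 3, ∃ e ∈ E, cross (c e.1) (c e.2) i j

theorem Q33_length {c : ℕ → Option (Fin 3 ⊕ Fin 3)} {E : List (ℕ × ℕ)} (h : Q33 c E) :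
    9 ≤ E.length := by
  classical
  choose g hg hc using h
  refine le_trans ?_ (List.toFinset_card_le E)
  have : (Finset.univ : Finset (Fin 3 × Fin 3)).card = 9 := by decide
  rw [← this]
  refine Finset.card_le_card_of_injOn (fun p => g p.1 p.2) (fun p _ => ?_) ?_
  · simpa using hg p.1 p.2
  · rintro ⟨a, b⟩ _ ⟨a', b'⟩ _ hab
    have h1 := hc a b
    have h2 := hc a' b'
    simp only at hab
    rw [hab] at h1
    unfold cross at h1 h2
    rcases h1 with ⟨h1, h3⟩ | ⟨h1, h3⟩ <;> rcases h2 with ⟨h2, h4⟩ | ⟨h2, h4⟩ <;>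
      rw [h1] at * <;> rw [h3] at * <;> simp_all

theorem Q33_rem {c : ℕ → Option (Fin 3 ⊕ Fin 3)} {E : List (ℕ × ℕ)} (h : Q33 c E) {x y : ℕ}
    (hxy : ∀ i j, ¬ cross (c x) (c y) i j) : Q33 c (remE E x y) := by
  intro i j
  obtain ⟨e, he, hc⟩ := h i j
  refine ⟨e, ?_, hc⟩
  unfold remE
  rw [List.mem_filter]
  refine ⟨he, ?_⟩
  rw [Bool.not_eq_true', Bool.eq_false_iff]
  intro h'
  simp only [Bool.or_eq_true, Bool.and_eq_true, beq_iff] at h'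
  rcases h' with ⟨rfl, rfl⟩ | ⟨rfl, rfl⟩
  · exact hxy i j hc
  · exact hxy i j (Or.symm hc)

theorem Q33_tri {c : ℕ → Option (Fin 3 ⊕ Fin 3)} {E : List (ℕ × ℕ)} (h : Q33 c E) (x y z : ℕ) :
    Q33 c (remE E x y) ∨ Q33 c (remE E x z) ∨ Q33 c (remE E y z) := by
  by_cases h1 : ∀ i j, ¬ cross (c x) (c y) i j
  · exact Or.inl (Q33_rem h h1)
  by_cases h2 : ∀ i j, ¬ cross (c x) (c z) i j
  · exact Or.inr (Or.inl (Q33_rem h h2))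
  refine Or.inr (Or.inr (Q33_rem h ?_))
  intro i j h3
  push Not at h1 h2
  obtain ⟨i1, j1, h1⟩ := h1
  obtain ⟨i2, j2, h2⟩ := h2
  unfold cross at h1 h2 h3
  rcases h1 with ⟨h1, h4⟩ | ⟨h1, h4⟩ <;> rcases h2 with ⟨h2, h5⟩ | ⟨h2, h5⟩ <;>
    simp_all

theorem noK33_Q {c : ℕ → Option (Fin 3 ⊕ Fin 3)} (f : ℕ) {E : List (ℕ × ℕ)}
    (h : noK33 f E = true) : ¬ Q33 c E := by
  induction f generalizing E with
  | zero =>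
    intro hq
    have := Q33_length hq
    have h' : Nat.ble E.length 8 = true := h
    rw [ble_iff] at h'
    omega
  | succ f ih =>
    intro hq
    unfold noK33 at h
    rw [Bool.or_eq_true, ble_iff] at h
    rcases h with h | h
    · have := Q33_length hq
      omega
    · split at h
      · simp at h
      · rename_i t _
        simp only [forceE_eq, Bool.and_eq_true] at h
        rcases Q33_tri hq t.1.1 t.1.2 t.2 with h' | h' | h'
        · exact ih h.1.1 h'
        · exact ih h.1.2 h'
        · exact ih h.2 h'

theorem noK33_sound {f : ℕ} {E : List (ℕ × ℕ)} (h : noK33 f E = true) :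
    ¬ (completeBipartiteGraph (Fin 3) (Fin 3)).IsMinor (toG E) := by
  classical
  rintro ⟨f, h1, h2, h3, h4⟩
  have hcol : ∃ c : ℕ → Option (Fin 3 ⊕ Fin 3), ∀ w (v : Fin 12), v ∈ f w → c v.val = some w := by
    have : ∀ n : ℕ, ∃ o : Option (Fin 3 ⊕ Fin 3), ∀ w (v : Fin 12), v ∈ f w → v.val = n → o = some w := by
      intro n
      by_cases hn : ∃ (v : Fin 12) (w : _), v ∈ f w ∧ v.val = n
      · obtain ⟨v, w, hv, rfl⟩ := hn
        refine ⟨some w, fun w' v' hv' he => ?_⟩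
        obtain rfl : v' = v := Fin.ext he
        by_contra hne
        exact Set.disjoint_left.1 (h3 (fun h => hne (congrArg some h))) hv hv'
      · exact ⟨none, fun w v hv he => absurd ⟨v, w, hv, he⟩ hn⟩
    choose c hc using this
    exact ⟨c, fun w v hv => hc _ w v hv rfl⟩
  obtain ⟨c, hc⟩ := hcol
  refine noK33_Q (c := c) _ h ?_
  intro i j
  obtain ⟨a, ha, b, hb, hab⟩ := h4 (show (completeBipartiteGraph (Fin 3) (Fin 3)).Adj
    (Sum.inl i) (Sum.inr j) by simp)
  rcases hab.2 with he | he
  · exact ⟨_, he, Or.inl ⟨hc _ _ ha, hc _ _ hb⟩⟩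
  · exact ⟨_, he, Or.inr ⟨hc _ _ ha, hc _ _ hb⟩⟩

theorem planE_sound (f : ℕ) {E : List (ℕ × ℕ)} (h : planE f E = true) : (toG E).IsPlanar := by
  induction f generalizing E with
  | zero => simp [planE] at h
  | succ f ih =>
    unfold planE at h
    split at h
    · rename_i v hv
      rw [forceE_eq] at h
      have h1 := List.mem_of_find?_eq_some hv
      have h2 := List.find?_some hv
      rw [beq_iff] at h2
      have h3 : (degE E v + 1) / 2 = 1 := h2
      exact redE_planar (List.mem_range.1 h1) (by omega) (ih h)
    · rw [Bool.and_eq_true] at h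
      exact ⟨noK5_sound h.1, noK33_sound h.2⟩

theorem del_toG {E : List (ℕ × ℕ)} {k a : ℕ} (ha : a < 12) (h : Apex k (toG (delE E a))) :
    Apex (k + 1) (toG E) := by
  refine apex_del (a := ⟨a, ha⟩) (apex_map id Function.injective_id ?_ h)
  rintro u v ⟨h1, h2, h3⟩
  have hu : u.val ≠ a := fun h => h2 (Fin.ext h)
  have hv : v.val ≠ a := fun h => h3 (Fin.ext h)
  exact ⟨h1.1, h1.2.imp (fun h => mem_delE h hu hv) (fun h => mem_delE h hv hu)⟩

theorem leaf1_sound {E : List (ℕ × ℕ)} (h : leaf1 E = true) : Apex 1 (toG E) := by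
  unfold leaf1 at h
  obtain ⟨a, ha, h⟩ := List.any_eq_true.1 h
  rw [forceE_eq] at h
  exact del_toG (List.mem_range.1 ha) (apex_zero (planE_sound _ h))

theorem leaf2_sound {E : List (ℕ × ℕ)} (h : leaf2 E = true) : Apex 2 (toG E) := by
  unfold leaf2 at h
  obtain ⟨a, ha, h⟩ := List.any_eq_true.1 h
  rw [forceE_eq] at h
  exact del_toG (List.mem_range.1 ha) (leaf1_sound h)

end Leaves

end TA

namespace TA

section Engine

set_option linter.unusedSectionVars false

open Classical

variable {V : Type*} [Fintype V]

theorem bt_eq (m i : ℕ) : bt m i = if m.testBit i then 1 else 0 := by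
  have h : bt m i = (m >>> i) % 2 := Nat.and_one_is_mod _
  rw [h, Nat.testBit_eq_decide_div_mod_eq, Nat.shiftRight_eq_div_pow]
  by_cases h' : m / 2 ^ i % 2 = 1
  · simp [h']
  · simp [h']; omega

theorem bt_one (m i : ℕ) : bt m i = 1 ↔ m.testBit i = true := by
  rw [bt_eq]; split_ifs with h <;> simp [h]

/-- The mask `m` describes the adjacency of `x` to the list `vs`. -/
def Msk (G : SimpleGraph V) (vs : List V) (m : ℕ) (x : V) : Prop :=
  ∀ i, bt m i = 1 ↔ ∃ u, vs[i]? = some u ∧ G.Adj u x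

theorem Msk_nadj {G : SimpleGraph V} {vs : List V} {m : ℕ} {x v : V} (h : Msk G vs m x)
    (hv : ¬ G.Adj v x) : Msk G (vs ++ [v]) m x := by
  intro i
  rw [h i]
  constructor
  · rintro ⟨u, hu, hux⟩
    refine ⟨u, ?_, hux⟩
    have hi : i < vs.length := (List.getElem?_eq_some_iff.1 hu).1
    rw [List.getElem?_append_left hi]; exact hu
  · rintro ⟨u, hu, hux⟩
    by_cases hi : i < vs.length
    · rw [List.getElem?_append_left hi] at hu; exact ⟨u, hu, hux⟩
    · rw [List.getElem?_append_right (by omega)] at hu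
      have := List.mem_of_getElem? hu
      simp at this
      subst this; exact absurd hux hv

theorem Msk_adj {G : SimpleGraph V} {vs : List V} {m : ℕ} {x v : V} (h : Msk G vs m x)
    (hv : G.Adj v x) : Msk G (vs ++ [v]) (Nat.lor m (Nat.pow 2 vs.length)) x := by
  intro i
  have h1 : bt (Nat.lor m (Nat.pow 2 vs.length)) i = 1 ↔ bt m i = 1 ∨ vs.length = i := by
    rw [bt_one, bt_one]
    change (m ||| 2 ^ vs.length).testBit i = true ↔ _
    rw [Nat.testBit_or, Nat.testBit_two_pow]
    simp
  rw [h1, h i]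
  constructor
  · rintro (⟨u, hu, hux⟩ | rfl)
    · refine ⟨u, ?_, hux⟩
      have hi : i < vs.length := (List.getElem?_eq_some_iff.1 hu).1
      rw [List.getElem?_append_left hi]; exact hu
    · exact ⟨v, by simp, hv⟩
  · rintro ⟨u, hu, hux⟩
    have hlen : i < (vs ++ [v]).length := (List.getElem?_eq_some_iff.1 hu).1
    by_cases hi : i < vs.length
    · rw [List.getElem?_append_left hi] at hu; exact Or.inl ⟨u, hu, hux⟩
    · right; simp at hlen; omega

def RU (G : SimpleGraph V) (vs : List V) (C : List V) (c : Cell) : Prop :=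
  c.s = C.length ∧ c.id = 99 ∧ ∀ x ∈ C, dg G x = c.d ∧ Msk G vs c.m x ∧
    vs.countP (fun y => decide (G.Adj x y)) + c.r = c.d

def RP (G : SimpleGraph V) (vs : List V) (x : V) (c : Cell) : Prop :=
  c.s = 1 ∧ vs[c.id]? = some x ∧ dg G x = c.d ∧ Msk G vs c.m x

def consL (C : List V) (Cs : List (List V)) : List (List V) := if C.length = 0 then Cs else C :: Cs

theorem consL_flatten (C : List V) (Cs : List (List V)) :
    (consL C Cs).flatten = C ++ Cs.flatten := by
  unfold consL
  split_ifs with h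
  · rw [List.length_eq_zero_iff.1 h]; rfl
  · rfl

theorem consNE_RU {G : SimpleGraph V} {vs C : List V} {c : Cell} {Cs : List (List V)}
    {l : List Cell} (h : RU G vs C c) (hl : List.Forall₂ (RU G vs) Cs l) :
    List.Forall₂ (RU G vs) (consL C Cs) (consNE c l) := by
  unfold consL consNE
  rw [beq_dec, h.1]
  by_cases h0 : C.length = 0
  · simpa [h0] using hl
  · simp only [h0, decide_false, cond_false, if_false]
    exact List.Forall₂.cons h hl

/-- Split each class according to adjacency to `v`. -/
noncomputable def spl (G : SimpleGraph V) (v : V) : List (List V) → List (List V)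
  | [] => []
  | D :: Ds => consL (D.filter fun x => !decide (G.Adj v x))
      (consL (D.filter fun x => decide (G.Adj v x)) (spl G v Ds))

theorem spl_perm (G : SimpleGraph V) (v : V) (Ds : List (List V)) :
    (spl G v Ds).flatten.Perm Ds.flatten := by
  induction Ds with
  | nil => exact List.Perm.refl _
  | cons D Ds ih =>
    unfold spl
    rw [consL_flatten, consL_flatten, List.flatten_cons, ← List.append_assoc]
    refine List.Perm.append ?_ ih
    refine List.Perm.trans List.perm_append_comm ?_
    exact List.filter_append_perm _ _

theorem countP_le_dg {G : SimpleGraph V} {l : List V} (hl : l.Nodup) (x : V) :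
    l.countP (fun y => decide (G.Adj x y)) ≤ dg G x := by
  rw [List.countP_eq_length_filter, ← List.toFinset_card_of_nodup (hl.filter _)]
  unfold dg
  apply Finset.card_le_card
  intro y hy
  simp at hy
  simpa using hy.2

theorem countP_eq_dg {G : SimpleGraph V} {l : List V} (hl : l.Nodup) (hc : ∀ x, x ∈ l) (x : V) :
    l.countP (fun y => decide (G.Adj x y)) = dg G x := by
  rw [List.countP_eq_length_filter, ← List.toFinset_card_of_nodup (hl.filter _)]
  unfold dg
  congr 1
  ext y
  simp [hc]

theorem splits_sound {G : SimpleGraph V} {vs : List V} {v : V} (hn : (vs ++ [v]).Nodup)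
    {Ds : List (List V)} {us : List Cell} (h : List.Forall₂ (RU G vs) Ds us) (r : ℕ)
    (hr : r = Ds.flatten.countP fun y => decide (G.Adj v y)) :
    ∃ l ∈ splits vs.length us r, List.Forall₂ (RU G (vs ++ [v])) (spl G v Ds) l := by
  induction h generalizing r with
  | nil =>
    refine ⟨[], ?_, List.Forall₂.nil⟩
    simp at hr
    subst hr
    simp [splits]
  | @cons D c Ds us hD hDs ih =>
    rw [List.flatten_cons, List.countP_append] at hr
    obtain ⟨l, hl, hl'⟩ := ih (r - D.countP fun y => decide (G.Adj v y)) (by omega)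
    have hk : D.countP (fun y => decide (G.Adj v y)) ≤ D.length := List.countP_le_length
    generalize hkk : D.countP (fun y => decide (G.Adj v y)) = k at *
    have hpos : ∀ x ∈ D, G.Adj v x → 1 ≤ c.r := by
      intro x hx hvx
      obtain ⟨h1, h2, h3⟩ := hD.2.2 x hx
      have h4 := countP_le_dg (G := G) hn x
      rw [List.countP_append, List.countP_singleton] at h4
      simp [hvx.symm] at h4
      omega
    refine ⟨consNE (c.size (Nat.sub c.s k)) (consNE (c.adj vs.length k) l), ?_, ?_⟩
    · unfold splits
      rw [List.mem_flatMap]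
      refine ⟨k, ?_, ?_⟩
      · rw [List.mem_range, hD.1]
        omega
      · have hb : (Nat.beq c.r 0 && Nat.ble 1 k) = false := by
          rw [Bool.eq_false_iff]
          intro hb
          rw [Bool.and_eq_true, beq_iff, ble_iff] at hb
          have : 0 < D.countP (fun y => decide (G.Adj v y)) := by omega
          rw [List.countP_pos_iff] at this
          obtain ⟨x, hx, hvx⟩ := this
          have := hpos x hx (by simpa using hvx)
          omega
        rw [hb, cond_false, List.mem_map]
        exact ⟨l, hl, rfl⟩
    · unfold spl
      have hlen : (D.filter fun x => decide (G.Adj v x)).length = k := by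
        rw [← hkk, List.countP_eq_length_filter]
      have hlen2 : (D.filter fun x => !decide (G.Adj v x)).length = c.s - k := by
        have := (List.filter_append_perm (fun x => decide (G.Adj v x)) D).length_eq
        rw [List.length_append, hlen] at this
        rw [hD.1]; omega
      refine consNE_RU ⟨hlen2.symm, hD.2.1, ?_⟩ (consNE_RU ⟨hlen.symm, hD.2.1, ?_⟩ hl')
      · intro x hx
        rw [List.mem_filter] at hx
        obtain ⟨h1, h2, h3⟩ := hD.2.2 x hx.1
        have hvx : ¬ G.Adj v x := by simpa using hx.2
        have hxv : ¬ G.Adj x v := fun h => hvx h.symm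
        refine ⟨h1, Msk_nadj h2 hvx, ?_⟩
        rw [List.countP_append, List.countP_singleton]
        simpa [hxv, Cell.size] using h3
      · intro x hx
        rw [List.mem_filter] at hx
        obtain ⟨h1, h2, h3⟩ := hD.2.2 x hx.1
        have hvx : G.Adj v x := by simpa using hx.2
        have h0 := hpos x hx.1 hvx
        refine ⟨h1, Msk_adj h2 hvx, ?_⟩
        rw [List.countP_append, List.countP_singleton]
        simp only [hvx.symm, decide_true, if_true, Cell.adj]
        have : Nat.sub c.r 1 = c.r - 1 := rfl
        omega

theorem tot_eq (h : Cell → ℕ) (l : List Cell) : tot h l = (l.map h).sum := by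
  induction l with
  | nil => rfl
  | cons a l ih =>
    have : tot h (a :: l) = h a + tot h l := rfl
    rw [this, ih]; simp

theorem tot_P {G : SimpleGraph V} {vs ws : List V} {P : List Cell} {h : Cell → ℕ} {g : V → ℕ}
    (hg : ∀ x c, x ∈ ws → RP G vs x c → h c = g x) (hP : List.Forall₂ (RP G vs) ws P) :
    tot h P = (ws.map g).sum := by
  rw [tot_eq]
  induction hP with
  | nil => rfl
  | cons h1 h2 ih =>
    simp only [List.map_cons, List.sum_cons]
    rw [hg _ _ List.mem_cons_self h1, ih fun x c hx => hg x c (List.mem_cons_of_mem _ hx)]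

theorem tot_U {G : SimpleGraph V} {vs : List V} {Cs : List (List V)} {U : List Cell} {h : Cell → ℕ}
    {g : V → ℕ} (hg : ∀ c C, (∀ x ∈ C, x ∈ Cs.flatten) → RU G vs C c → h c = (C.map g).sum)
    (hU : List.Forall₂ (RU G vs) Cs U) : tot h U = (Cs.flatten.map g).sum := by
  rw [tot_eq]
  induction hU with
  | nil => rfl
  | cons h1 h2 ih =>
    simp only [List.map_cons, List.sum_cons, List.flatten_cons, List.map_append, List.sum_append]
    rw [hg _ _ (fun x hx => by simp [hx]) h1,
      ih fun c C hx => hg c C (fun x hx' => by rw [List.flatten_cons]; exact List.mem_append_right _ (hx x hx'))]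

theorem sum_all {l : List V} (hl : l.Nodup) (hc : ∀ x, x ∈ l) (g : V → ℕ) :
    (l.map g).sum = ∑ x, g x := by
  rw [← List.sum_toFinset g hl]
  congr 1
  ext x; simp [hc]

theorem dg_del (G : SimpleGraph V) (v x : V) :
    dg (del G {v}) x = if x = v then 0 else dg G x - if G.Adj v x then 1 else 0 := by
  split_ifs with h h'
  · subst h
    exact dg_zero fun y hy => hy.2.1 rfl
  · unfold dg
    rw [← Finset.card_erase_of_mem (by simpa using h'.symm : v ∈ _)]
    congr 1
    ext y
    simp [del, h]
    tauto
  · unfold dg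
    rw [Nat.sub_zero]
    congr 1
    ext y
    simp only [Finset.mem_filter, Finset.mem_univ, true_and]
    refine ⟨fun hy => hy.1, fun hy => ⟨hy, h, ?_⟩⟩
    rintro rfl
    exact h' hy.symm

theorem dg_del2 (G : SimpleGraph V) {u v : V} (huv : u ≠ v) (x : V) :
    dg (del (del G {u}) {v}) x = if x = u ∨ x = v then 0 else
      dg G x - ((if G.Adj u x then 1 else 0) + if G.Adj v x then 1 else 0) := by
  rw [dg_del, dg_del]
  by_cases hv : x = v
  · simp [hv]
  by_cases hu : x = u
  · simp [hu]
  have : (del G {u}).Adj v x ↔ G.Adj v x :=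
    ⟨fun h => h.1, fun h => ⟨h, fun h => huv (Eq.symm h), hu⟩⟩
  have h3 : ¬ (x = u ∨ x = v) := by tauto
  rw [if_neg hv, if_neg hu, if_neg h3, Nat.sub_sub]
  simp [this]

theorem Msk_bt {G : SimpleGraph V} {vs : List V} {m : ℕ} {x w : V} {i : ℕ} (h : Msk G vs m x)
    (hi : vs[i]? = some w) : bt m i = if G.Adj w x then 1 else 0 := by
  have h1 := h i
  rw [hi] at h1
  have h2 : bt m i = 1 ↔ G.Adj w x := by
    rw [h1]
    constructor
    · rintro ⟨u, hu, hux⟩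
      cases hu; exact hux
    · exact fun hw => ⟨w, rfl, hw⟩
  split_ifs with hw
  · exact h2.2 hw
  · have h3 : bt m i ≠ 1 := fun h => hw (h2.1 h)
    rw [bt_eq] at h3 ⊢
    split_ifs at h3 ⊢ <;> simp_all

theorem val_zero (c : ℕ) : val c 0 = 0 := by rw [val_eq]; simp

theorem idx_iff {vs : List V} (hn : vs.Nodup) {i j : ℕ} {w x : V} (hi : vs[i]? = some w)
    (hj : vs[j]? = some x) : j = i ↔ x = w := by
  constructor
  · rintro rfl; rw [hi] at hj; exact (Option.some.inj hj).symm
  · rintro rfl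
    have hlt := (List.getElem?_eq_some_iff.1 hi).1
    exact ((List.getElem?_inj hlt hn).1 (by rw [hi, hj])).symm

theorem sum_const_map {C : List V} {g : V → ℕ} {n : ℕ} (h : ∀ x ∈ C, g x = n) :
    (C.map g).sum = C.length * n := by
  induction C with
  | nil => simp
  | cons a C ih =>
    rw [List.map_cons, List.sum_cons, ih fun x hx => h x (List.mem_cons_of_mem _ hx),
      h a List.mem_cons_self, List.length_cons]
    ring

theorem crit1 {G : SimpleGraph V} {vs : List V} {Cs : List (List V)} {P U : List Cell} {c i : ℕ}
    {w : V} (hn : (vs ++ Cs.flatten).Nodup) (hc : ∀ x, x ∈ vs ++ Cs.flatten) (h99 : vs.length ≤ 99)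
    (hP : List.Forall₂ (RP G vs) vs P) (hU : List.Forall₂ (RU G vs) Cs U) (hi : vs[i]? = some w) :
    tot (contrib1 c i) P + tot (contrib1 c i) U = ∑ x, val c (dg (del G {w}) x) := by
  have hlt := (List.getElem?_eq_some_iff.1 hi).1
  have hw : w ∈ vs := List.mem_of_getElem? hi
  rw [← sum_all hn hc, List.map_append, List.sum_append]
  congr 1
  · refine tot_P (fun x a _ hx => ?_) hP
    obtain ⟨h1, h2, h3, h4⟩ := hx
    unfold contrib1
    rw [beq_dec, dg_del, Msk_bt h4 hi]
    simp only [idx_iff (List.Nodup.of_append_left hn) hi h2, Bool.cond_decide]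
    split_ifs <;> simp [val_zero, h1, h3]
  · refine tot_U (fun a C hC hx => ?_) hU
    obtain ⟨h1, h2, h3⟩ := hx
    unfold contrib1
    have : ¬ a.id = i := by omega
    rw [beq_dec]
    simp only [this, decide_false, cond_false]
    rw [sum_const_map (n := val c (a.d - bt a.m i)), h1]
    · rfl
    · intro x hx
      obtain ⟨h4, h5, _⟩ := h3 x hx
      have hxw : x ≠ w := fun h => List.disjoint_of_nodup_append hn hw (h ▸ hC x hx)
      rw [dg_del, if_neg hxw, h4, Msk_bt h5 hi]

theorem crit2 {G : SimpleGraph V} {vs : List V} {Cs : List (List V)} {P U : List Cell} {c i k : ℕ}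
    {w u : V} (hn : (vs ++ Cs.flatten).Nodup) (hc : ∀ x, x ∈ vs ++ Cs.flatten)
    (h99 : vs.length ≤ 99) (hP : List.Forall₂ (RP G vs) vs P)
    (hU : List.Forall₂ (RU G vs) Cs U) (hi : vs[i]? = some w) (hk : vs[k]? = some u)
    (hwu : w ≠ u) :
    tot (contrib2 c i k) P + tot (contrib2 c i k) U =
      ∑ x, val c (dg (del (del G {w}) {u}) x) := by
  have hlt := (List.getElem?_eq_some_iff.1 hi).1
  have hlt' := (List.getElem?_eq_some_iff.1 hk).1
  have hw : w ∈ vs := List.mem_of_getElem? hi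
  have hu : u ∈ vs := List.mem_of_getElem? hk
  rw [← sum_all hn hc, List.map_append, List.sum_append]
  congr 1
  · refine tot_P (fun x a _ hx => ?_) hP
    obtain ⟨h1, h2, h3, h4⟩ := hx
    unfold contrib2
    rw [beq_dec, beq_dec, dg_del2 G hwu, Msk_bt h4 hi, Msk_bt h4 hk]
    simp only [idx_iff (List.Nodup.of_append_left hn) hi h2,
      idx_iff (List.Nodup.of_append_left hn) hk h2, Bool.cond_decide]
    by_cases e1 : x = w
    · simp [e1, val_zero]
    by_cases e2 : x = u
    · simp [e2, val_zero]
    simp only [e1, e2, if_false, or_self, h1, h3]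
    exact Nat.one_mul _
  · refine tot_U (fun a C hC hx => ?_) hU
    obtain ⟨h1, h2, h3⟩ := hx
    unfold contrib2
    have e1 : ¬ a.id = i := by omega
    have e2 : ¬ a.id = k := by omega
    rw [beq_dec, beq_dec]
    simp only [e1, e2, decide_false, cond_false]
    rw [sum_const_map (n := val c (a.d - (bt a.m i + bt a.m k))), h1]
    · rfl
    · intro x hx
      obtain ⟨h4, h5, _⟩ := h3 x hx
      have hxw : x ≠ w := fun h => List.disjoint_of_nodup_append hn hw (h ▸ hC x hx)
      have hxu : x ≠ u := fun h => List.disjoint_of_nodup_append hn hu (h ▸ hC x hx)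
      rw [dg_del2 G hwu, if_neg (by tauto), h4, Msk_bt h5 hi, Msk_bt h5 hk]

theorem edges_mem {G : SimpleGraph V} {vs : List V} {P : List Cell} (hn : vs.Nodup)
    (hP : List.Forall₂ (RP G vs) vs P) {i j : ℕ} {u x : V} (hi : vs[i]? = some u)
    (hj : vs[j]? = some x) (hij : i < j) (hux : G.Adj u x) : (i, j) ∈ edges P := by
  have hx : x ∈ vs := List.mem_of_getElem? hj
  obtain ⟨c, hc, hxc⟩ : ∃ c ∈ P, RP G vs x c := by
    have key : ∀ (ws : List V) (P : List Cell), List.Forall₂ (RP G vs) ws P → x ∈ ws →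
        ∃ c ∈ P, RP G vs x c := by
      intro ws P h
      induction h with
      | nil => intro h; simp at h
      | cons h1 h2 ih =>
        intro h
        rcases List.mem_cons.1 h with rfl | h
        · exact ⟨_, List.mem_cons_self, h1⟩
        · obtain ⟨c, hc, hc'⟩ := ih h
          exact ⟨c, List.mem_cons_of_mem _ hc, hc'⟩
    exact key vs P hP hx
  obtain ⟨_, h2, _, h4⟩ := hxc
  have hid : c.id = j := (idx_iff hn hj h2).2 rfl
  unfold edges
  rw [List.mem_flatMap]
  refine ⟨c, hc, ?_⟩
  rw [List.mem_map]
  refine ⟨i, List.mem_filter.2 ⟨List.mem_range.2 (by omega), ?_⟩, by rw [hid]⟩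
  rw [beq_iff, h4 i]
  exact ⟨u, hi, hux⟩

theorem leaf_sound {G : SimpleGraph V} {vs : List V} {P : List Cell} {k : ℕ}
    (hV : Fintype.card V = 12) (hn : vs.Nodup) (hc : ∀ x, x ∈ vs)
    (hP : List.Forall₂ (RP G vs) vs P) (h : Apex k (toG (edges P))) : Apex k G := by
  have hlen : vs.length = 12 := by
    rw [← hV, ← List.toFinset_card_of_nodup hn, ← Finset.card_univ]
    congr 1
    ext x; simp [hc]
  have hidx : ∀ x, vs[vs.idxOf x]? = some x := fun x => List.getElem?_idxOf (hc x)
  have hlt : ∀ x, vs.idxOf x < 12 := fun x => hlen ▸ List.idxOf_lt_length_iff.2 (hc x)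
  have hinj : ∀ x y, vs.idxOf x = vs.idxOf y → x = y := fun x y hxy =>
    (idx_iff hn (hidx y) (hidx x)).1 hxy
  refine apex_map (fun x => (⟨vs.idxOf x, hlt x⟩ : Fin 12)) ?_ ?_ h
  · intro x y hxy
    exact hinj x y (congrArg Fin.val hxy)
  · intro u x hux
    have hne : vs.idxOf u ≠ vs.idxOf x := fun h => hux.ne (hinj _ _ h)
    refine ⟨fun h => hne (congrArg Fin.val h), ?_⟩
    rcases lt_or_gt_of_ne hne with hl | hl
    · exact Or.inl (edges_mem hn hP (hidx u) (hidx x) hl hux)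
    · exact Or.inr (edges_mem hn hP (hidx x) (hidx u) hl hux.symm)

theorem search_sound {G : SimpleGraph V} {c1 t1 c2 t2 k : ℕ} {leaf : List (ℕ × ℕ) → Bool}
    (hV : Fintype.card V = 12) (hleaf : ∀ E, leaf E = true → Apex k (toG E))
    (h1 : ∀ v, t1 ≤ ∑ x, val c1 (dg (del G {v}) x))
    (h2 : ∀ u v, u ≠ v → t2 ≤ ∑ x, val c2 (dg (del (del G {u}) {v}) x))
    (f : ℕ) {vs : List V} {Cs : List (List V)} {P U : List Cell}
    (hn : (vs ++ Cs.flatten).Nodup) (hc : ∀ x, x ∈ vs ++ Cs.flatten)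
    (hP : List.Forall₂ (RP G vs) vs P) (hU : List.Forall₂ (RU G vs) Cs U)
    (hs : search c1 t1 c2 t2 leaf f vs.length P U = true) : Apex k G := by
  induction f generalizing vs Cs P U with
  | zero => simp [search] at hs
  | succ f ih =>
    cases hU with
    | nil =>
      simp only [List.flatten_nil, List.append_nil] at hn hc
      unfold search at hs
      rw [forceE_eq] at hs
      exact leaf_sound hV hn hc hP (hleaf _ hs)
    | @cons C c Cs U hC hCs =>
      unfold search at hs
      rw [beq_dec] at hs
      by_cases h0 : c.s = 0
      · simp only [h0, decide_true, cond_true] at hs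
        have : C = [] := List.length_eq_zero_iff.1 (by rw [← hC.1, h0])
        subst this
        exact ih (Cs := Cs) (by simpa using hn) (by simpa using hc) hP hCs hs
      · simp only [h0, decide_false, cond_false] at hs
        obtain ⟨v, C, rfl⟩ : ∃ v C', C = v :: C' := by
          cases C with
          | nil => exact absurd hC.1 h0
          | cons a l => exact ⟨a, l, rfl⟩
        rw [forceC_eq, List.all_eq_true] at hs
        have hperm : ((vs ++ [v]) ++ (spl G v (consL C Cs)).flatten).Perm
            (vs ++ (List.flatten ((v :: C) :: Cs))) := by
          have e1 := spl_perm G v (consL C Cs)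
          rw [consL_flatten] at e1
          rw [List.append_assoc]
          exact List.Perm.append_left _ (List.Perm.cons _ e1)
        have hn' := hperm.symm.nodup hn
        have hc' : ∀ x, x ∈ (vs ++ [v]) ++ (spl G v (consL C Cs)).flatten :=
          fun x => hperm.mem_iff.2 (hc x)
        have hnv : (vs ++ [v]).Nodup := List.Nodup.of_append_left hn'
        have hlen : (vs ++ [v]).length ≤ 12 := by
          rw [← hV]; exact hnv.length_le_card
        obtain ⟨hv1, hv2, hv3⟩ := hC.2.2 v List.mem_cons_self
        have hRU : RU G vs C (c.size (Nat.sub c.s 1)) := by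
          refine ⟨?_, hC.2.1, fun x hx => hC.2.2 x (List.mem_cons_of_mem _ hx)⟩
          have := hC.1
          simp only [List.length_cons] at this
          change c.s - 1 = _
          omega
        have hr : c.r = (consL C Cs).flatten.countP fun y => decide (G.Adj v y) := by
          have e := countP_eq_dg (G := G) hn hc v
          rw [List.flatten_cons, List.cons_append, List.countP_append, List.countP_cons] at e
          rw [consL_flatten]
          simp only [SimpleGraph.irrefl, decide_false] at e
          simp at e
          simp
          omega
        obtain ⟨l, hl, hlU⟩ := splits_sound hnv (consNE_RU hRU hCs) c.r hr
        have hs' := hs l hl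
        rw [forceC_eq, Bool.or_eq_true, Bool.not_eq_true'] at hs'
        have hP2 : List.Forall₂ (RP G (vs ++ [v])) (vs ++ [v])
            (P.map (upd vs.length c.m) ++ [⟨c.d, c.r, c.m, 1, vs.length⟩]) := by
          refine List.rel_append ?_ (List.Forall₂.cons ?_ List.Forall₂.nil)
          · rw [List.forall₂_map_right_iff]
            refine hP.imp ?_
            rintro x a ⟨a1, a2, a3, a4⟩
            have hxv : bt c.m a.id = 1 ↔ G.Adj x v := by
              rw [Msk_bt hv2 a2]; simp
            have hlt := (List.getElem?_eq_some_iff.1 a2).1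
            unfold upd
            rw [beq_dec]
            by_cases hx : G.Adj x v
            · rw [hxv.2 hx]
              simp only [decide_true, cond_true]
              refine ⟨a1, ?_, a3, Msk_adj a4 hx.symm⟩
              change (vs ++ [v])[a.id]? = _
              rw [List.getElem?_append_left hlt, a2]
            · have : ¬ bt c.m a.id = 1 := fun h => hx (hxv.1 h)
              simp only [this, decide_false, cond_false]
              refine ⟨a1, ?_, a3, Msk_nadj a4 fun h => hx h.symm⟩
              rw [List.getElem?_append_left hlt, a2]
          · exact ⟨rfl, by simp, hv1, Msk_nadj hv2 (SimpleGraph.irrefl _)⟩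
        rcases hs' with hs' | hs'
        · exfalso
          rw [Bool.eq_false_iff] at hs'
          apply hs'
          rw [Bool.and_eq_true, ble_iff, List.all_eq_true]
          constructor
          · change t1 ≤ _ + _
            rw [crit1 hn' hc' (by omega) hP2 hlU (w := v) (by simp)]
            exact h1 v
          · intro u hu
            rw [List.mem_range] at hu
            rw [ble_iff]
            change t2 ≤ _ + _
            have hu' : (vs ++ [v])[u]? = some vs[u] := by
              rw [List.getElem?_append_left hu]; simp
            have hne : vs[u] ≠ v := by
              intro h
              have := (idx_iff hnv (w := v) (i := vs.length) (by simp) hu').2 h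
              omega
            rw [crit2 hn' hc' (by omega) hP2 hlU hu' (u := v) (by simp) hne]
            exact h2 _ _ hne
        · refine ih hn' hc' hP2 hlU ?_
          rw [List.length_append]
          exact hs'

end Engine

end TA

namespace TA

section Main

open Classical

variable {V : Type*} [Fintype V]

theorem comp1 : forSeq 28 run1 = true := by decide +kernel

theorem comp2 : forSeq 40 run2 = true := by decide +kernel

theorem forSeq_sound {W : ℕ} {b : ℕ → ℕ → ℕ → Bool} (h : forSeq W b = true) {x5 x4 x3 : ℕ}
    (h12 : x5 + x4 + x3 ≤ 12) (hW : 5 * x5 + 4 * x4 + 3 * x3 ≤ W)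
    (he : (5 * x5 + 4 * x4 + 3 * x3) % 2 = 0) : b x5 x4 x3 = true := by
  unfold forSeq at h
  rw [List.all_eq_true] at h
  have h := h x5 (List.mem_range.2 (by omega))
  rw [List.all_eq_true] at h
  have h := h x4 (List.mem_range.2 (by omega))
  rw [List.all_eq_true] at h
  have h := h x3 (List.mem_range.2 (by omega))
  rw [Bool.or_eq_true, Bool.not_eq_true', Bool.eq_false_iff] at h
  rcases h with h | h
  · exfalso
    apply h
    rw [Bool.and_eq_true, Bool.and_eq_true, ble_iff, ble_iff, beq_iff]
    exact ⟨⟨h12, hW⟩, he⟩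
  · exact h

/-- Vertices of a given degree. -/
noncomputable def cls (G : SimpleGraph V) (d : ℕ) : Finset V :=
  Finset.univ.filter fun x => dg G x = d

theorem RU_root (G : SimpleGraph V) (d s : ℕ) (hs : s = (cls G d).card) :
    RU G [] (cls G d).toList ⟨d, d, 0, s, 99⟩ := by
  refine ⟨by simp [hs], rfl, fun x hx => ⟨?_, ?_, by simp⟩⟩
  · have : x ∈ cls G d := by simpa using hx
    simpa [cls] using this
  · intro i
    rw [bt_one]
    simp

theorem sum_dg_edges (G : SimpleGraph V) : ∑ x, dg G x = 2 * G.edgeSet.ncard := by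
  have h := G.sum_degrees_eq_twice_card_edges
  rw [Set.ncard_eq_toFinset_card', ← SimpleGraph.edgeFinset, ← h]
  refine Finset.sum_congr rfl fun x _ => ?_
  unfold dg
  rw [← SimpleGraph.card_neighborFinset_eq_degree]
  congr 1
  ext y
  simp

theorem run_sound {G : SimpleGraph V} {c1 t1 c2 t2 k W f : ℕ} {leaf : List (ℕ × ℕ) → Bool}
    (hV : Fintype.card V = 12) (hleaf : ∀ E, leaf E = true → Apex k (toG E))
    (hrun : forSeq W (fun x5 x4 x3 => search c1 t1 c2 t2 leaf f 0 [] (root x5 x4 x3)) = true)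
    (h1 : ∀ v, t1 ≤ ∑ x, val c1 (dg (del G {v}) x))
    (h2 : ∀ u v, u ≠ v → t2 ≤ ∑ x, val c2 (dg (del (del G {u}) {v}) x))
    (hd : ∀ x, dg G x = 0 ∨ 3 ≤ dg G x) (h5 : ∀ x, dg G x ≤ 5) (hW : ∑ x, dg G x ≤ W) :
    Apex k G := by
  have hd' : ∀ x, dg G x = 5 ∨ dg G x = 4 ∨ dg G x = 3 ∨ dg G x = 0 := by
    intro x
    have := hd x
    have := h5 x
    omega
  have hcard : (cls G 5).card + (cls G 4).card + (cls G 3).card + (cls G 0).card = 12 := by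
    rw [← hV, ← Finset.card_univ, Finset.card_eq_sum_ones Finset.univ]
    unfold cls
    simp only [Finset.card_filter]
    rw [← Finset.sum_add_distrib, ← Finset.sum_add_distrib, ← Finset.sum_add_distrib]
    refine Finset.sum_congr rfl fun x _ => ?_
    rcases hd' x with h | h | h | h <;> simp [h]
  have hsum : 5 * (cls G 5).card + 4 * (cls G 4).card + 3 * (cls G 3).card = ∑ x, dg G x := by
    unfold cls
    simp only [Finset.card_filter, Finset.mul_sum]
    rw [← Finset.sum_add_distrib, ← Finset.sum_add_distrib]
    refine Finset.sum_congr rfl fun x _ => ?_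
    rcases hd' x with h | h | h | h <;> simp [h]
  have heven := sum_dg_edges G
  have hs := forSeq_sound hrun (x5 := (cls G 5).card) (x4 := (cls G 4).card)
    (x3 := (cls G 3).card) (by omega) (by omega) (by omega)
  refine search_sound (vs := []) (P := []) (Cs := [(cls G 5).toList, (cls G 4).toList,
    (cls G 3).toList, (cls G 0).toList]) hV hleaf h1 h2 f ?_ ?_ List.Forall₂.nil ?_ hs
  · have hdis : ∀ a b : ℕ, a ≠ b → ∀ x, x ∈ cls G a → x ∉ cls G b := by
      intro a b hab x hx hx'
      simp only [cls, Finset.mem_filter] at hx hx'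
      exact hab (hx.2.symm.trans hx'.2)
    simp only [List.nil_append, List.flatten_cons, List.flatten_nil, List.append_nil,
      List.nodup_append', Finset.nodup_toList, true_and, List.disjoint_append_right]
    refine ⟨⟨?_, ?_, ?_⟩, ?_, ?_, ?_⟩ <;>
    · intro x hx hx'
      rw [Finset.mem_toList] at hx hx'
      exact hdis _ _ (by decide) x hx hx'
  · intro x
    simp only [List.nil_append, List.flatten_cons, List.flatten_nil, List.append_nil,
      List.mem_append, Finset.mem_toList, cls, Finset.mem_filter, Finset.mem_univ, true_and]
    exact hd' x
  · unfold root
    exact .cons (RU_root G 5 _ rfl) (.cons (RU_root G 4 _ rfl) (.cons (RU_root G 3 _ rfl)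
      (.cons (RU_root G 0 _ (by omega)) .nil)))

theorem sum_dg_del (G : SimpleGraph V) (v : V) :
    ∑ x, dg (del G {v}) x + 2 * dg G v = ∑ x, dg G x := by
  have h1 : dg G v = ∑ x, if G.Adj v x then 1 else 0 := by
    unfold dg; rw [Finset.card_filter]
  have h2 : dg G v = ∑ x, if x = v then dg G v else 0 := by simp
  rw [two_mul]
  nth_rewrite 1 [h1]
  nth_rewrite 1 [h2]
  rw [← Finset.sum_add_distrib, ← Finset.sum_add_distrib]
  refine Finset.sum_congr rfl fun x _ => ?_
  rw [dg_del]
  by_cases hx : x = v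
  · subst hx; simp
  · by_cases ha : G.Adj v x
    · have := dg_pos ha.symm
      simp only [hx, ha, if_true, if_false]; omega
    · simp [hx, ha]

theorem val6_le (y : ℕ) : val 6 y ≤ 3 * y := by
  rw [val_eq]; split_ifs <;> omega

theorem val0_le (y : ℕ) : val 0 y ≤ y := by
  rw [val_eq]; split_ifs <;> omega

theorem red_wt {G G' : SimpleGraph V} {W : ℕ} (hW : ∑ x, val 0 (dg G x) ≤ W)
    (h1 : ∀ x, dg G' x ≤ dg G x) (h2 : ∀ x, dg G' x = 0 ∨ 3 ≤ dg G' x) :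
    ∑ x, dg G' x ≤ W := by
  have h := sum_val h2 0
  have := Finset.sum_le_sum fun x (_ : x ∈ Finset.univ) => val_mono 0 (h1 x)
  omega

theorem T1 {G : SimpleGraph V} (hV : Fintype.card V = 12) (hW : ∑ x, val 0 (dg G x) ≤ 28) :
    Apex 1 G := by
  obtain ⟨G', h1, h2, h3⟩ := full_red G
  have hW' := red_wt hW h1 h2
  apply h3
  by_contra hcon
  have hc : ∀ v, 50 ≤ ∑ x, val 6 (dg (del G' {v}) x) := fun v =>
    T0 fun h => hcon (apex_del (apex_zero h))
  refine hcon (run_sound hV (fun E => leaf1_sound) comp1 hc (fun _ _ _ => Nat.zero_le _) h2 ?_ hW')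
  intro v
  have e1 := hc v
  have e2 := sum_dg_del G' v
  have e3 : ∑ x, val 6 (dg (del G' {v}) x) ≤ 3 * ∑ x, dg (del G' {v}) x := by
    rw [Finset.mul_sum]; exact Finset.sum_le_sum fun x _ => val6_le _
  omega

theorem T2 {G : SimpleGraph V} (hV : Fintype.card V = 12) (hW : ∑ x, val 0 (dg G x) ≤ 40) :
    Apex 2 G := by
  obtain ⟨G', h1, h2, h3⟩ := full_red G
  have hW' := red_wt hW h1 h2
  apply h3
  by_contra hcon
  have hc : ∀ v, 29 ≤ ∑ x, val 0 (dg (del G' {v}) x) := by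
    intro v
    by_contra h
    exact hcon (apex_del (a := v) (T1 hV (by omega)))
  have hc2 : ∀ u v, u ≠ v → 50 ≤ ∑ x, val 6 (dg (del (del G' {u}) {v}) x) := fun u v _ =>
    T0 fun h => hcon (apex_del (apex_del (apex_zero h)))
  refine hcon (run_sound hV (fun E => leaf2_sound) comp2 hc hc2 h2 ?_ hW')
  intro v
  have e1 := hc v
  have e2 := sum_dg_del G' v
  have e3 : ∑ x, val 0 (dg (del G' {v}) x) ≤ ∑ x, dg (del G' {v}) x :=
    Finset.sum_le_sum fun x _ => val0_le _
  omega

end Main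

end TA

/-- Every finite simple graph with exactly 12 vertices and at most 20 edges is 2-apex. -/
theorem stmt5 {V : Type*} [Fintype V] (G : SimpleGraph V)
    (hV : Fintype.card V = 12) (hE : G.edgeSet.ncard ≤ 20) : G.TwoApex := by
  refine TA.apex_two (TA.T2 hV ?_)
  have h1 := TA.sum_dg_edges G
  have h2 : ∑ x, TA.val 0 (TA.dg G x) ≤ ∑ x, TA.dg G x :=
    Finset.sum_le_sum fun x _ => TA.val0_le _
  omega
end
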